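/- Let f : ℝ³ → ℝ³ be a C¹ cooperative irreducible vector field admitting a C¹ first integral H : ℝ³ → ℝ with ∇H(x) ≠ 0 for every x ∈ ℝ³. Then: (a) for every solution γ : [0,∞) → ℝ³ of ẋ = f(x), the ω-limit set of γ is either empty or a singleton; and (b) for every solution γ : (−∞,0] → ℝ³, the α-limit set of γ is either empty or a singleton. -/

import Mathlib

open Set Filter Topology

noncomputable section

/-- `f` is a cooperative vector field on `X`: the off-diagonal entries of the
Jacobian are nonnegative. -/
def coopVF {n : ℕ} (f : (Fin n → ℝ) → (Fin n → ℝ)) (X : Set (Fin n → ℝ)) : Prop :=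
  ∀ x ∈ X, ∀ i j : Fin n, i ≠ j → 0 ≤ fderiv ℝ f x (Pi.single j 1) i

/-- The Jacobian matrix of `f` at `x`. -/
def jacMat {n : ℕ} (f : (Fin n → ℝ) → (Fin n → ℝ)) (x : Fin n → ℝ) :
    Fin n → Fin n → ℝ :=
  fun i j => fderiv ℝ f x (Pi.single j 1) i

/-- A matrix is irreducible if for every nonempty proper subset `S` of indices there
are `i ∈ S`, `j ∉ S` with `A i j ≠ 0`. -/
def matIrred {n : ℕ} (A : Fin n → Fin n → ℝ) : Prop :=
  ∀ S : Set (Fin n), S.Nonempty → S ≠ Set.univ → ∃ i ∈ S, ∃ j ∉ S, A i j ≠ 0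

/-- `X` is p-convex: the segment joining any two order-related points of `X` lies in `X`. -/
def pconvex {n : ℕ} (X : Set (Fin n → ℝ)) : Prop :=
  ∀ x ∈ X, ∀ y ∈ X, x < y → segment ℝ x y ⊆ X

/-- `x ≪ y`: strict inequality in every coordinate. -/
def strLt {n : ℕ} (x y : Fin n → ℝ) : Prop := ∀ i, x i < y i

/-- `γ` is a solution of `ẋ = f(x)` on the time interval `I`, with values in `X`. -/
def IsSolOn {n : ℕ} (f : (Fin n → ℝ) → (Fin n → ℝ)) (X : Set (Fin n → ℝ))
    (I : Set ℝ) (γ : ℝ → Fin n → ℝ) : Prop :=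
  (∀ t ∈ I, γ t ∈ X) ∧ (∀ t ∈ I, HasDerivWithinAt γ (f (γ t)) I t)

/-- The ω-limit set (within `X`) of a curve `γ`. -/
def omegaSet {n : ℕ} (X : Set (Fin n → ℝ)) (γ : ℝ → Fin n → ℝ) :
    Set (Fin n → ℝ) :=
  {y | y ∈ X ∧ ∃ t : ℕ → ℝ, Tendsto t atTop atTop ∧
    Tendsto (fun k => γ (t k)) atTop (𝓝 y)}

/-- The α-limit set (within `X`) of a curve `γ`. -/
def alphaSet {n : ℕ} (X : Set (Fin n → ℝ)) (γ : ℝ → Fin n → ℝ) :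
    Set (Fin n → ℝ) :=
  {y | y ∈ X ∧ ∃ t : ℕ → ℝ, Tendsto t atTop atBot ∧
    Tendsto (fun k => γ (t k)) atTop (𝓝 y)}

/-- The Euclidean norm on `Fin n → ℝ`. -/
def eunorm {n : ℕ} (v : Fin n → ℝ) : ℝ := Real.sqrt (∑ i, (v i) ^ 2)

/-- `X` is order-convex: it contains the order interval of any two of its points. -/
def orderConvex {n : ℕ} (X : Set (Fin n → ℝ)) : Prop :=
  ∀ x ∈ X, ∀ y ∈ X, x ≤ y → Set.Icc x y ⊆ X



abbrev E3 := Fin 3 → ℝ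

structure CoopSys (f : E3 → E3) : Prop where
  smooth : ContDiff ℝ 1 f
  coop : ∀ x (i j : Fin 3), i ≠ j → 0 ≤ jacMat f x i j
  irr : ∀ x, matIrred (jacMat f x)

structure FInt (f : E3 → E3) (H : E3 → ℝ) : Prop where
  smooth : ContDiff ℝ 1 H
  inv : ∀ x, fderiv ℝ H x (f x) = 0
  grad : ∀ x, fderiv ℝ H x ≠ 0

lemma lin_apply (L : E3 →L[ℝ] ℝ) (v : E3) : L v = ∑ j, L (Pi.single j 1) * v j := by
  conv_lhs => rw [← Finset.univ_sum_single v]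
  rw [map_sum]
  refine Finset.sum_congr rfl fun j _ => ?_
  have : (Pi.single j (v j) : E3) = v j • Pi.single j 1 := by
    rw [← Pi.single_smul]; simp
  rw [this, map_smul, smul_eq_mul, mul_comm]

lemma lin_apply3 (L : E3 →L[ℝ] E3) (v : E3) (i : Fin 3) :
    L v i = ∑ j, L (Pi.single j 1) i * v j := by
  simpa using lin_apply ((ContinuousLinearMap.proj i).comp L) v

lemma jac_apply (f : E3 → E3) (x v : E3) (i : Fin 3) :
    fderiv ℝ f x v i = ∑ j, jacMat f x i j * v j := lin_apply3 _ v i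

lemma CoopSys.diff {f : E3 → E3} (hf : CoopSys f) : Differentiable ℝ f :=
  hf.smooth.differentiable (by norm_num)

lemma jac_cont {f : E3 → E3} (hf : ContDiff ℝ 1 f) (i j : Fin 3) :
    Continuous fun x => jacMat f x i j := by
  have := hf.continuous_fderiv (by norm_num)
  unfold jacMat
  have h2 : Continuous fun x => fderiv ℝ f x (Pi.single j 1) := this.clm_apply continuous_const
  exact (continuous_apply i).comp h2

/-- Row-wise mean value theorem. -/
lemma row_mvt {f : E3 → E3} (hf : Differentiable ℝ f) (x y : E3) (i : Fin 3) :
    ∃ ξ ∈ segment ℝ x y, f y i - f x i = ∑ j, jacMat f ξ i j * (y j - x j) := by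
  have h := domain_mvt (f := fun z => f z i) (s := univ) (x := x) (y := y)
    (f' := fun z => (ContinuousLinearMap.proj i).comp (fderiv ℝ f z))
    (fun z _ => by
      have := (hf z).hasFDerivAt
      exact (hasFDerivAt_pi'.1 this i).hasFDerivWithinAt) convex_univ (mem_univ _) (mem_univ _)
  obtain ⟨ξ, h1, h2⟩ := h
  refine ⟨ξ, h1, ?_⟩
  rw [h2]
  simpa using jac_apply f ξ (y - x) i

lemma hasDerivAt_minsq (x : ℝ) : HasDerivAt (fun x : ℝ => (min x 0)^2) (2 * min x 0) x := by
  rcases lt_trichotomy x 0 with h | h | h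
  · have : (fun x : ℝ => (min x 0)^2) =ᶠ[𝓝 x] fun x => x^2 := by
      filter_upwards [gt_mem_nhds h] with y hy
      rw [min_eq_left hy.le]
    rw [min_eq_left h.le]
    refine HasDerivAt.congr_of_eventuallyEq ?_ this
    simpa using hasDerivAt_pow 2 x
  · subst h
    rw [hasDerivAt_iff_isLittleO]
    simp only [min_self, mul_zero, smul_eq_mul, sub_zero, ne_eq, OfNat.ofNat_ne_zero, not_false_eq_true, zero_pow]
    have : (fun x : ℝ => (min x 0)^2) =O[𝓝 0] fun x : ℝ => x^2 := by
      refine Asymptotics.IsBigO.of_bound 1 (Eventually.of_forall fun y => ?_)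
      rw [one_mul, norm_pow, norm_pow]
      gcongr
      rw [Real.norm_eq_abs, Real.norm_eq_abs]
      rcases le_total y 0 with h | h <;> simp [h]
    refine this.trans_isLittleO ?_
    have := Asymptotics.isLittleO_pow_id (𝕜 := ℝ) (n := 2) (by norm_num)
    exact this
  · have : (fun x : ℝ => (min x 0)^2) =ᶠ[𝓝 x] fun x => 0 := by
      filter_upwards [lt_mem_nhds h] with y hy
      rw [min_eq_right hy.le]; simp
    rw [min_eq_right h.le]
    refine HasDerivAt.congr_of_eventuallyEq ?_ this
    simpa using hasDerivAt_const x (0:ℝ)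

lemma antitone_of_hasDeriv {F F' : ℝ → ℝ} {a b : ℝ}
    (h : ∀ t ∈ Icc a b, HasDerivAt F (F' t) t) (h' : ∀ t ∈ Icc a b, F' t ≤ 0) :
    AntitoneOn F (Icc a b) := by
  refine antitoneOn_of_deriv_nonpos (convex_Icc a b)
    (fun t ht => (h t ht).continuousAt.continuousWithinAt)
    (fun t ht => (h t (interior_subset ht)).differentiableAt.differentiableWithinAt) ?_
  intro t ht
  rw [(h t (interior_subset ht)).deriv]
  exact h' t (interior_subset ht)

lemma monotone_of_hasDeriv {F F' : ℝ → ℝ} {a b : ℝ}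
    (h : ∀ t ∈ Icc a b, HasDerivAt F (F' t) t) (h' : ∀ t ∈ Icc a b, 0 ≤ F' t) :
    MonotoneOn F (Icc a b) := by
  refine monotoneOn_of_deriv_nonneg (convex_Icc a b)
    (fun t ht => (h t ht).continuousAt.continuousWithinAt)
    (fun t ht => (h t (interior_subset ht)).differentiableAt.differentiableWithinAt) ?_
  intro t ht
  rw [(h t (interior_subset ht)).deriv]
  exact h' t (interior_subset ht)

lemma exp_antitone {F F' : ℝ → ℝ} {a b K : ℝ}
    (h : ∀ t ∈ Icc a b, HasDerivAt F (F' t) t) (h' : ∀ t ∈ Icc a b, F' t ≤ K * F t) :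
    AntitoneOn (fun t => Real.exp (-K * t) * F t) (Icc a b) := by
  refine antitone_of_hasDeriv (F' := fun t => Real.exp (-K*t) * (F' t - K * F t)) (fun t ht => ?_)
    (fun t ht => ?_)
  · have h1 : HasDerivAt (fun t => Real.exp (-K * t)) (Real.exp (-K*t) * -K) t := by
      simpa using ((hasDerivAt_id t).const_mul (-K)).exp
    refine (h1.mul (h t ht)).congr_deriv ?_
    ring
  · have := h' t ht
    have := Real.exp_pos (-K*t)
    nlinarith

lemma pos_weak {d g : ℝ → E3} {a b K : ℝ} (hK : 0 ≤ K)
    (hd : ∀ t ∈ Icc a b, HasDerivAt d (g t) t)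
    (q1 : ∀ t ∈ Icc a b, ∀ i, d t i ≤ 0 → K * ∑ j, min (d t j) 0 ≤ g t i)
    (h0 : 0 ≤ d a) : ∀ t ∈ Icc a b, 0 ≤ d t := by
  have hN : ∀ t ∈ Icc a b, HasDerivAt (fun t => ∑ i, (min (d t i) 0)^2)
      (∑ i, 2 * min (d t i) 0 * g t i) t := by
    intro t ht
    refine HasDerivAt.fun_sum fun i _ => ?_
    have h1 := hasDerivAt_pi.1 (hd t ht) i
    exact (hasDerivAt_minsq (d t i)).comp t h1
  have hb : ∀ t ∈ Icc a b, (∑ i, 2 * min (d t i) 0 * g t i) ≤ (6 * K) * ∑ i, (min (d t i) 0)^2 := by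
    intro t ht
    have h1 : ∀ i, 2 * min (d t i) 0 * g t i ≤ 2 * min (d t i) 0 * (K * ∑ j, min (d t j) 0) := by
      intro i
      rcases le_or_gt (d t i) 0 with h | h
      · have := q1 t ht i h
        rw [min_eq_left h]
        nlinarith
      · rw [min_eq_right h.le]; simp
    calc _ ≤ ∑ i, 2 * min (d t i) 0 * (K * ∑ j, min (d t j) 0) := Finset.sum_le_sum fun i _ => h1 i
      _ ≤ _ := by
        simp only [Fin.sum_univ_three]
        set p := min (d t 0) 0
        set q := min (d t 1) 0
        set r := min (d t 2) 0
        nlinarith [mul_nonneg hK (sq_nonneg (p-q)), mul_nonneg hK (sq_nonneg (p-r)), mul_nonneg hK (sq_nonneg (q-r))]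
  intro t ht
  have ha : a ∈ Icc a b := ⟨le_rfl, ht.1.trans ht.2⟩
  have := exp_antitone hN hb ha ht ht.1
  have h3 : (∑ i, (min (d a i) 0)^2) = 0 := by
    refine Finset.sum_eq_zero fun i _ => ?_
    have : min (d a i) 0 = 0 := min_eq_right (h0 i)
    rw [this]; simp
  simp only [h3, mul_zero] at this
  have h4 : (∑ i, (min (d t i) 0)^2) ≤ 0 := by
    have := Real.exp_pos (-(6*K)*t)
    by_contra hc
    push Not at hc
    nlinarith [mul_pos this hc]
  intro i
  have h5 : (min (d t i) 0)^2 ≤ 0 := by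
    refine le_trans ?_ h4
    exact Finset.single_le_sum (f := fun i => (min (d t i) 0)^2) (fun _ _ => sq_nonneg _) (Finset.mem_univ i)
  have h6 : min (d t i) 0 = 0 := by nlinarith
  simpa using h6

lemma pos_strict {d g : ℝ → E3} {a b K : ℝ} (hK : 0 ≤ K)
    (hd : ∀ t ∈ Icc a b, HasDerivAt d (g t) t)
    (q1 : ∀ t ∈ Icc a b, ∀ i, d t i ≤ 0 → K * ∑ j, min (d t j) 0 ≤ g t i)
    (q2 : ∀ t ∈ Icc a b, 0 ≤ d t → ∀ i, - K * d t i ≤ g t i)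
    (q3 : ∀ t ∈ Icc a b, 0 ≤ d t → d t ≠ 0 → (∃ i, d t i = 0) → ∃ i, d t i = 0 ∧ 0 < g t i)
    (h0 : 0 ≤ d a) (h0' : d a ≠ 0) : ∀ t ∈ Ioc a b, ∀ i, 0 < d t i := by
  have hw := pos_weak hK hd q1 h0
  have mono : ∀ i, ∀ s ∈ Icc a b, ∀ t ∈ Icc a b, s ≤ t → 0 < d s i → 0 < d t i := by
    intro i s hs t ht hst hp
    have h1 := exp_antitone (F := fun t => - d t i) (F' := fun t => - g t i) (K := -K) (a := a) (b := b)
      (fun t ht => (hasDerivAt_pi.1 (hd t ht) i).neg)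
      (fun t ht => by have := q2 t ht (hw t ht) i; linarith) hs ht hst
    simp only at h1
    have e1 := Real.exp_pos (-(-K) * s)
    have e2 := Real.exp_pos (-(-K) * t)
    by_contra hc
    push Not at hc
    nlinarith [mul_pos e1 hp]
  intro t ht i
  by_contra hc
  have htI : t ∈ Icc a b := ⟨ht.1.le, ht.2⟩
  have hzero : ∀ s ∈ Icc a t, d s i = 0 := by
    intro s hs
    have hsI : s ∈ Icc a b := ⟨hs.1, hs.2.trans ht.2⟩
    by_contra h
    exact hc (mono i s hsI t htI hs.2 (lt_of_le_of_ne (hw s hsI i) (Ne.symm h)))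
  have hnz : ∀ s ∈ Icc a b, d s ≠ 0 := by
    intro s hs h
    apply h0'
    ext j
    by_contra hj
    have : 0 < d a j := lt_of_le_of_ne (h0 j) (Ne.symm hj)
    have := mono j a ⟨le_rfl, hs.1.trans hs.2⟩ s hs hs.1 this
    rw [h] at this; simp at this
  classical
  let Z : ℝ → Finset (Fin 3) := fun s => Finset.univ.filter fun j => d s j = 0
  have hne : ((fun s => (Z s).card) '' Ioo a t).Nonempty := (nonempty_Ioo.2 ht.1).image _
  obtain ⟨s, hs, hmin⟩ : ∃ s ∈ Ioo a t, ∀ s' ∈ Ioo a t, (Z s).card ≤ (Z s').card := by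
    obtain ⟨s, hs, h⟩ := Nat.sInf_mem hne
    refine ⟨s, hs, fun s' hs' => ?_⟩
    simp only at h
    rw [h]; exact Nat.sInf_le ⟨s', hs', rfl⟩
  have hconst : ∀ s' ∈ Ioo s t, Z s' = Z s := by
    intro s' hs'
    refine Finset.eq_of_subset_of_card_le ?_ (hmin s' ⟨hs.1.trans hs'.1, hs'.2⟩)
    intro j hj
    simp only [Z, Finset.mem_filter, Finset.mem_univ, true_and] at hj ⊢
    by_contra h
    have hsI : s ∈ Icc a b := ⟨hs.1.le, (hs.2.trans_le ht.2).le⟩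
    have := mono j s hsI s' ⟨(hs.1.trans hs'.1).le, (hs'.2.trans_le ht.2).le⟩ hs'.1.le
      (lt_of_le_of_ne (hw s hsI j) (Ne.symm h))
    linarith
  obtain ⟨m, hm⟩ := nonempty_Ioo.2 hs.2
  have hmI : m ∈ Icc a b := ⟨(hs.1.trans hm.1).le, (hm.2.trans_le ht.2).le⟩
  obtain ⟨k, hk, hg⟩ := q3 m hmI (hw m hmI) (hnz m hmI) ⟨i, hzero m ⟨hmI.1, hm.2.le⟩⟩
  have hkz : k ∈ Z s := by rw [← hconst m hm]; simp [Z, hk]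
  have he : (fun t => d t k) =ᶠ[𝓝 m] fun _ => 0 := by
    filter_upwards [Ioo_mem_nhds hm.1 hm.2] with u hu
    rw [← hconst u hu] at hkz
    simpa [Z] using hkz
  have h1 := (hasDerivAt_pi.1 (hd m hmI) k).congr_of_eventuallyEq he.symm
  have := h1.unique (hasDerivAt_const m (0:ℝ))
  linarith

def Sol (f : E3 → E3) (γ : ℝ → E3) (s : Set ℝ) : Prop := ∀ t ∈ s, HasDerivAt γ (f (γ t)) t

lemma exists_jac_bound {f : E3 → E3} (hf : ContDiff ℝ 1 f) {S : Set E3} (hS : IsCompact S) :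
    ∃ K, 0 ≤ K ∧ ∀ x ∈ S, ∀ i j, |jacMat f x i j| ≤ K := by
  have : ∀ i j, ∃ K, ∀ x ∈ S, |jacMat f x i j| ≤ K := fun i j => by
    obtain ⟨C, hC⟩ := hS.exists_bound_of_continuousOn (jac_cont hf i j).continuousOn
    exact ⟨C, hC⟩
  choose K hK using this
  refine ⟨∑ i, ∑ j, |K i j|, by positivity, fun x hx i j => ?_⟩
  refine (hK i j x hx).trans ((le_abs_self _).trans ?_)
  refine (Finset.single_le_sum (f := fun j => |K i j|) (fun _ _ => abs_nonneg _) (Finset.mem_univ j)).trans ?_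
  exact Finset.single_le_sum (f := fun i => ∑ j, |K i j|) (fun _ _ => by positivity) (Finset.mem_univ i)

lemma row_q1 {m : Fin 3 → ℝ} {d : E3} {K : ℝ} (i : Fin 3)
    (hm : ∀ j, |m j| ≤ K) (hc : ∀ j, i ≠ j → 0 ≤ m j) (hi : d i ≤ 0) :
    K * ∑ j, min (d j) 0 ≤ ∑ j, m j * d j := by
  rw [Finset.mul_sum]
  refine Finset.sum_le_sum fun j _ => ?_
  have h1 := abs_le.1 (hm j)
  have hK : 0 ≤ K := (abs_nonneg _).trans (hm j)
  by_cases hj : i = j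
  · subst hj; rw [min_eq_left hi]; nlinarith
  · have := hc j hj
    rcases le_total (d j) 0 with h | h
    · rw [min_eq_left h]; nlinarith
    · rw [min_eq_right h]; nlinarith [mul_nonneg this h]

lemma row_q2 {m : Fin 3 → ℝ} {d : E3} {K : ℝ} (i : Fin 3)
    (hm : ∀ j, |m j| ≤ K) (hc : ∀ j, i ≠ j → 0 ≤ m j) (hd : 0 ≤ d) :
    -K * d i ≤ ∑ j, m j * d j := by
  rw [← Finset.add_sum_erase _ _ (Finset.mem_univ i)]
  have : 0 ≤ ∑ j ∈ Finset.univ.erase i, m j * d j := by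
    refine Finset.sum_nonneg fun j hj => mul_nonneg (hc j ?_) (hd j)
    exact (Finset.ne_of_mem_erase hj).symm
  have h1 := abs_le.1 (hm i)
  have h2 : 0 ≤ d i := hd i
  nlinarith

lemma row_q3 {M : Fin 3 → Fin 3 → ℝ} {d : E3} (hc : ∀ i j, i ≠ j → 0 ≤ M i j) (hM : matIrred M)
    (hd : 0 ≤ d) (hd' : d ≠ 0) (hz : ∃ i, d i = 0) : ∃ i, d i = 0 ∧ 0 < ∑ j, M i j * d j := by
  obtain ⟨i, hi, j, hj, hij⟩ := hM {i | d i = 0} hz (fun h => hd' (by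
    ext j; have : j ∈ {i | d i = 0} := h ▸ mem_univ j
    exact this))
  refine ⟨i, hi, ?_⟩
  have hne : i ≠ j := fun h => hj (h ▸ hi)
  refine Finset.sum_pos' (fun k _ => ?_) ⟨j, Finset.mem_univ j, ?_⟩
  · by_cases hk : i = k
    · subst hk; rw [show d i = 0 from hi]; simp
    · exact mul_nonneg (hc i k hk) (hd k)
  · exact mul_pos (lt_of_le_of_ne (hc i j hne) (Ne.symm hij)) (lt_of_le_of_ne (hd j) (Ne.symm hj))

lemma lin_pos {d : ℝ → E3} {M : ℝ → Fin 3 → Fin 3 → ℝ} {a b K : ℝ} (hK : 0 ≤ K)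
    (hd : ∀ t ∈ Icc a b, HasDerivAt d (fun i => ∑ j, M t i j * d t j) t)
    (hb : ∀ t ∈ Icc a b, ∀ i j, |M t i j| ≤ K)
    (hc : ∀ t ∈ Icc a b, ∀ i j, i ≠ j → 0 ≤ M t i j)
    (hi : ∀ t ∈ Icc a b, matIrred (M t))
    (h0 : 0 ≤ d a) (h0' : d a ≠ 0) : ∀ t ∈ Ioc a b, ∀ i, 0 < d t i :=
  pos_strict hK hd (fun t ht i h => row_q1 i (hb t ht i) (hc t ht i) h)
    (fun t ht h i => row_q2 i (hb t ht i) (hc t ht i) h)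
    (fun t ht h h' hz => row_q3 (hc t ht) (hi t ht) h h' hz) h0 h0'

lemma Sol.continuousOn {f : E3 → E3} {γ : ℝ → E3} {s : Set ℝ} (h : Sol f γ s) : ContinuousOn γ s :=
  fun t ht => (h t ht).continuousAt.continuousWithinAt

lemma sm_data {f : E3 → E3} (hf : CoopSys f) {x y : ℝ → E3} {a b : ℝ}
    (hx : Sol f x (Icc a b)) (hy : Sol f y (Icc a b)) :
    ∃ K, 0 ≤ K ∧ (∀ t ∈ Icc a b, ∀ i, (y t - x t) i ≤ 0 → K * ∑ j, min ((y t - x t) j) 0 ≤ (f (y t) - f (x t)) i)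
     ∧ (∀ t ∈ Icc a b, 0 ≤ y t - x t → ∀ i, - K * (y t - x t) i ≤ (f (y t) - f (x t)) i) := by
  have hc : IsCompact (x '' Icc a b ∪ y '' Icc a b) :=
    (isCompact_Icc.image_of_continuousOn hx.continuousOn).union
      (isCompact_Icc.image_of_continuousOn hy.continuousOn)
  obtain ⟨R, hR⟩ := hc.isBounded.subset_closedBall 0
  obtain ⟨K, hK0, hK⟩ := exists_jac_bound hf.smooth (isCompact_closedBall (0:E3) R)
  have key : ∀ t ∈ Icc a b, ∀ i, ∃ m : Fin 3 → ℝ, (∀ j, |m j| ≤ K) ∧ (∀ j, i ≠ j → 0 ≤ m j) ∧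
      (f (y t) - f (x t)) i = ∑ j, m j * (y t - x t) j := by
    intro t ht i
    obtain ⟨ξ, h1, h2⟩ := row_mvt hf.diff (x t) (y t) i
    have hξ : ξ ∈ Metric.closedBall (0:E3) R :=
      (convex_closedBall (0:E3) R).segment_subset (hR (Or.inl ⟨t, ht, rfl⟩)) (hR (Or.inr ⟨t, ht, rfl⟩)) h1
    exact ⟨fun j => jacMat f ξ i j, hK ξ hξ i, hf.coop ξ i, h2⟩
  refine ⟨K, hK0, fun t ht i h => ?_, fun t ht h i => ?_⟩
  · obtain ⟨m, h1, h2, h3⟩ := key t ht i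
    rw [h3]; exact row_q1 i h1 h2 h
  · obtain ⟨m, h1, h2, h3⟩ := key t ht i
    rw [h3]; exact row_q2 i h1 h2 h

lemma kamke_strict {f : E3 → E3} (hf : CoopSys f) {x y : E3} (hxy : x ≤ y) (hne : x ≠ y)
    (hz : ∃ i, x i = y i) : ∃ i, x i = y i ∧ f x i < f y i := by
  obtain ⟨i, hi, hp⟩ := row_q3 (M := jacMat f x) (d := y - x) (hf.coop x) (hf.irr x)
    (sub_nonneg.2 hxy) (sub_ne_zero.2 hne.symm) (hz.imp fun i h => by simp [h])
  simp only [Pi.sub_apply] at hi hp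
  refine ⟨i, by linarith, ?_⟩
  let p : ℝ → E3 := fun θ => x + θ • (y - x)
  have hp' : ∀ θ, HasDerivAt (fun θ => f (p θ) i) (∑ j, jacMat f (p θ) i j * (y j - x j)) θ := by
    intro θ
    have h1 : HasDerivAt p (y - x) θ := by
      have := ((hasDerivAt_id θ).smul_const (y - x)).const_add x
      rw [one_smul] at this
      exact this
    have h2 := ((hf.diff (p θ)).hasFDerivAt).comp_hasDerivAt θ h1
    have h3 := hasDerivAt_pi.1 h2 i
    rw [jac_apply] at h3
    exact h3
  have hmono : MonotoneOn (fun θ => f (p θ) i) (Icc 0 1) := by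
    refine monotone_of_hasDeriv (fun t _ => hp' t) fun t _ => ?_
    refine Finset.sum_nonneg fun j _ => ?_
    by_cases hj : i = j
    · subst hj; simp [hi]
    · exact mul_nonneg (hf.coop _ i j hj) (sub_nonneg.2 (hxy j))
  have p0 : p 0 = x := by simp [p]
  have p1 : p 1 = y := by simp [p]
  have hle := hmono (left_mem_Icc.2 zero_le_one) (right_mem_Icc.2 zero_le_one) zero_le_one
  simp only [p0, p1] at hle
  rcases hle.lt_or_eq with h | h
  · exact h
  exfalso
  have hconst : (fun θ => f (p θ) i) =ᶠ[𝓝[>] 0] fun _ => f x i := by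
    filter_upwards [Ioc_mem_nhdsGT (zero_lt_one (α := ℝ))] with θ hθ
    have a1 := hmono (left_mem_Icc.2 zero_le_one) ⟨hθ.1.le, hθ.2⟩ hθ.1.le
    have a2 := hmono ⟨hθ.1.le, hθ.2⟩ (right_mem_Icc.2 zero_le_one) hθ.2
    simp only [p0, p1] at a1 a2
    linarith
  have d1 := (hp' 0).hasDerivWithinAt (s := Ioi 0)
  have d2 := (hasDerivWithinAt_const (0:ℝ) (Ioi 0) (f x i)).congr_of_eventuallyEq hconst (by simp [p0])
  have := (uniqueDiffWithinAt_Ioi (0:ℝ)).eq_deriv _ d1 d2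
  rw [p0] at this
  linarith

lemma sm_weak {f : E3 → E3} (hf : CoopSys f) {x y : ℝ → E3} {a b : ℝ}
    (hx : Sol f x (Icc a b)) (hy : Sol f y (Icc a b)) (h0 : x a ≤ y a) :
    ∀ t ∈ Icc a b, x t ≤ y t := by
  obtain ⟨K, hK, h1, h2⟩ := sm_data hf hx hy
  intro t ht
  exact sub_nonneg.1 (pos_weak (d := fun t => y t - x t) hK (fun t ht => (hy t ht).sub (hx t ht)) h1 (sub_nonneg.2 h0) t ht)

lemma sm_strict {f : E3 → E3} (hf : CoopSys f) {x y : ℝ → E3} {a b : ℝ}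
    (hx : Sol f x (Icc a b)) (hy : Sol f y (Icc a b)) (h0 : x a ≤ y a) (h0' : x a ≠ y a) :
    ∀ t ∈ Ioc a b, strLt (x t) (y t) := by
  obtain ⟨K, hK, h1, h2⟩ := sm_data hf hx hy
  intro t ht i
  refine sub_pos.1 (pos_strict (d := fun t => y t - x t) hK (fun t ht => (hy t ht).sub (hx t ht)) h1 h2 ?_
    (sub_nonneg.2 h0) (sub_ne_zero.2 h0'.symm) t ht i)
  intro t ht hp hn ⟨k, hk⟩
  obtain ⟨i, hi, hi'⟩ := kamke_strict hf (sub_nonneg.1 hp) (sub_ne_zero.1 hn).symm ⟨k, by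
    simp only [Pi.sub_apply] at hk; linarith⟩
  exact ⟨i, by simp [hi], by simpa using hi'⟩


def gradv (H : E3 → ℝ) (x : E3) : E3 := fun i => fderiv ℝ H x (Pi.single i 1)

lemma gradv_apply (H : E3 → ℝ) (x v : E3) : fderiv ℝ H x v = ∑ j, gradv H x j * v j := lin_apply _ v

lemma gradv_ne {f : E3 → E3} {H : E3 → ℝ} (hH : FInt f H) (x : E3) : gradv H x ≠ 0 := by
  intro h
  apply hH.grad x
  ext v
  rw [gradv_apply, h]; simp

lemma gradv_cont {H : E3 → ℝ} (hH : ContDiff ℝ 1 H) : Continuous (gradv H) :=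
  continuous_pi fun i => (hH.continuous_fderiv (by norm_num)).clm_apply continuous_const

lemma FInt.diff {f : E3 → E3} {H : E3 → ℝ} (hH : FInt f H) : Differentiable ℝ H :=
  hH.smooth.differentiable (by norm_num)

/-- joint limit of difference quotients -/
lemma joint_quot {F : Type*} [NormedAddCommGroup F] [NormedSpace ℝ F] {f : E3 → F}
    (hf : ContDiff ℝ 1 f) (x e : E3) :
    Tendsto (fun p : ℝ × E3 => p.1⁻¹ • (f (p.2 + p.1 • e) - f p.2)) (𝓝[≠] 0 ×ˢ 𝓝 x)
      (𝓝 (fderiv ℝ f x e)) := by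
  have hs : HasStrictFDerivAt f (fderiv ℝ f x) x := hf.contDiffAt.hasStrictFDerivAt (by norm_num)
  have hle : (𝓝[≠] (0:ℝ) ×ˢ 𝓝 x) ≤ 𝓝 (0, x) := by
    rw [nhds_prod_eq]; exact Filter.prod_mono nhdsWithin_le_nhds le_rfl
  have ht : Tendsto (fun p : ℝ × E3 => (p.2 + p.1 • e, p.2)) (𝓝[≠] 0 ×ˢ 𝓝 x) (𝓝 (x, x)) := by
    have hc : Continuous (fun p : ℝ × E3 => (p.2 + p.1 • e, p.2)) := by fun_prop
    have := hc.tendsto (0, x)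
    simp only [zero_smul, add_zero] at this
    exact this.mono_left hle
  have ho := hs.isLittleO.comp_tendsto ht
  have hne : ∀ᶠ p : ℝ × E3 in (𝓝[≠] 0 ×ˢ 𝓝 x), p.1 ≠ 0 :=
    tendsto_fst.eventually (eventually_mem_nhdsWithin)
  rw [← tendsto_sub_nhds_zero_iff]
  have h2 : (fun p : ℝ × E3 => f (p.2 + p.1 • e) - f p.2 - fderiv ℝ f x (p.1 • e)) =o[𝓝[≠] 0 ×ˢ 𝓝 x]
      fun p : ℝ × E3 => p.1 := by
    have h3 : (fun p : ℝ × E3 => f (p.2 + p.1 • e) - f p.2 - fderiv ℝ f x (p.1 • e)) =o[𝓝[≠] 0 ×ˢ 𝓝 x]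
      fun p : ℝ × E3 => p.1 • e := by
      refine ho.congr' (Eventually.of_forall fun p => ?_) (Eventually.of_forall fun p => ?_)
      · simp [Function.comp]
      · simp [Function.comp]
    refine h3.trans_isBigO ?_
    refine Asymptotics.IsBigO.of_bound ‖e‖ (Eventually.of_forall fun p => ?_)
    rw [norm_smul, mul_comm]
  have h4 := (Asymptotics.isBigO_refl (fun p : ℝ × E3 => p.1⁻¹) (𝓝[≠] 0 ×ˢ 𝓝 x)).smul_isLittleO h2
  have h5 : (fun p : ℝ × E3 => p.1⁻¹ • (f (p.2 + p.1 • e) - f p.2 - fderiv ℝ f x (p.1 • e))) =o[𝓝[≠] 0 ×ˢ 𝓝 x]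
      fun _ => (1:ℝ) := by
    refine h4.congr' (Eventually.of_forall fun p => rfl) ?_
    filter_upwards [hne] with p hp
    simp [hp]
  rw [Asymptotics.isLittleO_one_iff] at h5
  refine h5.congr' ?_
  filter_upwards [hne] with p hp
  rw [smul_sub, map_smul, smul_smul, inv_mul_cancel₀ hp, one_smul]

lemma adjoint_deriv {f : E3 → E3} {H : E3 → ℝ} (hf : CoopSys f) (hH : FInt f H) {γ : ℝ → E3} {A : Set ℝ}
    (hA : IsOpen A) (hγ : Sol f γ A) (e : E3) {t : ℝ} (ht : t ∈ A) :
    HasDerivAt (fun t => fderiv ℝ H (γ t) e) (-(fderiv ℝ H (γ t) (fderiv ℝ f (γ t) e))) t := by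
  let Q : ℝ → E3 → ℝ := fun s x => -(fderiv ℝ H (x + s • e) (s⁻¹ • (f (x + s • e) - f x)))
  let q : E3 → ℝ := fun x => -(fderiv ℝ H x (fderiv ℝ f x e))
  have cH := hH.smooth.continuous_fderiv (by norm_num)
  have cf := hf.smooth.continuous_fderiv (by norm_num)
  have hq : Continuous q := (cH.clm_apply (cf.clm_apply continuous_const)).neg
  have hQ : TendstoLocallyUniformly Q q (𝓝[≠] 0) := by
    rw [tendstoLocallyUniformly_iff_forall_tendsto]
    intro x
    have h1 : Tendsto (fun p : ℝ × E3 => q p.2) (𝓝[≠] 0 ×ˢ 𝓝 x) (𝓝 (q x)) :=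
      (hq.tendsto x).comp tendsto_snd
    have h2 : Tendsto (fun p : ℝ × E3 => Q p.1 p.2) (𝓝[≠] 0 ×ˢ 𝓝 x) (𝓝 (q x)) := by
      have hle : (𝓝[≠] (0:ℝ) ×ˢ 𝓝 x) ≤ 𝓝 (0, x) := by
        rw [nhds_prod_eq]; exact Filter.prod_mono nhdsWithin_le_nhds le_rfl
      have a1 : Tendsto (fun p : ℝ × E3 => fderiv ℝ H (p.2 + p.1 • e)) (𝓝[≠] 0 ×ˢ 𝓝 x) (𝓝 (fderiv ℝ H x)) := by
        have hc : Continuous (fun p : ℝ × E3 => fderiv ℝ H (p.2 + p.1 • e)) := cH.comp (by fun_prop)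
        have := hc.tendsto (0, x)
        simp only [zero_smul, add_zero] at this
        exact this.mono_left hle
      exact ((isBoundedBilinearMap_apply.continuous.tendsto _).comp (a1.prodMk_nhds (joint_quot hf.smooth x e))).neg
    exact (h1.prodMk_nhds h2).mono_right (nhds_le_uniformity (q x))
  have hQ' := (tendstoLocallyUniformlyOn_univ.2 hQ).comp γ (mapsTo_univ γ A) hγ.continuousOn
  refine hasDerivAt_of_tendstoLocallyUniformlyOn (l := 𝓝[≠] (0:ℝ)) hA hQ'
    (f := fun s t => s⁻¹ • (H (γ t + s • e) - H (γ t))) ?_ ?_ ht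
  · filter_upwards [self_mem_nhdsWithin] with s hs t ht
    have d1 : HasDerivAt (fun t => H (γ t + s • e)) (fderiv ℝ H (γ t + s • e) (f (γ t))) t :=
      (hH.diff _).hasFDerivAt.comp_hasDerivAt t ((hγ t ht).add_const (s • e))
    have d2 : HasDerivAt (fun t => H (γ t)) (fderiv ℝ H (γ t) (f (γ t))) t :=
      (hH.diff _).hasFDerivAt.comp_hasDerivAt t (hγ t ht)
    refine ((d1.sub d2).const_smul s⁻¹).congr_deriv ?_
    simp only [Q, Function.comp, hH.inv, sub_zero, map_smul, map_sub, zero_sub]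
    simp
  · intro t ht
    have := (joint_quot hH.smooth (γ t) e).comp (tendsto_id.prodMk (tendsto_const_nhds (x := γ t) (f := 𝓝[≠] (0:ℝ))))
    exact this

lemma matIrred_transpose {M : Fin 3 → Fin 3 → ℝ} (h : matIrred M) : matIrred (fun i j => M j i) := by
  intro S hS hS'
  obtain ⟨i, hi, j, hj, hij⟩ := h Sᶜ (nonempty_compl.2 hS') (by
    intro h; rw [compl_univ_iff] at h; exact hS.ne_empty h)
  exact ⟨j, not_not.1 hj, i, hi, hij⟩

lemma sol_jac_bound {f : E3 → E3} (hf : CoopSys f) {γ : ℝ → E3} {a b : ℝ} (hγ : ContinuousOn γ (Icc a b)) :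
    ∃ K, 0 ≤ K ∧ ∀ t ∈ Icc a b, ∀ i j, |jacMat f (γ t) i j| ≤ K := by
  obtain ⟨K, h0, h⟩ := exists_jac_bound hf.smooth (isCompact_Icc.image_of_continuousOn hγ)
  exact ⟨K, h0, fun t ht => h _ ⟨t, ht, rfl⟩⟩

lemma grad_back {f : E3 → E3} {H : E3 → ℝ} (hf : CoopSys f) (hH : FInt f H) {γ : ℝ → E3} {A : Set ℝ}
    (hA : IsOpen A) (hγ : Sol f γ A) {a b : ℝ} (hab : Icc a b ⊆ A) (h0 : 0 ≤ gradv H (γ b)) :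
    ∀ t ∈ Ico a b, ∀ i, 0 < gradv H (γ t) i := by
  obtain ⟨K, hK, hb⟩ := sol_jac_bound hf (hγ.continuousOn.mono hab)
  have := lin_pos (d := fun t => gradv H (γ (-t))) (M := fun t i j => jacMat f (γ (-t)) j i)
    (a := -b) (b := -a) hK ?_ ?_ ?_ ?_ (by simpa using h0) (by simpa using gradv_ne hH _)
  · intro t ht i
    have := this (-t) ⟨by linarith [ht.2], by linarith [ht.1]⟩ i
    simpa using this
  · intro t ht
    rw [hasDerivAt_pi]
    intro i
    have htA : -t ∈ A := hab ⟨by linarith [ht.2], by linarith [ht.1]⟩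
    have := (adjoint_deriv hf hH hA hγ (Pi.single i 1) htA).scomp t (hasDerivAt_neg t)
    refine this.congr_deriv ?_
    simp only [neg_smul, one_smul, neg_neg, gradv_apply H _ (fderiv ℝ f _ _)]
    refine Finset.sum_congr rfl fun j _ => ?_
    rw [mul_comm]; rfl
  · intro t ht i j
    exact hb _ ⟨by linarith [ht.2], by linarith [ht.1]⟩ _ _
  · intro t ht i j hij
    exact hf.coop _ _ _ hij.symm
  · intro t ht
    exact matIrred_transpose (hf.irr _)

lemma vel_deriv {f : E3 → E3} (hf : CoopSys f) {γ : ℝ → E3} {t : ℝ} (h : HasDerivAt γ (f (γ t)) t) :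
    HasDerivAt (fun t => f (γ t)) (fun i => ∑ j, jacMat f (γ t) i j * f (γ t) j) t := by
  refine ((hf.diff _).hasFDerivAt.comp_hasDerivAt t h).congr_deriv ?_
  ext i; rw [jac_apply]

lemma vel_pos {f : E3 → E3} (hf : CoopSys f) {γ : ℝ → E3} {a b : ℝ} (hγ : Sol f γ (Icc a b))
    (h0 : 0 ≤ f (γ a)) (h0' : f (γ a) ≠ 0) : ∀ t ∈ Ioc a b, ∀ i, 0 < f (γ t) i := by
  obtain ⟨K, hK, hb⟩ := sol_jac_bound hf hγ.continuousOn
  exact lin_pos (d := fun t => f (γ t)) (M := fun t => jacMat f (γ t)) hK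
    (fun t ht => vel_deriv hf (hγ t ht)) hb (fun t _ => hf.coop _) (fun t _ => hf.irr _) h0 h0'

lemma fderiv_comp_neg_aux {F : Type*} [NormedAddCommGroup F] [NormedSpace ℝ F] {f : E3 → F}
    (hf : Differentiable ℝ f) (x : E3) : fderiv ℝ (fun x => f (-x)) x = - fderiv ℝ f (-x) := by
  have h := ((hf (-x)).hasFDerivAt.comp x (hasFDerivAt_id x).neg).fderiv
  have e : fderiv ℝ (fun x => f (-x)) x = fderiv ℝ (f ∘ Neg.neg) x := rfl
  rw [e, h]; ext v; simp

lemma fderiv_neg_neg {f : E3 → E3} (hf : Differentiable ℝ f) (x : E3) :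
    fderiv ℝ (fun x => - f (-x)) x = fderiv ℝ f (-x) := by
  rw [fderiv_fun_neg, fderiv_comp_neg_aux hf, neg_neg]

lemma CoopSys.neg {f : E3 → E3} (hf : CoopSys f) : CoopSys (fun x => - f (-x)) := by
  have hj : ∀ x, jacMat (fun x => - f (-x)) x = jacMat f (-x) := by
    intro x; unfold jacMat; rw [fderiv_neg_neg hf.diff]
  refine ⟨(hf.smooth.comp contDiff_neg).neg, fun x => ?_, fun x => ?_⟩
  · rw [hj]; exact hf.coop _
  · rw [hj]; exact hf.irr _

lemma Sol.neg {f : E3 → E3} {γ : ℝ → E3} {s : Set ℝ} (h : Sol f γ s) :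
    Sol (fun x => - f (-x)) (fun t => - γ t) s := fun t ht => by
  have := (h t ht).neg
  simp only [neg_neg]
  exact this

lemma Sol.mono {f : E3 → E3} {γ : ℝ → E3} {s s' : Set ℝ} (h : Sol f γ s) (hs : s' ⊆ s) : Sol f γ s' :=
  fun t ht => h t (hs ht)

lemma Sol.shift {f : E3 → E3} {γ : ℝ → E3} {s s' : Set ℝ} (h : Sol f γ s) (u : ℝ)
    (hs : ∀ t ∈ s', t + u ∈ s) : Sol f (fun t => γ (t + u)) s' :=
  fun t ht => by simpa using (h (t + u) (hs t ht)).comp_add_const t u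

lemma FInt.neg {f : E3 → E3} {H : E3 → ℝ} (hH : FInt f H) :
    FInt (fun x => - f (-x)) (fun x => H (-x)) := by
  have := fderiv_comp_neg_aux hH.diff
  refine ⟨hH.smooth.comp contDiff_neg, fun x => ?_, fun x => ?_⟩
  · rw [this]; simp [hH.inv]
  · rw [this]; simp [hH.grad]

lemma FInt.neg' {f : E3 → E3} {H : E3 → ℝ} (hH : FInt f H) : FInt f (fun x => - H x) := by
  refine ⟨hH.smooth.neg, fun x => ?_, fun x => ?_⟩
  · rw [fderiv_fun_neg]; simp [hH.inv]
  · rw [fderiv_fun_neg]; simp [hH.grad]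

lemma vel_neg {f : E3 → E3} (hf : CoopSys f) {γ : ℝ → E3} {a b : ℝ} (hγ : Sol f γ (Icc a b))
    (h0 : f (γ a) ≤ 0) (h0' : f (γ a) ≠ 0) : ∀ t ∈ Ioc a b, ∀ i, f (γ t) i < 0 := by
  intro t ht i
  have := vel_pos hf.neg hγ.neg (by simpa using h0) (by simpa using h0') t ht i
  simpa using this

/-! shifts and the peak/valley lemma -/

lemma shift_mono {f : E3 → E3} (hf : CoopSys f) {γ : ℝ → E3} {a b : ℝ} (hγ : Sol f γ (Icc a b))
    {s s' u : ℝ} (hs : s ∈ Icc a b) (hs' : s' ∈ Icc a b) (hu : 0 ≤ u) (h1 : s + u ≤ b) (h2 : s' + u ≤ b)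
    (h : γ s ≤ γ s') : γ (s + u) ≤ γ (s' + u) := by
  have := sm_weak hf (x := fun t => γ (t + s)) (y := fun t => γ (t + s')) (a := 0) (b := u)
    (hγ.shift s fun t ht => ⟨by linarith [ht.1, hs.1], by linarith [ht.2]⟩)
    (hγ.shift s' fun t ht => ⟨by linarith [ht.1, hs'.1], by linarith [ht.2]⟩) (by simpa using h)
    u ⟨hu, le_rfl⟩
  simpa [add_comm] using this

lemma shift_strict {f : E3 → E3} (hf : CoopSys f) {γ : ℝ → E3} {a b : ℝ} (hγ : Sol f γ (Icc a b))
    {s s' u : ℝ} (hs : s ∈ Icc a b) (hs' : s' ∈ Icc a b) (hu : 0 < u) (h1 : s + u ≤ b) (h2 : s' + u ≤ b)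
    (h : γ s ≤ γ s') (hne : γ s ≠ γ s') : strLt (γ (s + u)) (γ (s' + u)) := by
  have := sm_strict hf (x := fun t => γ (t + s)) (y := fun t => γ (t + s')) (a := 0) (b := u)
    (hγ.shift s fun t ht => ⟨by linarith [ht.1, hs.1], by linarith [ht.2]⟩)
    (hγ.shift s' fun t ht => ⟨by linarith [ht.1, hs'.1], by linarith [ht.2]⟩) (by simpa using h)
    (by simpa using hne) u ⟨hu, le_rfl⟩
  simpa [add_comm] using this

lemma strLt.le {x y : E3} (h : strLt x y) : x ≤ y := fun i => (h i).le
lemma strLt.ne {x y : E3} (h : strLt x y) : x ≠ y := fun e => (h 0).ne (by rw [e])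
lemma strLt.lt {x y : E3} (h : strLt x y) : x < y := lt_of_le_of_ne h.le h.ne

lemma peak_nat {f : E3 → E3} (hf : CoopSys f) {γ : ℝ → E3} {c h : ℝ} (hh : 0 < h) : ∀ N m n : ℕ, m + n ≤ N → 0 < m → 0 < n →
    Sol f γ (Icc (c - m * h) (c + n * h)) → γ (c - m * h) < γ c → γ (c + n * h) < γ c → False := by
  intro N
  induction N with
  | zero => intro m n h1 h2; omega
  | succ N ih =>
    intro m n hN hm hn hγ h1 h2
    have hm' : (0:ℝ) < m := by exact_mod_cast hm
    have hn' : (0:ℝ) < n := by exact_mod_cast hn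
    have hmh := mul_pos hm' hh
    have hnh := mul_pos hn' hh
    have hc : c ∈ Icc (c - m * h) (c + n * h) := ⟨by linarith, by linarith⟩
    have hl : c - m * h ∈ Icc (c - m * h) (c + n * h) := ⟨by linarith, by linarith⟩
    have key := shift_mono hf hγ hl hc hnh.le (by linarith) (by linarith) h1.le
    rcases lt_trichotomy m n with hlt | heq | hgt
    · have e : ((n - m : ℕ) : ℝ) = n - m := by push_cast [hlt.le]; ring
      refine ih m (n - m) (by omega) hm (by omega) (hγ.mono (Icc_subset_Icc le_rfl ?_)) h1 ?_
      · rw [e]; nlinarith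
      · rw [e]
        rw [show c + ((n:ℝ) - m) * h = c - m * h + n * h by ring]
        exact key.trans_lt h2
    · subst heq
      rw [sub_add_cancel] at key
      exact absurd (key.trans_lt h2) (lt_irrefl _)
    · have e : ((m - n : ℕ) : ℝ) = m - n := by push_cast [hgt.le]; ring
      refine ih (m - n) n (by omega) (by omega) hn (hγ.mono (Icc_subset_Icc ?_ le_rfl)) ?_ h2
      · rw [e]; nlinarith
      · rw [e]
        rw [show c - ((m:ℝ) - n) * h = c - m * h + n * h by ring]
        exact key.trans_lt h2

lemma eventually_strLt {X : Type*} [TopologicalSpace X] {g k : X → E3} {x : X} (hg : ContinuousAt g x) (hk : ContinuousAt k x)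
    (h : strLt (g x) (k x)) : ∀ᶠ y in 𝓝 x, strLt (g y) (k y) := by
  unfold strLt
  rw [eventually_all]
  intro i
  exact (((continuous_apply i).continuousAt.comp hg)).eventually_lt ((continuous_apply i).continuousAt.comp hk) (h i)

lemma peak {f : E3 → E3} (hf : CoopSys f) {γ : ℝ → E3} {a c d : ℝ} (hγ : Sol f γ (Icc a d))
    (hac : a < c) (hcd : c < d) (h1 : strLt (γ a) (γ c)) (h2 : γ d < γ c) : False := by
  have ha := (hγ a ⟨le_rfl, (hac.trans hcd).le⟩).continuousAt
  obtain ⟨l, u, hlu, hsub⟩ := mem_nhds_iff_exists_Ioo_subset.1 (eventually_strLt ha continuousAt_const h1)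
  have hdc : 0 < d - c := sub_pos.2 hcd
  set u' := min u c
  have hu' : a < u' := lt_min hlu.2 hac
  obtain ⟨q, hq1, hq2⟩ := exists_rat_btwn (show (c - u') / (d - c) < (c - a) / (d - c) by gcongr)
  have hq0 : (0:ℝ) < q := lt_of_le_of_lt (div_nonneg (by linarith [min_le_right u c]) hdc.le) hq1
  rw [div_lt_iff₀ hdc] at hq1
  rw [lt_div_iff₀ hdc] at hq2
  have hden : (0:ℝ) < q.den := by exact_mod_cast q.den_pos
  have hq0' : 0 < q := by exact_mod_cast hq0
  have hnum : 0 < q.num := Rat.num_pos.2 hq0'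
  have hm : ((q.num.toNat : ℕ) : ℝ) = q.num := by
    have : ((q.num.toNat : ℤ)) = q.num := Int.toNat_of_nonneg hnum.le
    exact_mod_cast this
  have hqq : (q:ℝ) = q.num / q.den := by exact_mod_cast (Rat.num_div_den q).symm
  have e1 : c - (q.num.toNat : ℝ) * ((d - c) / q.den) = c - q * (d - c) := by
    rw [hm, hqq]; ring
  have e2 : c + (q.den : ℝ) * ((d - c) / q.den) = d := by field_simp; ring
  have hmin := min_le_left u c
  refine peak_nat hf (γ := γ) (c := c) (h := (d - c) / q.den) (by positivity) _ q.num.toNat q.den le_rfl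
    (by omega) q.den_pos ?_ ?_ ?_
  · rw [e1, e2]; exact hγ.mono (Icc_subset_Icc (by linarith) le_rfl)
  · rw [e1]
    refine strLt.lt (hsub ⟨?_, ?_⟩)
    · linarith [hlu.1]
    · linarith
  · rw [e2]; exact h2

lemma valley {f : E3 → E3} (hf : CoopSys f) {γ : ℝ → E3} {a c d : ℝ} (hγ : Sol f γ (Icc a d))
    (hac : a < c) (hcd : c < d) (h1 : strLt (γ c) (γ a)) (h2 : γ c < γ d) : False :=
  peak hf.neg hγ.neg hac hcd (fun i => by simpa using h1 i) (by simpa using h2)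

/-! uniqueness and local flow -/

lemma sol_unique {f : E3 → E3} (hf : CoopSys f) {x y : ℝ → E3} {a b t0 : ℝ}
    (hx : Sol f x (Icc a b)) (hy : Sol f y (Icc a b)) (ht : t0 ∈ Ioo a b) (h : x t0 = y t0) :
    EqOn x y (Icc a b) := by
  have hc : IsCompact (x '' Icc a b ∪ y '' Icc a b) :=
    (isCompact_Icc.image_of_continuousOn hx.continuousOn).union
      (isCompact_Icc.image_of_continuousOn hy.continuousOn)
  obtain ⟨K, hK⟩ := (hf.smooth.locallyLipschitz.locallyLipschitzOn (s := x '' Icc a b ∪ y '' Icc a b)).exists_lipschitzOnWith_of_compact hc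
  exact ODE_solution_unique_of_mem_Icc (v := fun _ => f) (s := fun _ => x '' Icc a b ∪ y '' Icc a b) (fun _ _ => hK) ht
    hx.continuousOn (fun t ht => hx t (Ioo_subset_Icc_self ht)) (fun t ht => Or.inl ⟨t, Ioo_subset_Icc_self ht, rfl⟩)
    hy.continuousOn (fun t ht => hy t (Ioo_subset_Icc_self ht)) (fun t ht => Or.inr ⟨t, Ioo_subset_Icc_self ht, rfl⟩) h

lemma local_flow {f : E3 → E3} (hf : CoopSys f) (x0 : E3) :
    ∃ R > 0, ∃ ε > 0, ∃ Φ : E3 × ℝ → E3, (∀ x ∈ Metric.closedBall x0 R, Φ (x, 0) = x ∧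
      Sol f (fun t => Φ (x, t)) (Icc (-ε) ε)) ∧
      ContinuousOn Φ (Metric.closedBall x0 R ×ˢ Icc (-ε) ε) := by
  have ⟨ε, hε, a, r, _, _, hr, hpl⟩ := IsPicardLindelof.of_contDiffAt_one (hf.smooth.contDiffAt (x := x0))
  obtain ⟨Φ, h1, h2⟩ := (hpl 0).exists_forall_mem_closedBall_eq_hasDerivWithinAt_continuousOn
  refine ⟨r, hr, ε / 2, by positivity, Φ, fun x hx => ⟨(h1 x hx).1, fun t ht => ?_⟩, ?_⟩
  · have : t ∈ Ioo (0 - ε) (0 + ε) := ⟨by linarith [ht.1], by linarith [ht.2]⟩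
    exact ((h1 x hx).2 t (Ioo_subset_Icc_self this)).hasDerivAt (Icc_mem_nhds this.1 this.2)
  · refine h2.mono (prod_mono le_rfl ?_)
    exact Icc_subset_Icc (by linarith) (by linarith)


structure Traj (f : E3 → E3) (γ : ℝ → E3) (l : Filter ℝ) (A : Set ℝ) : Prop where
  sol : Sol f γ A
  op : IsOpen A
  oc : OrdConnected A
  mem : A ∈ l
  shift : ∀ h : ℝ, Tendsto (fun t => t + h) l l
  ends : ∀ P Q R : ℝ → Prop, (∃ᶠ t in l, P t) → (∃ᶠ t in l, Q t) → (∃ᶠ t in l, R t) →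
    ∃ t1 t2 t3, t1 + 1 < t2 ∧ t2 + 1 < t3 ∧ Icc (t1 - 1) (t3 + 1) ⊆ A ∧ P t1 ∧ Q t2 ∧ R t3
  basis : ∀ S ∈ l, ∃ S' ⊆ S, S' ∈ l ∧ OrdConnected S'

def LimS (γ : ℝ → E3) (l : Filter ℝ) : Set E3 := {y | MapClusterPt y l γ}

lemma LimS.freq {γ : ℝ → E3} {l : Filter ℝ} {y : E3} (hy : y ∈ LimS γ l) {P : E3 → Prop}
    (hP : ∀ᶠ x in 𝓝 y, P x) : ∃ᶠ t in l, P (γ t) :=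
  (mapClusterPt_iff_frequently.1 hy) _ hP

lemma traj_top {f : E3 → E3} {γ : ℝ → E3} (h : Sol f γ (Ioi 0)) : Traj f γ atTop (Ioi 0) where
  sol := h
  op := isOpen_Ioi
  oc := ordConnected_Ioi
  mem := Ioi_mem_atTop 0
  shift := fun h => tendsto_atTop_add_const_right _ _ tendsto_id
  basis := fun S hS => by
    obtain ⟨N, hN⟩ := mem_atTop_sets.1 hS
    exact ⟨Ici N, hN, Ici_mem_atTop N, ordConnected_Ici⟩
  ends := by
    intro P Q R hP hQ hR
    obtain ⟨t1, h1, p1⟩ := (hP.and_eventually (eventually_gt_atTop 1)).exists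
    obtain ⟨t2, h2, p2⟩ := (hQ.and_eventually (eventually_gt_atTop (t1+1))).exists
    obtain ⟨t3, h3, p3⟩ := (hR.and_eventually (eventually_gt_atTop (t2+1))).exists
    exact ⟨t1, t2, t3, p2, p3, fun t ht => by have := ht.1; simp only [mem_Ioi]; linarith, h1, h2, h3⟩

lemma traj_bot {f : E3 → E3} {γ : ℝ → E3} (h : Sol f γ (Iio 0)) : Traj f γ atBot (Iio 0) where
  sol := h
  op := isOpen_Iio
  oc := ordConnected_Iio
  mem := Iio_mem_atBot 0
  shift := fun h => tendsto_atBot_add_const_right _ _ tendsto_id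
  basis := fun S hS => by
    obtain ⟨N, hN⟩ := mem_atBot_sets.1 hS
    exact ⟨Iic N, hN, Iic_mem_atBot N, ordConnected_Iic⟩
  ends := by
    intro P Q R hP hQ hR
    obtain ⟨t3, h3, p3⟩ := (hR.and_eventually (eventually_lt_atBot (-1))).exists
    obtain ⟨t2, h2, p2⟩ := (hQ.and_eventually (eventually_lt_atBot (t3-1))).exists
    obtain ⟨t1, h1, p1⟩ := (hP.and_eventually (eventually_lt_atBot (t2-1))).exists
    exact ⟨t1, t2, t3, by linarith, by linarith, fun t ht => by have := ht.2; simp only [mem_Iio]; linarith, h1, h2, h3⟩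

section
variable {f : E3 → E3} {H : E3 → ℝ} {γ : ℝ → E3} {l : Filter ℝ} {A : Set ℝ}

lemma Traj.neg (T : Traj f γ l A) : Traj (fun x => - f (-x)) (fun t => - γ t) l A :=
  ⟨T.sol.neg, T.op, T.oc, T.mem, T.shift, T.ends, T.basis⟩

lemma LimS.neg {y : E3} (hy : y ∈ LimS γ l) : -y ∈ LimS (fun t => - γ t) l := by
  have : MapClusterPt (-y) l (fun t => - γ t) := MapClusterPt.continuousAt_comp (f := fun x : E3 => -x) continuous_neg.continuousAt hy
  exact this

lemma sol_H_const (hH : FInt f H) {s : Set ℝ} (hs : IsOpen s) (hc : OrdConnected s) (hγ : Sol f γ s) {t t' : ℝ}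
    (ht : t ∈ s) (ht' : t' ∈ s) : H (γ t) = H (γ t') := by
  have hd : ∀ t ∈ s, HasDerivAt (fun t => H (γ t)) 0 t := by
    intro t ht
    have := (hH.diff (γ t)).hasFDerivAt.comp_hasDerivAt t (hγ t ht)
    rw [hH.inv] at this; exact this
  exact hs.is_const_of_deriv_eq_zero hc.isPreconnected (fun t ht => (hd t ht).differentiableAt.differentiableWithinAt)
    (fun t ht => (hd t ht).deriv) ht ht'

lemma LimS_H (T : Traj f γ l A) (hH : FInt f H) {y : E3} (hy : y ∈ LimS γ l) {t : ℝ} (ht : t ∈ A) :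
    H (γ t) = H y := by
  by_contra hne
  have h1 : ∀ᶠ x in 𝓝 y, H x ≠ H (γ t) := hH.smooth.continuous.continuousAt.eventually_ne (Ne.symm hne)
  obtain ⟨t', h2, h3⟩ := ((LimS.freq hy h1).and_eventually T.mem).exists
  exact h2 (sol_H_const hH T.op T.oc T.sol h3 ht)

lemma LimS_flow (T : Traj f γ l A) (hf : CoopSys f) {p : E3} (hp : p ∈ LimS γ l) :
    ∃ ε > 0, ∃ x : ℝ → E3, x 0 = p ∧ Sol f x (Icc (-ε) ε) ∧ ∀ h ∈ Icc (-ε) ε, x h ∈ LimS γ l := by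
  obtain ⟨R, hR, ε, hε, Φ, h1, h2⟩ := local_flow hf p
  have hpR : p ∈ Metric.closedBall p R := Metric.mem_closedBall_self hR.le
  refine ⟨ε, hε, fun t => Φ (p, t), (h1 p hpR).1, (h1 p hpR).2, fun h hh => ?_⟩
  have hA : ∀ᶠ t in l, Icc (t - ε) (t + ε) ⊆ A := by
    filter_upwards [(T.shift (-ε)).eventually T.mem, (T.shift ε).eventually T.mem] with t ht1 ht2
    exact T.oc.out ht1 ht2
  refine mapClusterPt_iff_frequently.2 fun U hU => ?_
  have hc : ContinuousWithinAt (fun y => Φ (y, h)) (Metric.closedBall p R) p := by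
    have := h2 (p, h) ⟨hpR, hh⟩
    exact this.comp (f := fun y => (y, h)) (by fun_prop) (fun y hy => ⟨hy, hh⟩)
  have hc' : ContinuousAt (fun y => Φ (y, h)) p := hc.continuousAt (Metric.closedBall_mem_nhds p hR)
  have hfr := (LimS.freq hp ((hc'.eventually hU).and (Metric.closedBall_mem_nhds p hR))).and_eventually hA
  refine (T.shift h).frequently (hfr.mono ?_)
  rintro t ⟨⟨ht1, ht2⟩, ht3⟩
  have := sol_unique hf (x := fun s => Φ (γ t, s)) (y := fun s => γ (s + t)) (h1 _ ht2).2
    (T.sol.shift t fun s hs => ht3 ⟨by linarith [hs.1], by linarith [hs.2]⟩) (t0 := 0) ⟨by linarith, hε⟩ (by simp [(h1 _ ht2).1]) hh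
  simp only at this
  rw [add_comm, ← this]; exact ht1

lemma no_ll (T : Traj f γ l A) (hf : CoopSys f) {x y : E3} (hx : x ∈ LimS γ l) (hy : y ∈ LimS γ l)
    (h : strLt x y) : False := by
  have := eventually_strLt (g := fun p : E3 × E3 => p.1) (k := fun p : E3 × E3 => p.2) (x := (x, y))
    continuousAt_fst continuousAt_snd h
  rw [nhds_prod_eq] at this
  obtain ⟨U, hU, V, hV, hUV⟩ := eventually_prod_iff.1 this
  obtain ⟨t1, t2, t3, h12, h23, hA, p1, p2, p3⟩ := T.ends _ _ _ (LimS.freq hx hU) (LimS.freq hy hV) (LimS.freq hx hU)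
  exact peak hf (T.sol.mono ((Icc_subset_Icc (by linarith) (by linarith)).trans hA)) (by linarith : t1 < t2) (by linarith : t2 < t3) (hUV p1 p2)
    (strLt.lt (hUV p3 p2))

lemma strictMono_of_vel {f : E3 → E3} {x : ℝ → E3} {a b : ℝ} (hab : a < b) (hx : Sol f x (Icc a b))
    (h : ∀ t ∈ Ioc a b, ∀ i, 0 < f (x t) i) : strLt (x a) (x b) := by
  intro i
  have : StrictMonoOn (fun t => x t i) (Icc a b) := by
    refine strictMonoOn_of_deriv_pos (convex_Icc a b) ?_ ?_
    · exact fun t ht => ((continuous_apply i).continuousAt.comp (hx t ht).continuousAt).continuousWithinAt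
    · intro t ht
      rw [interior_Icc] at ht
      rw [(hasDerivAt_pi.1 (hx t (Ioo_subset_Icc_self ht)) i).deriv]
      exact h t (Ioo_subset_Ioc_self ht) i
  exact this ⟨le_rfl, hab.le⟩ ⟨hab.le, le_rfl⟩ hab

lemma LimS_nonneg (T : Traj f γ l A) (hf : CoopSys f) {q : E3} (hq : q ∈ LimS γ l) (h : 0 ≤ f q) : f q = 0 := by
  by_contra hne
  obtain ⟨ε, hε, x, hx0, hx, hL⟩ := LimS_flow T hf hq
  have hx' : Sol f x (Icc 0 ε) := hx.mono (Icc_subset_Icc (by linarith) le_rfl)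
  have := vel_pos hf hx' (by rw [hx0]; exact h) (by rw [hx0]; exact hne)
  exact no_ll T hf (hL 0 ⟨by linarith, hε.le⟩) (hL ε ⟨by linarith, le_rfl⟩) (strictMono_of_vel hε hx' this)

lemma LimS_nonpos (T : Traj f γ l A) (hf : CoopSys f) {q : E3} (hq : q ∈ LimS γ l) (h : f q ≤ 0) : f q = 0 := by
  have := LimS_nonneg T.neg hf.neg (LimS.neg hq) (by simpa using h)
  simpa using this

lemma sol_const {f : E3 → E3} {z : E3} (hz : f z = 0) (s : Set ℝ) : Sol f (fun _ => z) s := fun t _ => by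
  simp only [hz]; exact hasDerivAt_const t z

lemma LimS_ge (T : Traj f γ l A) (hf : CoopSys f) {z : E3} (hz : f z = 0) (hzL : z ∈ LimS γ l) (h : ∃ᶠ t in l, z ≤ γ t)
    {q : E3} (hq : q ∈ LimS γ l) : q = z := by
  have hge : z ≤ q := by
    by_contra hn
    have hev : ∀ᶠ x in 𝓝 q, ¬ z ≤ x := isClosed_Ici.isOpen_compl.mem_nhds hn
    obtain ⟨t1, t2, t3, h12, h23, hA, p1, p2, p3⟩ := T.ends _ _ _ h (LimS.freq hq hev) h
    exact p2 (sm_weak hf (sol_const hz _) (T.sol.mono ((Icc_subset_Icc (by linarith) (by linarith)).trans hA)) p1 t2 (⟨by linarith, le_rfl⟩ : t2 ∈ Icc t1 t2))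
  by_contra hne
  obtain ⟨ε, hε, x, hx0, hx, hL⟩ := LimS_flow T hf hq
  have := sm_strict hf (sol_const hz _) (hx.mono (Icc_subset_Icc (by linarith) le_rfl)) (a := 0) (b := ε)
    (by rw [hx0]; exact hge) (by rw [hx0]; exact Ne.symm hne) ε ⟨hε, le_rfl⟩
  exact no_ll T hf hzL (hL ε ⟨by linarith, le_rfl⟩) this

lemma LimS_le (T : Traj f γ l A) (hf : CoopSys f) {z : E3} (hz : f z = 0) (hzL : z ∈ LimS γ l) (h : ∃ᶠ t in l, γ t ≤ z)
    {q : E3} (hq : q ∈ LimS γ l) : q = z := by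
  have := LimS_ge T.neg hf.neg (z := -z) (by simpa using hz) (LimS.neg hzL) (by simpa using h) (LimS.neg hq)
  simpa using this
end


def dmax (u c u' : ℝ) : ℝ := if c < u then u' else if u < c then 0 else max u' 0

lemma hasDeriv_max {u : ℝ → ℝ} {u' c t : ℝ} (h : HasDerivAt u u' t) :
    HasDerivWithinAt (fun s => max (u s) c) (dmax (u t) c u') (Ici t) t := by
  unfold dmax
  rcases lt_trichotomy (u t) c with hc | hc | hc
  · rw [if_neg (not_lt.2 hc.le), if_pos hc]
    have : (fun s => max (u s) c) =ᶠ[𝓝 t] fun _ => c := by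
      filter_upwards [h.continuousAt.eventually_lt continuousAt_const hc] with s hs
      exact max_eq_right hs.le
    exact ((hasDerivAt_const t c).congr_of_eventuallyEq this).hasDerivWithinAt
  · rw [if_neg (not_lt.2 hc.le), if_neg (not_lt.2 hc.ge)]
    rw [← hasDerivWithinAt_Ioi_iff_Ici, hasDerivWithinAt_iff_tendsto_slope' (by simp)]
    have h1 := (hasDerivWithinAt_iff_tendsto_slope' (by simp)).1 (h.hasDerivWithinAt (s := Ioi t))
    have h2 := h1.max (tendsto_const_nhds (x := (0:ℝ)))
    refine h2.congr' ?_
    filter_upwards [self_mem_nhdsWithin] with s hs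
    have hs' : 0 < s - t := sub_pos.2 hs
    simp only [slope_def_field, hc, max_self]
    rcases le_total (u s) c with h | h
    · rw [max_eq_right h, max_eq_right (div_nonpos_of_nonpos_of_nonneg (by linarith) hs'.le)]; simp
    · rw [max_eq_left h, max_eq_left (div_nonneg (by linarith) hs'.le)]
  · rw [if_pos hc]
    have : (fun s => max (u s) c) =ᶠ[𝓝 t] u := by
      filter_upwards [continuousAt_const.eventually_lt h.continuousAt hc] with s hs
      exact max_eq_left hs.le
    exact (h.congr_of_eventuallyEq this).hasDerivWithinAt

lemma anti_right {F F' : ℝ → ℝ} {a b : ℝ} (hab : a ≤ b) (hc : ContinuousOn F (Icc a b))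
    (hd : ∀ t ∈ Ico a b, HasDerivWithinAt F (F' t) (Ici t) t) (h : ∀ t ∈ Ico a b, F' t ≤ 0) : F b ≤ F a := by
  exact image_le_of_deriv_right_le_deriv_boundary hc hd (B := fun _ => F a) (B' := fun _ => 0) le_rfl continuousOn_const
    (fun t _ => hasDerivWithinAt_const _ _ _) h ⟨hab, le_rfl⟩

lemma kamke {f : E3 → E3} (hf : CoopSys f) {x y : E3} (hxy : x ≤ y) {i : Fin 3} (hi : x i = y i) : f x i ≤ f y i := by
  obtain ⟨ξ, _, h⟩ := row_mvt hf.diff x y i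
  rw [← sub_nonneg, h]
  refine Finset.sum_nonneg fun j _ => ?_
  by_cases hj : i = j
  · subst hj; simp [hi]
  · exact mul_nonneg (hf.coop ξ i j hj) (sub_nonneg.2 (hxy j))

def posp (u : E3) : E3 := fun i => max (u i) 0

lemma rowA_pos {M : Fin 3 → ℝ} {u : E3} {i : Fin 3} (hc : ∀ j, i ≠ j → 0 ≤ M j) (hi : u i ≤ 0) :
    0 ≤ ∑ j, M j * posp u j := by
  refine Finset.sum_nonneg fun j _ => ?_
  by_cases hj : i = j
  · subst hj; simp [posp, hi]
  · exact mul_nonneg (hc j hj) (le_max_right _ _)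

lemma rowA_diff {M : Fin 3 → ℝ} {u : E3} {i : Fin 3} (hc : ∀ j, i ≠ j → 0 ≤ M j) (hi : 0 ≤ u i) :
    ∑ j, M j * u j ≤ ∑ j, M j * posp u j := by
  refine Finset.sum_le_sum fun j _ => ?_
  by_cases hj : i = j
  · subst hj; simp [posp, hi]
  · exact mul_le_mul_of_nonneg_left (le_max_left _ _) (hc j hj)

lemma dmax_le {M : Fin 3 → ℝ} {u : E3} {i : Fin 3} (hc : ∀ j, i ≠ j → 0 ≤ M j) :
    dmax (u i) 0 (∑ j, M j * u j) ≤ ∑ j, M j * posp u j := by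
  unfold dmax
  split_ifs with h1 h2
  · exact rowA_diff hc h1.le
  · exact rowA_pos hc h2.le
  · exact max_le (rowA_diff hc (not_lt.1 h2)) (rowA_pos hc (not_lt.1 h1))

lemma strict_L {M : Fin 3 → Fin 3 → ℝ} (hc : ∀ i j, i ≠ j → 0 ≤ M i j) (hM : matIrred M) {w u : E3}
    (hw : ∀ i, 0 < w i) (hwu : ∑ i, w i * u i = 0) (hu : u ≠ 0)
    (h : ∑ i, w i * (dmax (u i) 0 (∑ j, M i j * u j) - ∑ j, M i j * posp u j) = 0) : False := by
  have hle : ∀ i, dmax (u i) 0 (∑ j, M i j * u j) - ∑ j, M i j * posp u j ≤ 0 := fun i => sub_nonpos.2 (dmax_le (hc i))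
  have hz : ∀ i, dmax (u i) 0 (∑ j, M i j * u j) = ∑ j, M i j * posp u j := by
    intro i
    have h0 := (Finset.sum_eq_zero_iff_of_nonpos (fun i _ => mul_nonpos_of_nonneg_of_nonpos (hw i).le (hle i))).1 h i (Finset.mem_univ i)
    have := (mul_eq_zero.1 h0).resolve_left (hw i).ne'
    linarith
  -- signs
  have hpos : ∃ i, 0 < u i := by
    by_contra hn
    push Not at hn
    have h0 := (Finset.sum_eq_zero_iff_of_nonpos (fun i _ => mul_nonpos_of_nonneg_of_nonpos (hw i).le (hn i))).1 hwu
    exact hu (by ext i; exact (mul_eq_zero.1 (h0 i (Finset.mem_univ i))).resolve_left (hw i).ne')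
  have hneg : ∃ i, u i < 0 := by
    by_contra hn
    push Not at hn
    have h0 := (Finset.sum_eq_zero_iff_of_nonneg (fun i _ => mul_nonneg (hw i).le (hn i))).1 hwu
    exact hu (by ext i; exact (mul_eq_zero.1 (h0 i (Finset.mem_univ i))).resolve_left (hw i).ne')
  -- vanishing from P = 0
  have hP : ∀ i, u i ≤ 0 → ∑ j, M i j * posp u j = 0 → ∀ j, 0 < u j → M i j = 0 := by
    intro i hi h0 j hj
    have h1 := (Finset.sum_eq_zero_iff_of_nonneg (fun k _ => by
      by_cases hk : i = k
      · subst hk; simp [posp, hi]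
      · exact mul_nonneg (hc i k hk) (le_max_right _ _))).1 h0 j (Finset.mem_univ j)
    refine (mul_eq_zero.1 h1).resolve_right ?_
    simp [posp, max_eq_left hj.le, hj.ne']
  have hN : ∀ i, 0 ≤ u i → ∑ j, M i j * u j = ∑ j, M i j * posp u j → ∀ j, u j < 0 → M i j = 0 := by
    intro i hi h0 j hj
    have h1 := (Finset.sum_eq_sum_iff_of_le (fun k _ => by
      by_cases hk : i = k
      · subst hk; simp [posp, hi]
      · exact mul_le_mul_of_nonneg_left (le_max_left _ _) (hc i k hk))).1 h0 j (Finset.mem_univ j)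
    have h2 : posp u j = 0 := by simp [posp, hj.le]
    rw [h2, mul_zero] at h1
    exact (mul_eq_zero.1 h1).resolve_right hj.ne
  have hplus : ∀ i, 0 < u i → ∀ j, u j < 0 → M i j = 0 := fun i hi => hN i hi.le (by
    have := hz i; rwa [dmax, if_pos hi] at this)
  have hminus : ∀ i, u i < 0 → ∀ j, 0 < u j → M i j = 0 := fun i hi => hP i hi.le (by
    have := hz i; rw [dmax, if_neg (not_lt.2 hi.le), if_pos hi] at this; exact this.symm)
  obtain ⟨a, ha⟩ := hpos
  obtain ⟨b, hb⟩ := hneg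
  by_cases hS : ∀ i, u i = 0 → ∑ j, M i j * u j = ∑ j, M i j * posp u j
  · obtain ⟨i, hi, j, hj, hij⟩ := hM {i | 0 ≤ u i} ⟨a, ha.le⟩ (fun h => by
      have : b ∈ {i | 0 ≤ u i} := h ▸ mem_univ b
      exact absurd hb (not_lt.2 this))
    have hj' : u j < 0 := not_le.1 hj
    rcases (show 0 ≤ u i from hi).lt_or_eq with h | h
    · exact hij (hplus i h j hj')
    · exact hij (hN i hi (hS i h.symm) j hj')
  · push Not at hS
    obtain ⟨m, hm, hmn⟩ := hS
    have hPm : ∑ j, M m j * posp u j = 0 := by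
      have := hz m
      rw [dmax, if_neg (by rw [hm]; exact lt_irrefl _), if_neg (by rw [hm]; exact lt_irrefl _)] at this
      rcases max_choice (∑ j, M m j * u j) 0 with h | h
      · rw [h] at this; exact absurd this hmn
      · rw [h] at this; exact this.symm
    obtain ⟨i, hi, j, hj, hij⟩ := hM {i | u i ≤ 0} ⟨b, hb.le⟩ (fun h => by
      have : a ∈ {i | u i ≤ 0} := h ▸ mem_univ a
      exact absurd ha (not_lt.2 this))
    have hj' : 0 < u j := not_le.1 hj
    rcases (show u i ≤ 0 from hi).lt_or_eq with h | h
    · exact hij (hminus i h j hj')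
    · have : i = m := by
        by_contra hne
        have h1 : a ≠ b := fun e => by rw [e] at ha; linarith
        have h2 : a ≠ i := fun e => by rw [e] at ha; linarith
        have h3 : a ≠ m := fun e => by rw [e] at ha; linarith
        have h4 : b ≠ i := fun e => by rw [e] at hb; linarith
        have h5 : b ≠ m := fun e => by rw [e] at hb; linarith
        omega
      subst this
      exact hij (hP i hi hPm j hj')

lemma first_exit {g : ℝ → ℝ} {a b r : ℝ} (hab : a ≤ b) (hg : ContinuousOn g (Icc a b)) (h1 : g a < r) (h2 : r ≤ g b) :
    ∃ t ∈ Ioc a b, g t = r ∧ ∀ s ∈ Ico a t, g s < r := by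
  have hcl : IsCompact (Icc a b ∩ g ⁻¹' Ici r) :=
    (hg.preimage_isClosed_of_isClosed isClosed_Icc isClosed_Ici) |> fun h => isCompact_Icc.of_isClosed_subset h inter_subset_left
  obtain ⟨t, ht, hmin⟩ := hcl.exists_isLeast ⟨b, ⟨hab, le_rfl⟩, h2⟩
  have hlt : ∀ s ∈ Ico a t, g s < r := by
    intro s hs
    by_contra hn
    have := hmin ⟨⟨hs.1, hs.2.le.trans ht.1.2⟩, not_lt.1 hn⟩
    linarith [hs.2]
  have hat : a ≠ t := fun e => by have := ht.2; rw [← e] at this; exact absurd h1 (not_lt.2 this)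
  refine ⟨t, ⟨lt_of_le_of_ne ht.1.1 hat, ht.1.2⟩, ?_, hlt⟩
  obtain ⟨s, hs, hgs⟩ := intermediate_value_Icc ht.1.1 (hg.mono (Icc_subset_Icc le_rfl ht.1.2)) ⟨h1.le, ht.2⟩
  rcases hs.2.lt_or_eq with h | h
  · exact absurd (hlt s ⟨hs.1, h⟩) (by rw [hgs]; exact lt_irrefl _)
  · rw [← h]; exact hgs

section
variable {f : E3 → E3} {H : E3 → ℝ} {γ : ℝ → E3} {l : Filter ℝ} {A : Set ℝ}

def Lfun (f : E3 → E3) (H : E3 → ℝ) (x : E3) : ℝ := ∑ i, gradv H x i * max (f x i) 0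

lemma Lfun_cont (hf : CoopSys f) (hH : FInt f H) : Continuous (Lfun f H) := by
  refine continuous_finsetSum _ fun i _ => ?_
  have h1 : Continuous fun x => gradv H x i := (continuous_apply i).comp (gradv_cont hH.smooth)
  have h2 : Continuous fun x => f x i := (continuous_apply i).comp hf.smooth.continuous
  exact h1.mul (h2.max continuous_const)

lemma Lfun_deriv (hf : CoopSys f) (hH : FInt f H) (hA : IsOpen A) (hγ : Sol f γ A) {t : ℝ} (ht : t ∈ A) :
    HasDerivWithinAt (fun t => Lfun f H (γ t)) (∑ i, gradv H (γ t) i * (dmax (f (γ t) i) 0 (∑ j, jacMat f (γ t) i j * f (γ t) j)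
      - ∑ j, jacMat f (γ t) i j * posp (f (γ t)) j)) (Ici t) t := by
  have h1 : HasDerivWithinAt (fun t => Lfun f H (γ t)) (∑ i, (-(fderiv ℝ H (γ t) (fderiv ℝ f (γ t) (Pi.single i 1))) * max (f (γ t) i) 0 +
      gradv H (γ t) i * dmax (f (γ t) i) 0 (∑ j, jacMat f (γ t) i j * f (γ t) j))) (Ici t) t := by
    refine HasDerivWithinAt.fun_sum fun i _ => ?_
    have a1 := (adjoint_deriv hf hH hA hγ (Pi.single i 1) ht).hasDerivWithinAt (s := Ici t)
    have a2 := hasDeriv_max (c := 0) (hasDerivAt_pi.1 (vel_deriv hf (hγ t ht)) i)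
    exact a1.mul a2
  refine h1.congr_deriv ?_
  have h2 : ∀ i, fderiv ℝ H (γ t) (fderiv ℝ f (γ t) (Pi.single i 1)) = ∑ j, gradv H (γ t) j * jacMat f (γ t) j i :=
    fun i => gradv_apply H _ _
  simp only [h2, Fin.sum_univ_three, posp]
  ring

lemma w_pos_LimS (T : Traj f γ l A) (hf : CoopSys f) (hH : FInt f H) {q : E3} (hq : q ∈ LimS γ l) (hw : 0 ≤ gradv H q) :
    (∃ᶠ t in l, ∀ i, 0 < gradv H (γ t) i) ∧ ∀ y ∈ LimS γ l, ∀ i, 0 < gradv H y i := by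
  have key : ∀ y ∈ LimS γ l, 0 ≤ gradv H y → ∃ ε > 0, ∃ x : ℝ → E3, x 0 = y ∧ (∀ t ∈ Ioo (-ε) ε, x t ∈ LimS γ l) ∧ Sol f x (Ioo (-ε) ε) := by
    intro y hy _
    obtain ⟨ε, hε, x, hx0, hx, hL⟩ := LimS_flow T hf hy
    exact ⟨ε, hε, x, hx0, fun t ht => hL t (Ioo_subset_Icc_self ht), hx.mono Ioo_subset_Icc_self⟩
  have hfr : ∃ᶠ t in l, ∀ i, 0 < gradv H (γ t) i := by
    obtain ⟨ε, hε, x, hx0, hL, hx⟩ := key q hq hw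
    have h1 := grad_back hf hH isOpen_Ioo hx (a := -(ε/2)) (b := 0) (fun t ht => ⟨by linarith [ht.1], by linarith [ht.2]⟩)
      (by rw [hx0]; exact hw) (-(ε/2)) ⟨le_rfl, by linarith⟩
    refine LimS.freq (P := fun x => ∀ i, 0 < gradv H x i) (hL (-(ε/2)) ⟨by linarith, by linarith⟩) ?_
    rw [eventually_all]
    intro i
    exact continuousAt_const.eventually_lt ((continuous_apply i).comp (gradv_cont hH.smooth)).continuousAt (h1 i)
  have hge : ∀ y ∈ LimS γ l, 0 ≤ gradv H y := by
    intro y hy i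
    by_contra hn
    push Not at hn
    have hev : ∀ᶠ x in 𝓝 y, gradv H x i < 0 :=
      ((continuous_apply i).comp (gradv_cont hH.smooth)).continuousAt.eventually_lt continuousAt_const hn
    obtain ⟨t1, t2, t3, h12, h23, hA, p1, p2, p3⟩ := T.ends _ _ _ hfr (LimS.freq hy hev) hfr
    have := grad_back hf hH T.op T.sol (a := t2) (b := t3) ((Icc_subset_Icc (by linarith) (by linarith)).trans hA)
      (fun i => (p3 i).le) t2 ⟨le_rfl, by linarith⟩ i
    linarith
  refine ⟨hfr, fun y hy => ?_⟩
  obtain ⟨ε, hε, x, hx0, hx, hL⟩ := LimS_flow T hf hy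
  have h1 := grad_back hf hH isOpen_Ioo (hx.mono Ioo_subset_Icc_self) (a := 0) (b := ε/2) (fun t ht => ⟨by linarith [ht.1], by linarith [ht.2]⟩)
      (hge _ (hL _ ⟨by linarith, by linarith⟩)) 0 ⟨le_rfl, by linarith⟩
  rwa [hx0] at h1

lemma caseI_eq (T : Traj f γ l A) (hf : CoopSys f) (hH : FInt f H) {q : E3} (hq : q ∈ LimS γ l) (hw : 0 ≤ gradv H q)
    {p : E3} (hp : p ∈ LimS γ l) : f p = 0 := by
  obtain ⟨hfr, hpos⟩ := w_pos_LimS T hf hH hq hw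
  have hLe : ∀ x ∈ LimS γ l, ∀ y ∈ LimS γ l, Lfun f H y ≤ Lfun f H x := by
    intro x hx y hy
    by_contra hn
    push Not at hn
    obtain ⟨m, hm1, hm2⟩ := exists_between hn
    have hc := Lfun_cont hf hH
    obtain ⟨t1, t2, t3, h12, h23, hA, p1, p2, p3⟩ := T.ends _ _ _ (LimS.freq hx (hc.continuousAt.eventually_lt continuousAt_const hm1))
      (LimS.freq hy (continuousAt_const.eventually_lt hc.continuousAt hm2)) hfr
    have hw := grad_back hf hH T.op T.sol (a := t1) (b := t3) ((Icc_subset_Icc (by linarith) (by linarith)).trans hA)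
      (fun i => (p3 i).le)
    have hsub : ∀ t ∈ Icc t1 t2, t ∈ A := fun t ht => hA ⟨by linarith [ht.1], by linarith [ht.2]⟩
    have := anti_right (F := fun t => Lfun f H (γ t)) (a := t1) (b := t2) (by linarith)
      (hc.comp_continuousOn (T.sol.continuousOn.mono hsub))
      (fun t ht => Lfun_deriv hf hH T.op T.sol (hsub t (Ico_subset_Icc_self ht)))
      (fun t ht => Finset.sum_nonpos fun i _ => mul_nonpos_of_nonneg_of_nonpos
        (hw t ⟨ht.1, by linarith [ht.2]⟩ i).le (sub_nonpos.2 (dmax_le (hf.coop _ i))))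
    linarith
  obtain ⟨ε, hε, x, hx0, hx, hL⟩ := LimS_flow T hf hp
  have hd := Lfun_deriv hf hH isOpen_Ioo (hx.mono Ioo_subset_Icc_self) (t := 0) ⟨by linarith, hε⟩
  have h0 : (0:ℝ) ∈ Icc (-ε) ε := ⟨by linarith, hε.le⟩
  have heq : (fun t => Lfun f H (x t)) =ᶠ[𝓝[≥] 0] fun _ => Lfun f H (x 0) := by
    filter_upwards [Icc_mem_nhdsGE hε] with t ht
    have ht' : t ∈ Icc (-ε) ε := ⟨by linarith [ht.1], ht.2⟩
    exact le_antisymm (hLe _ (hL 0 h0) _ (hL t ht')) (hLe _ (hL t ht') _ (hL 0 h0))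
  have hd2 := (hasDerivWithinAt_const (0:ℝ) (Ici 0) (Lfun f H (x 0))).congr_of_eventuallyEq heq rfl
  have e := (uniqueDiffWithinAt_Ici (0:ℝ)).eq_deriv _ hd hd2
  rw [hx0] at e
  by_contra hne
  refine strict_L (hf.coop p) (hf.irr p) (hpos p hp) ?_ hne e
  rw [← gradv_apply]; exact hH.inv p

lemma H_strict (hH : FInt f H) {p : E3} {ρ : ℝ} (hw : ∀ x ∈ Metric.closedBall p ρ, ∀ i, 0 < gradv H x i)
    {x y : E3} (hx : x ∈ Metric.closedBall p ρ) (hy : y ∈ Metric.closedBall p ρ) (hxy : x ≤ y) (hne : x ≠ y) : H x < H y := by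
  obtain ⟨z, hz, h⟩ := domain_mvt (f := H) (s := univ) (x := x) (y := y) (f' := fun z => fderiv ℝ H z)
    (fun z _ => (hH.diff z).hasFDerivAt.hasFDerivWithinAt) convex_univ (mem_univ _) (mem_univ _)
  rw [← sub_pos, h, gradv_apply]
  have hzB := (convex_closedBall p ρ).segment_subset hx hy hz
  obtain ⟨i, hi⟩ := Function.ne_iff.1 hne
  refine Finset.sum_pos' (fun j _ => mul_nonneg (hw z hzB j).le (sub_nonneg.2 (hxy j))) ⟨i, Finset.mem_univ i, ?_⟩
  exact mul_pos (hw z hzB i) (sub_pos.2 (lt_of_le_of_ne (hxy i) hi))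

lemma caseI (T : Traj f γ l A) (hf : CoopSys f) (hH : FInt f H) {q : E3} (hq : q ∈ LimS γ l) (hw : 0 ≤ gradv H q)
    {p p' : E3} (hp : p ∈ LimS γ l) (hp' : p' ∈ LimS γ l) : p = p' := by
  by_contra hne
  have hfp := caseI_eq T hf hH hq hw hp
  obtain ⟨hfr, hpos⟩ := w_pos_LimS T hf hH hq hw
  have hev : ∀ᶠ x in 𝓝 p, ∀ i, 0 < gradv H x i := by
    rw [eventually_all]
    exact fun i => continuousAt_const.eventually_lt ((continuous_apply i).comp (gradv_cont hH.smooth)).continuousAt (hpos p hp i)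
  obtain ⟨ρ0, hρ0, hB0⟩ := Metric.nhds_basis_closedBall.eventually_iff.1 hev
  set ρ := min ρ0 (dist p' p / 2)
  have hd : 0 < dist p' p := dist_pos.2 (Ne.symm hne)
  have hρ : 0 < ρ := lt_min hρ0 (by linarith)
  have hB : ∀ x ∈ Metric.closedBall p ρ, ∀ i, 0 < gradv H x i := fun x hx =>
    hB0 (Metric.closedBall_subset_closedBall (min_le_left _ _) hx)
  have hρp : ρ < dist p' p := lt_of_le_of_lt (min_le_right _ _) (by linarith)
  have hsup : ∀ x ∈ Metric.closedBall p ρ, x ⊔ p ∈ Metric.closedBall p ρ := by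
    intro x hx
    rw [Metric.mem_closedBall] at hx ⊢
    rw [dist_pi_le_iff hρ.le] at hx ⊢
    intro i
    refine le_trans ?_ (hx i)
    rw [Real.dist_eq, Real.dist_eq, Pi.sup_apply]
    rcases le_total (x i) (p i) with h | h
    · rw [sup_eq_right.2 h]; simp
    · rw [sup_eq_left.2 h]
  have hpB : p ∈ Metric.closedBall p ρ := Metric.mem_closedBall_self hρ.le
  have hVc : Continuous fun x : E3 => H (x ⊔ p) := hH.smooth.continuous.comp (continuous_pi fun i => (continuous_apply i).max continuous_const)
  have hVpos : ∀ x ∈ Metric.sphere p ρ ∩ {x | H x = H p}, H p < H (x ⊔ p) := by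
    rintro x ⟨hx, hHx⟩
    have hxB := Metric.sphere_subset_closedBall hx
    refine H_strict hH hB hpB (hsup x hxB) le_sup_right fun h => ?_
    have hle : x ≤ p := by rw [h]; exact le_sup_left
    have hxp : x ≠ p := fun e => by rw [e, Metric.mem_sphere, dist_self] at hx; linarith
    have := H_strict hH hB hxB hpB hle hxp
    rw [hHx] at this; exact lt_irrefl _ this
  obtain ⟨m, hm1, hm2⟩ : ∃ m, H p < m ∧ ∀ x ∈ Metric.sphere p ρ ∩ {x | H x = H p}, m ≤ H (x ⊔ p) := by
    rcases (Metric.sphere p ρ ∩ {x | H x = H p}).eq_empty_or_nonempty with h | h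
    · exact ⟨H p + 1, by linarith, fun x hx => by rw [h] at hx; exact absurd hx (notMem_empty x)⟩
    · have hcpt : IsCompact (Metric.sphere p ρ ∩ {x | H x = H p}) :=
        (isCompact_sphere p ρ).inter_right (isClosed_eq hH.smooth.continuous continuous_const)
      obtain ⟨x, hx, hmin⟩ := hcpt.exists_isMinOn h hVc.continuousOn
      exact ⟨_, hVpos x hx, fun y hy => hmin hy⟩
  have e1 : ∀ᶠ x in 𝓝 p, H (x ⊔ p) < m ∧ dist x p < ρ := by
    refine (hVc.continuousAt.eventually_lt continuousAt_const (by simpa using hm1)).and (Metric.ball_mem_nhds p hρ)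
  have e2 : ∀ᶠ x in 𝓝 p', ρ < dist x p :=
    continuousAt_const.eventually_lt (continuous_id.dist continuous_const).continuousAt hρp
  obtain ⟨t1, t2, t3, h12, h23, hA, p1, p2, p3⟩ := T.ends _ _ _ (LimS.freq hp e1) (LimS.freq hp' e2) (LimS.freq hp e1)
  have hsub : ∀ t ∈ Icc t1 t2, t ∈ A := fun t ht => hA ⟨by linarith [ht.1], by linarith [ht.2]⟩
  have hcont : ContinuousOn γ (Icc t1 t2) := T.sol.continuousOn.mono hsub
  obtain ⟨t, ht, hgt, hlt⟩ := first_exit (g := fun t => dist (γ t) p) (by linarith : t1 ≤ t2)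
    ((continuous_id.dist continuous_const).comp_continuousOn hcont) p1.2 p2.le
  have hsub' : Icc t1 t ⊆ Icc t1 t2 := Icc_subset_Icc le_rfl ht.2
  have hV : H (γ t ⊔ p) ≤ H (γ t1 ⊔ p) := by
    refine anti_right (F := fun t => H (γ t ⊔ p)) (F' := fun t => fderiv ℝ H (γ t ⊔ p) (fun i => dmax (γ t i) (p i) (f (γ t) i)))
      ht.1.le (hVc.comp_continuousOn (hcont.mono hsub')) ?_ ?_
    · intro s hs
      have hsA := hsub s (hsub' (Ico_subset_Icc_self hs))
      have hd : HasDerivWithinAt (fun t => γ t ⊔ p) (fun i => dmax (γ s i) (p i) (f (γ s) i)) (Ici s) s := by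
        rw [hasDerivWithinAt_pi]
        intro i
        exact hasDeriv_max (hasDerivAt_pi.1 (T.sol s hsA) i)
      exact (hH.diff (γ s ⊔ p)).hasFDerivAt.comp_hasDerivWithinAt s hd
    · intro s hs
      have hsB : γ s ∈ Metric.closedBall p ρ := (hlt s hs).le
      rw [← hH.inv (γ s ⊔ p), gradv_apply, gradv_apply]
      refine Finset.sum_le_sum fun i _ => mul_le_mul_of_nonneg_left ?_ (hB _ (hsup _ hsB) i).le
      have a1 : p i ≤ γ s i → f (γ s) i ≤ f (γ s ⊔ p) i := fun h =>
        kamke hf le_sup_left (by rw [Pi.sup_apply, sup_eq_left.2 h])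
      have a2 : γ s i ≤ p i → 0 ≤ f (γ s ⊔ p) i := fun h => by
        have := kamke hf (le_sup_right : p ≤ γ s ⊔ p) (i := i) (by rw [Pi.sup_apply, sup_eq_right.2 h])
        rwa [hfp] at this
      unfold dmax
      split_ifs with h1 h2
      · exact a1 h1.le
      · exact a2 h2.le
      · exact max_le (a1 (not_lt.1 h2)) (a2 (not_lt.1 h1))
  have hHt : H (γ t) = H p := LimS_H T hH hp (hsub t ⟨ht.1.le, ht.2⟩)
  have := hm2 (γ t) ⟨hgt, hHt⟩
  linarith [p1.1]
end


/-- logarithmic integral along a curve -/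
def logInt (η η' : ℝ → ℂ) (a b : ℝ) (ξ : ℂ) : ℂ := ∫ t in a..b, η' t / (η t - ξ)

section
variable {η η' : ℝ → ℂ} {a b : ℝ} {ξ : ℂ}

lemma logInt_exp (hab : a ≤ b) (hη : ∀ t ∈ Icc a b, HasDerivAt η (η' t) t) (hc : ContinuousOn η' (Icc a b))
    (hξ : ∀ t ∈ Icc a b, η t ≠ ξ) : Complex.exp (logInt η η' a b ξ) = (η b - ξ) / (η a - ξ) := by
  have hηc : ContinuousOn η (Icc a b) := fun t ht => (hη t ht).continuousAt.continuousWithinAt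
  have hk : ContinuousOn (fun t => η' t / (η t - ξ)) (Icc a b) :=
    hc.div (hηc.sub continuousOn_const) fun t ht => sub_ne_zero.2 (hξ t ht)
  set k : ℝ → ℂ := IccExtend hab ((Icc a b).domRestrict fun t => η' t / (η t - ξ)) with hkdef
  have hkc : Continuous k := (continuousOn_iff_continuous_domRestrict.1 hk).Icc_extend'
  have hkeq : ∀ t ∈ Icc a b, k t = η' t / (η t - ξ) := fun t ht => by rw [hkdef, IccExtend_of_mem _ _ ht]; rfl
  have hI : logInt η η' a b ξ = ∫ t in a..b, k t := by
    refine intervalIntegral.integral_congr fun t ht => ?_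
    rw [uIcc_of_le hab] at ht
    exact (hkeq t ht).symm
  have hd : ∀ t ∈ Icc a b, HasDerivAt (fun t => Complex.exp (-∫ s in a..t, k s) * (η t - ξ)) 0 t := by
    intro t ht
    have h1 : HasDerivAt (fun t => ∫ s in a..t, k s) (k t) t := (hkc.integral_hasStrictDerivAt a t).hasDerivAt
    have h2 := (h1.neg.cexp).mul ((hη t ht).sub_const ξ)
    refine h2.congr_deriv ?_
    have h3 : k t * (η t - ξ) = η' t := by
      rw [hkeq t ht, div_mul_cancel₀ _ (sub_ne_zero.2 (hξ t ht))]
    simp only [Pi.neg_apply]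
    rw [← h3]; ring
  have h := constant_of_has_deriv_right_zero (fun t ht => (hd t ht).continuousAt.continuousWithinAt)
    (fun t ht => (hd t (Ico_subset_Icc_self ht)).hasDerivWithinAt) b ⟨hab, le_rfl⟩
  simp only [intervalIntegral.integral_same, neg_zero, Complex.exp_zero, one_mul] at h
  rw [hI, eq_div_iff (sub_ne_zero.2 (hξ a ⟨le_rfl, hab⟩)), ← h, ← mul_assoc, ← Complex.exp_add]
  simp

lemma logInt_log (hab : a ≤ b) (hη : ∀ t ∈ Icc a b, HasDerivAt η (η' t) t) (hc : ContinuousOn η' (Icc a b))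
    (c : ℂ) (hξ : ∀ t ∈ Icc a b, c * (η t - ξ) ∈ Complex.slitPlane) :
    logInt η η' a b ξ = Complex.log (c * (η b - ξ)) - Complex.log (c * (η a - ξ)) := by
  have hηc : ContinuousOn η (Icc a b) := fun t ht => (hη t ht).continuousAt.continuousWithinAt
  have hne : ∀ t ∈ Icc a b, c * (η t - ξ) ≠ 0 := fun t ht => Complex.slitPlane_ne_zero (hξ t ht)
  have hk : ContinuousOn (fun t => η' t / (η t - ξ)) (Icc a b) :=
    hc.div (hηc.sub continuousOn_const) fun t ht => right_ne_zero_of_mul (hne t ht)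
  unfold logInt
  refine intervalIntegral.integral_eq_sub_of_hasDerivAt (f := fun t => Complex.log (c * (η t - ξ))) ?_ ?_
  · intro t ht
    rw [uIcc_of_le hab] at ht
    have h := (((hη t ht).sub_const ξ).const_mul c).clog_real (hξ t ht)
    refine h.congr_deriv ?_
    rw [mul_div_mul_left _ _ (left_ne_zero_of_mul (hne t ht))]
  · exact ContinuousOn.intervalIntegrable (by rwa [uIcc_of_le hab])

lemma logInt_cont (hab : a ≤ b) (hηc : ContinuousOn η (Icc a b)) (hc : ContinuousOn η' (Icc a b))
    (hξ : ∀ t ∈ Icc a b, η t ≠ ξ) : ContinuousAt (logInt η η' a b) ξ := by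
  obtain ⟨M, hM⟩ := isCompact_Icc.exists_bound_of_continuousOn hc
  have hcl : IsClosed (η '' Icc a b) := (isCompact_Icc.image_of_continuousOn hηc).isClosed
  have hnot : ξ ∈ (η '' Icc a b)ᶜ := by rintro ⟨t, ht, h⟩; exact hξ t ht h
  obtain ⟨d, hd, hball⟩ := Metric.isOpen_iff.1 hcl.isOpen_compl ξ hnot
  have hdist : ∀ x ∈ Metric.ball ξ (d/2), ∀ t ∈ Icc a b, d/2 ≤ ‖η t - x‖ := by
    intro x hx t ht
    by_contra hn
    push Not at hn
    have hin : η t ∈ Metric.ball ξ d → False := fun h => hball h ⟨t, ht, rfl⟩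
    refine hin ?_
    rw [Metric.mem_ball] at hx ⊢
    rw [← dist_eq_norm] at hn
    linarith [dist_triangle (η t) x ξ]
  have hne : ∀ x ∈ Metric.ball ξ (d/2), ∀ t ∈ Icc a b, η t - x ≠ 0 := fun x hx t ht h => by
    have := hdist x hx t ht; rw [h, norm_zero] at this; linarith
  have hkc : ∀ x ∈ Metric.ball ξ (d/2), ContinuousOn (fun t => η' t / (η t - x)) (Icc a b) := fun x hx =>
    hc.div (hηc.sub continuousOn_const) (hne x hx)
  have hBn : ∀ᶠ x in 𝓝 ξ, x ∈ Metric.ball ξ (d/2) := Metric.ball_mem_nhds ξ (by linarith)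
  refine intervalIntegral.continuousAt_of_dominated_interval (bound := fun _ => M / (d/2)) ?_ ?_ ?_ ?_
  · filter_upwards [hBn] with x hx
    have := ((hkc x hx).intervalIntegrable_of_Icc hab (μ := MeasureTheory.volume)).aestronglyMeasurable
    rwa [uIoc_of_le hab]
  · filter_upwards [hBn] with x hx
    refine Eventually.of_forall fun t ht => ?_
    rw [uIoc_of_le hab] at ht
    have ht' := Ioc_subset_Icc_self ht
    rw [norm_div]
    exact div_le_div₀ ((norm_nonneg _).trans (hM t ht')) (hM t ht') (by linarith) (hdist x hx t ht')
  · exact intervalIntegrable_const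
  · refine Eventually.of_forall fun t ht => ?_
    rw [uIoc_of_le hab] at ht
    exact continuousAt_const.div (continuousAt_const.sub continuousAt_id)
      (hne ξ (Metric.mem_ball_self (by linarith)) t (Ioc_subset_Icc_self ht))

lemma logInt_large (hab : a ≤ b) (hηc : ContinuousOn η (Icc a b)) (hc : ContinuousOn η' (Icc a b)) :
    ∃ R, ∀ ξ : ℂ, R ≤ ‖ξ‖ → ‖logInt η η' a b ξ‖ < 1 := by
  obtain ⟨M, hM⟩ := isCompact_Icc.exists_bound_of_continuousOn hc
  obtain ⟨N, hN⟩ := isCompact_Icc.exists_bound_of_continuousOn hηc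
  have hM0 : 0 ≤ M := (norm_nonneg _).trans (hM a ⟨le_rfl, hab⟩)
  set d := M * (b - a) + 1 with hd
  have hd0 : 0 < d := by have := mul_nonneg hM0 (sub_nonneg.2 hab); linarith
  refine ⟨N + d, fun ξ hξ => ?_⟩
  have h : ‖logInt η η' a b ξ‖ ≤ (M / d) * |b - a| := by
    refine intervalIntegral.norm_integral_le_of_norm_le_const fun t ht => ?_
    rw [uIoc_of_le hab] at ht
    have ht' := Ioc_subset_Icc_self ht
    have : d ≤ ‖η t - ξ‖ := by
      have h1 := norm_sub_norm_le ξ (η t)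
      rw [norm_sub_rev] at h1
      linarith [hN t ht']
    rw [norm_div]
    exact div_le_div₀ hM0 (hM t ht') hd0 this
  rw [abs_of_nonneg (sub_nonneg.2 hab)] at h
  refine h.trans_lt ?_
  rw [div_mul_eq_mul_div, div_lt_one hd0]
  linarith
end

lemma exp_one_small {w : ℂ} (h : Complex.exp w = 1) (hw : ‖w‖ < 6) : w = 0 := by
  obtain ⟨n, hn⟩ := Complex.exp_eq_one_iff.1 h
  have hp := Real.pi_gt_three
  have h2 : ‖w‖ = |(n:ℝ)| * (2 * Real.pi) := by
    rw [hn]; simp [abs_of_pos Real.pi_pos]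
  have h3 : |(n:ℝ)| < 1 := by
    by_contra hn'
    push Not at hn'
    nlinarith
  have h4 : n = 0 := by
    have : |n| < 1 := by exact_mod_cast h3
    exact Int.abs_lt_one_iff.1 this
  rw [hn, h4]; simp

lemma log_jump {P : ℂ} (hP : 0 < P.re) : Complex.log (Complex.I * P) - Complex.log (-Complex.I * P) = Real.pi * Complex.I := by
  have hP0 : P ≠ 0 := fun h => by rw [h] at hP; simp at hP
  have h1 : Complex.log (Complex.I * P) = Complex.log Complex.I + Complex.log P := by
    refine Complex.log_mul Complex.I_ne_zero hP0 ?_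
    rw [Complex.arg_I]
    have := abs_lt.1 (Complex.abs_arg_lt_pi_div_two_iff.2 (Or.inl hP))
    exact ⟨by linarith [this.1, Real.pi_pos], by linarith [this.2]⟩
  have h2 : Complex.log (-Complex.I * P) = Complex.log (-Complex.I) + Complex.log P := by
    refine Complex.log_mul (neg_ne_zero.2 Complex.I_ne_zero) hP0 ?_
    rw [Complex.arg_neg_I]
    have := abs_lt.1 (Complex.abs_arg_lt_pi_div_two_iff.2 (Or.inl hP))
    exact ⟨by linarith [this.1], by linarith [this.2, Real.pi_pos]⟩
  rw [h1, h2, Complex.log_I, Complex.log_neg_I]; ring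

lemma wind {η η' : ℝ → ℂ} {a s m b r : ℝ} (has : a < s) (hsm : s < m) (hmb : m ≤ b) (hr : 0 < r)
    (hη : ∀ t ∈ Icc a b, HasDerivAt η (η' t) t) (hc : ContinuousOn η' (Icc a b))
    (hl : ∀ t ∈ Ico a s, (η t).re < (η s).re) (hr' : ∀ t ∈ Ioc s m, (η s).re < (η t).re)
    (h1 : ∀ t ∈ Icc m b, η t ≠ η s) (h2 : η s ∉ segment ℝ (η a) (η b))
    (h3 : ∀ τ : ℝ, τ ≠ 0 → |τ| ≤ r → η s + τ * Complex.I ∉ η '' Icc a b ∪ segment ℝ (η a) (η b)) :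
    ∃ D : Set ℂ, IsOpen D ∧ Bornology.IsBounded D ∧ Disjoint D (η '' Icc a b ∪ segment ℝ (η a) (η b)) ∧
      closure D ⊆ D ∪ (η '' Icc a b ∪ segment ℝ (η a) (η b)) ∧
      ∃ τ : ℝ, |τ| = r ∧ η s + τ * Complex.I ∈ D := by
  set C := η '' Icc a b ∪ segment ℝ (η a) (η b) with hC
  have hab : a ≤ b := by linarith
  have hηc : ContinuousOn η (Icc a b) := fun t ht => (hη t ht).continuousAt.continuousWithinAt
  -- the segment
  set ζ : ℝ → ℂ := fun t => η b + t * (η a - η b) with hζ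
  have hζd : ∀ t ∈ Icc (0:ℝ) 1, HasDerivAt ζ ((fun _ => η a - η b) t) t := by
    intro t _
    have := ((hasDerivAt_id t).ofReal_comp.mul_const (η a - η b)).const_add (η b)
    simp only [one_mul, Complex.ofReal_one] at this
    exact this
  have hζi : ∀ t ∈ Icc (0:ℝ) 1, ζ t ∈ segment ℝ (η a) (η b) := by
    intro t ht
    refine ⟨t, 1 - t, ht.1, by linarith [ht.2], by ring, ?_⟩
    simp only [hζ, Complex.real_smul]; push_cast; ring
  have hζc : ContinuousOn ζ (Icc 0 1) := fun t ht => (hζd t ht).continuousAt.continuousWithinAt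
  have hζc' : ContinuousOn (fun _ : ℝ => η a - η b) (Icc 0 1) := continuousOn_const
  set n : ℂ → ℂ := fun ξ => logInt η η' a b ξ + logInt ζ (fun _ => η a - η b) 0 1 ξ with hn
  have hoff : ∀ ξ ∉ C, (∀ t ∈ Icc a b, η t ≠ ξ) ∧ ∀ t ∈ Icc (0:ℝ) 1, ζ t ≠ ξ := by
    intro ξ hξ
    exact ⟨fun t ht e => hξ (Or.inl ⟨t, ht, e⟩), fun t ht e => hξ (Or.inr (e ▸ hζi t ht))⟩
  have hexp : ∀ ξ ∉ C, Complex.exp (n ξ) = 1 := by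
    intro ξ hξ
    obtain ⟨o1, o2⟩ := hoff ξ hξ
    simp only [hn]
    rw [Complex.exp_add, logInt_exp hab hη hc o1, logInt_exp zero_le_one hζd hζc' o2]
    have e1 : η b - ξ ≠ 0 := sub_ne_zero.2 (o1 b ⟨hab, le_rfl⟩)
    have e2 : η a - ξ ≠ 0 := sub_ne_zero.2 (o1 a ⟨le_rfl, hab⟩)
    have e3 : ζ 1 = η a := by simp [hζ]
    have e4 : ζ 0 = η b := by simp [hζ]
    rw [e3, e4]; field_simp
  have hcont : ∀ ξ ∉ C, ContinuousAt n ξ := fun ξ hξ =>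
    (logInt_cont hab hηc hc (hoff ξ hξ).1).add (logInt_cont zero_le_one hζc hζc' (hoff ξ hξ).2)
  have hCcl : IsClosed C := by
    refine ((isCompact_Icc.image_of_continuousOn hηc).isClosed).union ?_
    rw [segment_eq_image]
    exact (isCompact_Icc.image (by fun_prop)).isClosed
  have hCo : IsOpen Cᶜ := hCcl.isOpen_compl
  have hloc : ∀ ξ ∉ C, ∀ᶠ x in 𝓝 ξ, x ∉ C ∧ n x = n ξ := by
    intro ξ hξ
    filter_upwards [hCo.mem_nhds hξ, Metric.continuousAt_iff'.1 (hcont ξ hξ) 1 one_pos] with x hx hd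
    refine ⟨hx, sub_eq_zero.1 (exp_one_small ?_ ?_)⟩
    · rw [Complex.exp_sub, hexp x hx, hexp ξ hξ, div_one]
    · rw [← dist_eq_norm]; linarith
  obtain ⟨R1, hR1⟩ := logInt_large hab hηc hc
  obtain ⟨R2, hR2⟩ := logInt_large zero_le_one hζc hζc'
  refine ⟨{ξ | ξ ∉ C ∧ n ξ ≠ 0}, ?_, ?_, ?_, ?_, ?_⟩
  · rw [isOpen_iff_mem_nhds]
    rintro ξ ⟨hξ, hξn⟩
    filter_upwards [hloc ξ hξ] with x hx
    exact ⟨hx.1, by rw [hx.2]; exact hξn⟩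
  · refine (Metric.isBounded_closedBall (x := (0:ℂ)) (r := max R1 R2)).subset ?_
    rintro ξ ⟨hξ, hξn⟩
    rw [mem_closedBall_zero_iff]
    by_contra hlt
    push Not at hlt
    refine hξn (exp_one_small (hexp ξ hξ) ?_)
    have := norm_add_le (logInt η η' a b ξ) (logInt ζ (fun _ => η a - η b) 0 1 ξ)
    have := hR1 ξ ((le_max_left _ _).trans hlt.le)
    have := hR2 ξ ((le_max_right _ _).trans hlt.le)
    simp only [hn]; linarith
  · exact Set.disjoint_left.2 fun ξ hξ h => hξ.1 h
  · intro ξ hξ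
    by_cases hξC : ξ ∈ C
    · exact Or.inr hξC
    · obtain ⟨x, hx, hx'⟩ := mem_closure_iff_nhds.1 hξ _ (hloc ξ hξC)
      exact Or.inl ⟨hξC, by rw [← hx.2]; exact hx'.2⟩
  · by_contra hcon
    push Not at hcon
    have hz : ∀ τ : ℝ, |τ| = r → n (η s + τ * Complex.I) = 0 := by
      intro τ hτ
      by_contra hne
      exact hcon τ hτ ⟨h3 τ (fun h => by rw [h, abs_zero] at hτ; linarith) hτ.le, hne⟩
    -- constancy on the half segments
    have hzz : ∀ ε : ℝ, |ε| = 1 → ∀ τ ∈ Ioc 0 r, n (η s + ((ε * τ : ℝ) : ℂ) * Complex.I) = 0 := by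
      intro ε hε τ hτ
      have habs : ∀ x ∈ Ioc 0 r, |ε * x| = x := fun x hx => by rw [abs_mul, hε, one_mul, abs_of_pos hx.1]
      have hnotC : ∀ x ∈ Ioc 0 r, η s + ((ε * x : ℝ) : ℂ) * Complex.I ∉ C := fun x hx =>
        h3 _ (fun h => by have := habs x hx; rw [h, abs_zero] at this; linarith [hx.1]) (by rw [habs x hx]; exact hx.2)
      have hpc : IsPreconnected (Ioc 0 r) := isPreconnected_Ioc
      have hcts : Continuous fun x : ℝ => η s + ((ε * x : ℝ) : ℂ) * Complex.I := by fun_prop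
      have hco : ContinuousOn (fun x : ℝ => n (η s + ((ε * x : ℝ) : ℂ) * Complex.I)) (Ioc 0 r) := fun x hx =>
        (ContinuousAt.comp (f := fun x : ℝ => η s + ((ε * x : ℝ) : ℂ) * Complex.I) (hcont _ (hnotC x hx)) hcts.continuousAt).continuousWithinAt
      have hcount : {w : ℂ | Complex.exp w = 1}.Countable := by
        have : {w : ℂ | Complex.exp w = 1} = Set.range (fun n : ℤ => (n:ℂ) * (2 * Real.pi * Complex.I)) := by
          ext w; simp [Complex.exp_eq_one_iff, eq_comm]
        rw [this]; exact countable_range _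
      have hsub := hcount.isTotallyDisconnected _ (by
        rintro _ ⟨x, hx, rfl⟩; exact hexp _ (hnotC x hx)) (hpc.image _ hco)
      have hrr : r ∈ Ioc 0 r := ⟨hr, le_rfl⟩
      exact (hsub ⟨τ, hτ, rfl⟩ ⟨r, hrr, rfl⟩).trans (hz _ (by rw [habs r hrr]))
    set e := η s with he
    set rest : ℂ → ℂ := fun ξ => logInt η η' m b ξ + logInt ζ (fun _ => η a - η b) 0 1 ξ with hrest
    have hsub1 : Icc a m ⊆ Icc a b := Icc_subset_Icc le_rfl hmb
    have hsub2 : Icc m b ⊆ Icc a b := Icc_subset_Icc (by linarith) le_rfl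
    have hrc : ContinuousAt rest e := by
      refine (logInt_cont hmb (hηc.mono hsub2) (hc.mono hsub2) h1).add (logInt_cont zero_le_one hζc hζc' ?_)
      intro t ht h
      exact h2 (h ▸ hζi t ht)
    have hsplit : ∀ ξ ∉ C, n ξ = logInt η η' a m ξ + rest ξ := by
      intro ξ hξ
      have hk : ContinuousOn (fun t => η' t / (η t - ξ)) (Icc a b) :=
        hc.div (hηc.sub continuousOn_const) fun t ht => sub_ne_zero.2 ((hoff ξ hξ).1 t ht)
      have := intervalIntegral.integral_add_adjacent_intervals (f := fun t => η' t / (η t - ξ)) (μ := MeasureTheory.volume)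
        ((hk.mono hsub1).intervalIntegrable_of_Icc (by linarith)) ((hk.mono hsub2).intervalIntegrable_of_Icc hmb)
      simp only [hn, hrest, logInt]
      rw [← this]; ring
    have hre : ∀ t ∈ Icc a m, (η t).re = e.re → t = s := by
      intro t ht h
      rcases lt_trichotomy t s with h' | h' | h'
      · exact absurd h (hl t ⟨ht.1, h'⟩).ne
      · exact h'
      · exact absurd h (hr' t ⟨h', ht.2⟩).ne'
    have hlog : ∀ ε : ℝ, |ε| = 1 → ∀ τ ∈ Ioc 0 r,
        Complex.log (ε * Complex.I * (η m - (e + ((ε * τ : ℝ) : ℂ) * Complex.I))) -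
        Complex.log (ε * Complex.I * (η a - (e + ((ε * τ : ℝ) : ℂ) * Complex.I))) + rest (e + ((ε * τ : ℝ) : ℂ) * Complex.I) = 0 := by
      intro ε hε τ hτ
      have hε2 : ε * ε = 1 := by rw [← abs_mul_abs_self, hε, one_mul]
      have hε0 : ε ≠ 0 := fun h => by rw [h] at hε2; simp at hε2
      have hab' : |ε * τ| = τ := by rw [abs_mul, hε, one_mul, abs_of_pos hτ.1]
      rw [← logInt_log (by linarith : a ≤ m) (fun t ht => hη t (hsub1 ht)) (hc.mono hsub1), ← hsplit, hzz ε hε τ hτ]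
      · exact h3 _ (mul_ne_zero hε0 hτ.1.ne') (by rw [hab']; exact hτ.2)
      · intro t ht
        rw [Complex.mem_slitPlane_iff]
        by_cases hts : t = s
        · left
          rw [hts, ← he]
          simp
          nlinarith [hτ.1]
        · right
          have := fun h => hts (hre t ht h)
          simp
          exact ⟨hε0, sub_ne_zero.2 this⟩
    have hP : 0 < (η m - e).re := by
      rw [Complex.sub_re]; linarith [hr' m ⟨hsm, le_rfl⟩]
    have hQ : 0 < (-(η a - e)).re := by
      rw [Complex.neg_re, Complex.sub_re]; linarith [hl a ⟨le_rfl, has⟩]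
    have hlim : ∀ ε : ℝ, |ε| = 1 → Complex.log (ε * Complex.I * (η m - e)) - Complex.log (ε * Complex.I * (η a - e)) + rest e = 0 := by
      intro ε hε
      have hε0 : ε ≠ 0 := fun h => by rw [h] at hε; simp at hε
      have hct : Continuous fun τ : ℝ => e + ((ε * τ : ℝ) : ℂ) * Complex.I := by fun_prop
      have hc0 : e + ((ε * 0 : ℝ) : ℂ) * Complex.I = e := by simp
      have hlc : ∀ p : ℂ, p.re ≠ e.re → ContinuousAt (fun τ : ℝ => Complex.log (ε * Complex.I * (p - (e + ((ε * τ : ℝ) : ℂ) * Complex.I)))) 0 := by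
        intro p hp
        refine ContinuousAt.clog ?_ ?_
        · exact (continuous_const.mul (continuous_const.sub hct)).continuousAt
        · rw [Complex.mem_slitPlane_iff]
          right
          simp
          exact ⟨hε0, sub_ne_zero.2 hp⟩
      have hcn : ContinuousAt (fun τ : ℝ => Complex.log (ε * Complex.I * (η m - (e + ((ε * τ : ℝ) : ℂ) * Complex.I))) -
        Complex.log (ε * Complex.I * (η a - (e + ((ε * τ : ℝ) : ℂ) * Complex.I))) + rest (e + ((ε * τ : ℝ) : ℂ) * Complex.I)) 0 := by
        refine ((hlc _ ?_).sub (hlc _ ?_)).add ?_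
        · exact (hr' m ⟨hsm, le_rfl⟩).ne'
        · exact (hl a ⟨le_rfl, has⟩).ne
        · refine ContinuousAt.comp (g := rest) ?_ hct.continuousAt
          rw [hc0]; exact hrc
      have t1 := hcn.tendsto.mono_left (nhdsWithin_le_nhds (s := Ioi 0))
      have t2 : Tendsto (fun τ : ℝ => Complex.log (ε * Complex.I * (η m - (e + ((ε * τ : ℝ) : ℂ) * Complex.I))) -
        Complex.log (ε * Complex.I * (η a - (e + ((ε * τ : ℝ) : ℂ) * Complex.I))) + rest (e + ((ε * τ : ℝ) : ℂ) * Complex.I)) (𝓝[>] 0) (𝓝 0) := by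
        refine tendsto_const_nhds.congr' ?_
        filter_upwards [Ioc_mem_nhdsGT hr] with τ hτ
        exact (hlog ε hε τ hτ).symm
      have := tendsto_nhds_unique t1 t2
      simpa using this
    have l1 := hlim 1 (by simp)
    have l2 := hlim (-1) (by simp)
    have j1 := log_jump hP
    have j2 := log_jump hQ
    have e1 : Complex.I * -(η a - e) = -Complex.I * (η a - e) := by ring
    have e2 : -Complex.I * -(η a - e) = Complex.I * (η a - e) := by ring
    rw [e1, e2] at j2
    simp only [Complex.ofReal_one, one_mul, Complex.ofReal_neg, neg_mul] at l1 l2 j1 j2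
    have : (2 : ℂ) * Real.pi * Complex.I = 0 := by linear_combination l1 - l2 - j1 - j2
    simp [Real.pi_ne_zero] at this


structure Proj where
  v : E3
  π : E3 →L[ℝ] ℂ
  σ : ℂ →L[ℝ] E3
  h : E3 →L[ℝ] ℝ
  vpos : ∀ i, 0 < v i
  pv : π v = 0
  ps : ∀ ξ, π (σ ξ) = ξ
  dec : ∀ x, x = σ (π x) + h x • v

lemma Proj.bound (P : Proj) : ∃ C > 0, ∀ x y : E3, ¬ strLt x y → ¬ strLt y x → ‖x - y‖ ≤ C * ‖P.π x - P.π y‖ := by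
  obtain ⟨c, hc, hcv⟩ : ∃ c > 0, ∀ i, c ≤ P.v i := by
    refine ⟨min (P.v 0) (min (P.v 1) (P.v 2)), lt_min (P.vpos 0) (lt_min (P.vpos 1) (P.vpos 2)), fun i => ?_⟩
    fin_cases i <;> simp
  refine ⟨‖P.σ‖ * (1 + ‖P.v‖ / c) + 1, by positivity, ?_⟩
  intro x y hxy hyx
  have hd := P.dec (x - y)
  set s := ‖P.σ (P.π (x - y))‖ with hs
  set k := P.h (x - y)
  have hσ : ∀ i, |P.σ (P.π (x - y)) i| ≤ s := fun i => norm_le_pi_norm (P.σ (P.π (x - y))) i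
  have hdi : ∀ i, x i - y i = P.σ (P.π (x - y)) i + k * P.v i := fun i => by
    have := congrFun hd i; simpa using this
  have hk : |k| * c ≤ s := by
    by_contra hn
    push Not at hn
    rcases le_total 0 k with h0 | h0
    · refine hyx fun i => ?_
      have h1 := abs_le.1 (hσ i)
      have h2 := mul_le_mul_of_nonneg_left (hcv i) h0
      rw [abs_of_nonneg h0] at hn
      linarith [hdi i, h1.1]
    · refine hxy fun i => ?_
      have h1 := abs_le.1 (hσ i)
      have h2 := mul_le_mul_of_nonpos_left (hcv i) h0
      rw [abs_of_nonpos h0] at hn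
      linarith [hdi i, h1.2]
  have hs2 : s ≤ ‖P.σ‖ * ‖P.π x - P.π y‖ := by
    rw [← map_sub]; exact P.σ.le_opNorm _
  have hk2 : |k| ≤ s / c := by rwa [le_div_iff₀ hc]
  have h1 : ‖x - y‖ ≤ s + |k| * ‖P.v‖ := by
    calc ‖x - y‖ = ‖P.σ (P.π (x - y)) + k • P.v‖ := by rw [← hd]
      _ ≤ _ := by
        refine (norm_add_le _ _).trans ?_
        rw [norm_smul, Real.norm_eq_abs]
  have h2 : s + |k| * ‖P.v‖ ≤ s * (1 + ‖P.v‖ / c) := by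
    have := mul_le_mul_of_nonneg_right hk2 (norm_nonneg P.v)
    calc _ ≤ s + s / c * ‖P.v‖ := by linarith
      _ = _ := by ring
  have h3 : s * (1 + ‖P.v‖ / c) ≤ ‖P.σ‖ * ‖P.π x - P.π y‖ * (1 + ‖P.v‖ / c) :=
    mul_le_mul_of_nonneg_right hs2 (by positivity)
  have := norm_nonneg (P.π x - P.π y)
  nlinarith

lemma Proj.ext_of (P : Proj) {x y : E3} (h1 : ¬ strLt x y) (h2 : ¬ strLt y x) (h : P.π x = P.π y) : x = y := by
  obtain ⟨C, _, hC⟩ := P.bound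
  have := hC x y h1 h2
  rw [h, sub_self, norm_zero, mul_zero] at this
  exact sub_eq_zero.1 (norm_le_zero_iff.1 this)

def Proj.flip (P : Proj) : Proj where
  v := P.v
  π := -((Complex.conjCLE : ℂ →L[ℝ] ℂ).comp P.π)
  σ := -(P.σ.comp (Complex.conjCLE : ℂ →L[ℝ] ℂ))
  h := P.h
  vpos := P.vpos
  pv := by simp [P.pv]
  ps := fun ξ => by simp [P.ps]
  dec := fun x => by
    conv_lhs => rw [P.dec x]
    simp

lemma hstrict {f : E3 → E3} {H : E3 → ℝ} (hH : FInt f H) (z : E3) {ε : ℝ} (hε : 0 < ε) :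
    ∃ ρ > 0, ∀ x ∈ Metric.ball z ρ, ∀ y ∈ Metric.ball z ρ, |H x - H y - fderiv ℝ H z (x - y)| ≤ ε * ‖x - y‖ := by
  have h1 : HasStrictFDerivAt H (fderiv ℝ H z) z := hH.smooth.contDiffAt.hasStrictFDerivAt one_ne_zero
  have h2 := h1.isLittleO.def hε
  obtain ⟨ρ, hρ, hB⟩ := Metric.eventually_nhds_iff_ball.1 h2
  refine ⟨ρ, hρ, fun x hx y hy => ?_⟩
  exact hB (x, y) (by rw [← ball_prod_same]; exact ⟨hx, hy⟩)

lemma graph {f : E3 → E3} {H : E3 → ℝ} (hH : FInt f H) (P : Proj) {z : E3} (hw : ∀ x, (P.π x).im = fderiv ℝ H z x) :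
    ∃ ρ > 0, ∀ x ∈ Metric.ball z ρ, ∀ y ∈ Metric.ball z ρ, H x = H y → (P.π x).re = (P.π y).re →
      x = y ∨ strLt x y ∨ strLt y x := by
  obtain ⟨C, hC, hb⟩ := P.bound
  obtain ⟨ρ, hρ, hB⟩ := hstrict hH z (ε := 1 / (2 * C)) (by positivity)
  refine ⟨ρ, hρ, fun x hx y hy hHxy hre => ?_⟩
  by_contra hn
  push Not at hn
  obtain ⟨h0, h1, h2⟩ := hn
  have b1 := hb x y h1 h2
  have b2 := hB x hx y hy
  rw [hHxy, sub_self, zero_sub, abs_neg, ← hw] at b2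
  have b3 : ‖P.π x - P.π y‖ = |(P.π (x - y)).im| := by
    rw [map_sub]
    have : P.π x - P.π y = ((P.π x - P.π y).im : ℂ) * Complex.I := by
      apply Complex.ext <;> simp [hre]
    rw [this, norm_mul, Complex.norm_I, mul_one, Complex.norm_real, Real.norm_eq_abs]; simp
  rw [← b3] at b2
  have b4 : C * ‖P.π x - P.π y‖ ≤ C * (1 / (2 * C) * ‖x - y‖) := mul_le_mul_of_nonneg_left b2 hC.le
  have b5 : C * (1 / (2 * C) * ‖x - y‖) = ‖x - y‖ / 2 := by field_simp
  have b6 : 0 < ‖x - y‖ := norm_pos_iff.2 (sub_ne_zero.2 h0)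
  linarith

def dotL (u : E3) : E3 →L[ℝ] ℝ := ∑ i, u i • ContinuousLinearMap.proj (R := ℝ) (φ := fun _ : Fin 3 => ℝ) i

lemma dotL_apply (u x : E3) : dotL u x = u 0 * x 0 + u 1 * x 1 + u 2 * x 2 := by
  simp [dotL, Fin.sum_univ_three]

lemma exists_pos_ker {w : E3} {i j : Fin 3} (hi : 0 < w i) (hj : w j < 0) : ∃ v : E3, (∀ k, 0 < v k) ∧ dotL w v = 0 := by
  have key : ∀ (k : Fin 3) (c : ℝ), 0 ≤ c → w k * c = -(w 0 + w 1 + w 2) → ∃ v : E3, (∀ k, 0 < v k) ∧ dotL w v = 0 := by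
    intro k c hc h
    refine ⟨fun l => 1 + if l = k then c else 0, fun l => ?_, ?_⟩
    · simp only
      split_ifs <;> linarith
    · rw [dotL_apply]
      fin_cases k <;> simp at h ⊢ <;> linarith
  rcases le_total (w 0 + w 1 + w 2) 0 with h | h
  · exact key i (-(w 0 + w 1 + w 2) / w i) (div_nonneg (by linarith) hi.le) (by field_simp)
  · have := hj.ne
    exact key j (-(w 0 + w 1 + w 2) / w j) (div_nonneg_of_nonpos (by linarith) hj.le) (by field_simp)

lemma exists_proj {w v : E3} (hw : w ≠ 0) (hv : ∀ k, 0 < v k) (hwv : dotL w v = 0) :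
    ∃ P : Proj, P.v = v ∧ ∀ x, (P.π x).im = dotL w x := by
  set u : E3 := ![w 1 * v 2 - w 2 * v 1, w 2 * v 0 - w 0 * v 2, w 0 * v 1 - w 1 * v 0] with hu
  rw [dotL_apply] at hwv
  set W := w 0 ^ 2 + w 1 ^ 2 + w 2 ^ 2 with hW
  set V := v 0 ^ 2 + v 1 ^ 2 + v 2 ^ 2 with hV
  have hWp : 0 < W := by
    obtain ⟨i, hi⟩ := Function.ne_iff.1 hw
    have h0 := sq_nonneg (w 0); have h1 := sq_nonneg (w 1); have h2 := sq_nonneg (w 2)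
    have h3 : 0 < w i ^ 2 := by have : w i ≠ 0 := hi; positivity
    fin_cases i <;> simp at h3 <;> linarith
  have hVp : 0 < V := by have := hv 0; have := hv 1; have := hv 2; positivity
  have u0 : u 0 = w 1 * v 2 - w 2 * v 1 := rfl
  have u1 : u 1 = w 2 * v 0 - w 0 * v 2 := rfl
  have u2 : u 2 = w 0 * v 1 - w 1 * v 0 := rfl
  have hUU : u 0 ^ 2 + u 1 ^ 2 + u 2 ^ 2 = W * V := by
    rw [u0, u1, u2]; linear_combination (-(w 0 * v 0 + w 1 * v 1 + w 2 * v 2)) * hwv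
  refine ⟨{ v := v
            π := Complex.ofRealCLM.comp (dotL u) + Complex.I • (Complex.ofRealCLM.comp (dotL w))
            σ := Complex.reCLM.smulRight ((1 / (W * V)) • u) + Complex.imCLM.smulRight ((1 / W) • w)
            h := (1 / V) • dotL v
            vpos := hv
            pv := ?_
            ps := ?_
            dec := ?_ }, rfl, ?_⟩
  · apply Complex.ext
    · simp [dotL_apply, u0, u1, u2]; ring
    · simp [dotL_apply]; linarith
  · intro ξ
    have hWV : W * V ≠ 0 := by positivity
    apply Complex.ext
    · simp [dotL_apply]
      have : u 0 * w 0 + u 1 * w 1 + u 2 * w 2 = 0 := by rw [u0, u1, u2]; ring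
      field_simp
      linear_combination ξ.re * hUU + ξ.im * V * this
    · simp [dotL_apply]
      have : w 0 * u 0 + w 1 * u 1 + w 2 * u 2 = 0 := by rw [u0, u1, u2]; ring
      field_simp
      linear_combination ξ.re * this - ξ.im * V * hW
  · intro x
    have hWV : W * V ≠ 0 := by positivity
    funext k
    have key : W * V * x k = (u 0 * x 0 + u 1 * x 1 + u 2 * x 2) * u k + V * (w 0 * x 0 + w 1 * x 1 + w 2 * x 2) * w k
      + W * (v 0 * x 0 + v 1 * x 1 + v 2 * x 2) * v k := by
      rw [hW, hV]
      fin_cases k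
      · simp [u0, u1, u2]
        linear_combination ((w 0 * v 0 + w 1 * v 1 + w 2 * v 2) * x 0 - (v 0 * x 0 + v 1 * x 1 + v 2 * x 2) * w 0 - (w 0 * x 0 + w 1 * x 1 + w 2 * x 2) * v 0) * hwv
      · simp [u0, u1, u2]
        linear_combination ((w 0 * v 0 + w 1 * v 1 + w 2 * v 2) * x 1 - (v 0 * x 0 + v 1 * x 1 + v 2 * x 2) * w 1 - (w 0 * x 0 + w 1 * x 1 + w 2 * x 2) * v 1) * hwv
      · simp [u0, u1, u2]
        linear_combination ((w 0 * v 0 + w 1 * v 1 + w 2 * v 2) * x 2 - (v 0 * x 0 + v 1 * x 1 + v 2 * x 2) * w 2 - (w 0 * x 0 + w 1 * x 1 + w 2 * x 2) * v 2) * hwv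
    simp [dotL_apply]
    field_simp
    linear_combination key
  · intro x
    simp


def Up (γ : ℝ → E3) (a b : ℝ) : Set E3 := {x | ∃ s ∈ Icc a b, γ s ≤ x}
def UpS (γ : ℝ → E3) (a b : ℝ) : Set E3 := {x | ∃ s ∈ Icc a b, strLt (γ s) x}
def Bd (γ : ℝ → E3) (a b : ℝ) : Set E3 := Up γ a b \ UpS γ a b

lemma UpS_sub (γ : ℝ → E3) (a b : ℝ) : UpS γ a b ⊆ Up γ a b := fun _ ⟨s, hs, h⟩ => ⟨s, hs, h.le⟩

lemma Up_closed {γ : ℝ → E3} {a b : ℝ} (h : ContinuousOn γ (Icc a b)) : IsClosed (Up γ a b) := by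
  have := (isClosed_Ici (a := (0:E3))).add_left_of_isCompact (isCompact_Icc.image_of_continuousOn h)
  convert this using 1
  ext x
  rw [Set.mem_add]
  constructor
  · rintro ⟨s, hs, hx⟩
    exact ⟨γ s, ⟨s, hs, rfl⟩, x - γ s, sub_nonneg.2 hx, by abel⟩
  · rintro ⟨_, ⟨s, hs, rfl⟩, y, hy, rfl⟩
    exact ⟨s, hs, le_add_of_nonneg_right hy⟩

lemma UpS_open (γ : ℝ → E3) (a b : ℝ) : IsOpen (UpS γ a b) := by
  rw [isOpen_iff_mem_nhds]
  rintro x ⟨s, hs, hx⟩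
  filter_upwards [eventually_strLt (g := fun _ => γ s) (k := id) continuousAt_const continuousAt_id hx] with y hy
  exact ⟨s, hs, hy⟩

lemma Bd_closed {γ : ℝ → E3} {a b : ℝ} (h : ContinuousOn γ (Icc a b)) : IsClosed (Bd γ a b) :=
  (Up_closed h).sdiff (UpS_open γ a b)

lemma crossing {γ : ℝ → E3} {a b : ℝ} (h : ContinuousOn γ (Icc a b)) {c : ℝ → E3} {p q : ℝ} (hpq : p ≤ q)
    (hc : ContinuousOn c (Icc p q)) (h1 : c p ∉ Up γ a b) (h2 : c q ∈ Up γ a b) : ∃ t ∈ Icc p q, c t ∈ Bd γ a b := by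
  have hcl : IsCompact (Icc p q ∩ c ⁻¹' Up γ a b) :=
    isCompact_Icc.of_isClosed_subset (hc.preimage_isClosed_of_isClosed isClosed_Icc (Up_closed h)) inter_subset_left
  obtain ⟨t, ht, hmin⟩ := hcl.exists_isLeast ⟨q, ⟨hpq, le_rfl⟩, h2⟩
  refine ⟨t, ht.1, ht.2, fun hS => ?_⟩
  have hpt : p < t := lt_of_le_of_ne ht.1.1 fun e => h1 (e ▸ ht.2)
  have hev : ∀ᶠ s in 𝓝[Icc p q] t, c s ∈ UpS γ a b := (hc t ht.1) ((UpS_open γ a b).mem_nhds hS)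
  have hev2 : ∀ᶠ s in 𝓝[Ioo p t] t, c s ∈ UpS γ a b :=
    hev.filter_mono (nhdsWithin_mono _ (show Ioo p t ⊆ Icc p q from fun s hs => ⟨hs.1.le, hs.2.le.trans ht.1.2⟩))
  have : (𝓝[Ioo p t] t).NeBot := by
    rw [nhdsWithin_Ioo_eq_nhdsLT hpt]; infer_instance
  obtain ⟨s, hs1, hs2⟩ := (hev2.and self_mem_nhdsWithin).exists
  have := hmin ⟨⟨hs2.1.le, hs2.2.le.trans ht.1.2⟩, UpS_sub _ _ _ hs1⟩
  linarith [hs2.2]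

lemma Bd_not {γ : ℝ → E3} {a b : ℝ} {x y : E3} (hx : x ∈ Up γ a b) (hy : y ∈ Bd γ a b) : ¬ strLt x y := by
  intro h
  obtain ⟨s, hs, hsx⟩ := hx
  exact hy.2 ⟨s, hs, fun i => (hsx i).trans_lt (h i)⟩

lemma Bd_over (P : Proj) {γ : ℝ → E3} {a b : ℝ} (hab : a ≤ b) (h : ContinuousOn γ (Icc a b)) (ξ : ℂ) :
    ∃ q ∈ Bd γ a b, P.π q = ξ := by
  obtain ⟨M, hM⟩ := isCompact_Icc.exists_bound_of_continuousOn h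
  have hM0 : 0 ≤ M := (norm_nonneg _).trans (hM a ⟨le_rfl, hab⟩)
  obtain ⟨c, hc, hcv⟩ : ∃ c > 0, ∀ i, c ≤ P.v i := by
    refine ⟨min (P.v 0) (min (P.v 1) (P.v 2)), lt_min (P.vpos 0) (lt_min (P.vpos 1) (P.vpos 2)), fun i => ?_⟩
    fin_cases i <;> simp
  set N := M + ‖P.σ ξ‖ + 1 with hN
  have hN0 : 0 < N := by positivity
  have hγ : ∀ s ∈ Icc a b, ∀ i, |γ s i| ≤ M := fun s hs i => (norm_le_pi_norm (γ s) i).trans (hM s hs)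
  have hσ : ∀ i, |P.σ ξ i| ≤ ‖P.σ ξ‖ := fun i => norm_le_pi_norm (P.σ ξ) i
  have hNv : ∀ i, N ≤ N / c * P.v i := fun i => by
    rw [div_mul_eq_mul_div, le_div_iff₀ hc]; exact mul_le_mul_of_nonneg_left (hcv i) hN0.le
  obtain ⟨t, ht, hB⟩ := crossing h (c := fun t => P.σ ξ + t • P.v) (p := -(N / c)) (q := N / c)
    (by have : 0 < N / c := by positivity
        linarith) (by fun_prop) (by
      rintro ⟨s, hs, hle⟩
      have := hle 0
      simp at this
      linarith [hNv 0, (abs_le.1 (hσ 0)).2, (abs_le.1 (hγ s hs 0)).1]) (by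
      refine ⟨a, ⟨le_rfl, hab⟩, fun i => ?_⟩
      simp
      linarith [hNv i, (abs_le.1 (hσ i)).1, (abs_le.1 (hγ a ⟨le_rfl, hab⟩ i)).2])
  exact ⟨_, hB, by simp [P.ps, P.pv]⟩

structure Loc (f : E3 → E3) (P : Proj) (z : E3) (i0 : Fin 3) (ρ κ δ R : ℝ) (Φ : E3 × ℝ → E3) : Prop where
  hρ : 0 < ρ
  hκ : 0 < κ
  hδ : 0 < δ
  hδ1 : δ ≤ 1
  hR : 0 < R
  hRρ : R ≤ ρ
  vel : ∀ x ∈ Metric.ball z ρ, κ ≤ (P.π (f x)).re ∧ f x i0 < 0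
  flow : ∀ x ∈ Metric.closedBall z (2 * ρ), Φ (x, 0) = x ∧ Sol f (fun t => Φ (x, t)) (Icc (-δ) δ)
  cont : ContinuousOn Φ (Metric.closedBall z (2 * ρ) ×ˢ Icc (-δ) δ)
  stay : ∀ x ∈ Metric.ball z R, ∀ t ∈ Icc (-δ) δ, Φ (x, t) ∈ Metric.ball z ρ

lemma stay_exists {z : E3} {r ε ρ : ℝ} (hr : 0 < r) (hε : 0 < ε) (hρ : 0 < ρ) {Φ : E3 × ℝ → E3}
    (h0 : Φ (z, 0) = z) (hc : ContinuousOn Φ (Metric.closedBall z r ×ˢ Icc (-ε) ε)) :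
    ∃ R > 0, ∃ δ > 0, R ≤ r ∧ δ ≤ ε ∧ ∀ x ∈ Metric.ball z R, ∀ t ∈ Icc (-δ) δ, Φ (x, t) ∈ Metric.ball z ρ := by
  have hn : Metric.closedBall z r ×ˢ Icc (-ε) ε ∈ 𝓝 (z, (0:ℝ)) :=
    prod_mem_nhds (Metric.closedBall_mem_nhds z hr) (Icc_mem_nhds (by linarith) hε)
  have hca := hc.continuousAt hn
  have : ∀ᶠ p in 𝓝 (z, (0:ℝ)), Φ p ∈ Metric.ball z ρ := hca (by rw [h0]; exact Metric.ball_mem_nhds z hρ)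
  obtain ⟨d, hd, hB⟩ := Metric.eventually_nhds_iff_ball.1 this
  refine ⟨min d r, lt_min hd hr, min (d/2) ε, lt_min (by linarith) hε, min_le_right _ _, min_le_right _ _, fun x hx t ht => hB _ ?_⟩
  rw [← ball_prod_same]
  refine ⟨Metric.ball_subset_ball (min_le_left _ _) hx, ?_⟩
  rw [Metric.mem_ball, Real.dist_0_eq_abs, abs_lt]
  have := min_le_left (d/2) ε
  exact ⟨by linarith [ht.1], by linarith [ht.2]⟩

lemma Loc.exists {f : E3 → E3} (hf : CoopSys f) (P : Proj) {z : E3} {i0 : Fin 3} (h1 : 0 < (P.π (f z)).re) (h2 : f z i0 < 0)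
    {r : ℝ} (hr : 0 < r) : ∃ ρ κ δ R Φ, ρ ≤ r ∧ Loc f P z i0 ρ κ δ R Φ := by
  obtain ⟨r1, hr1, ε, hε, Φ, hΦ, hc⟩ := local_flow hf z
  have hev : ∀ᶠ x in 𝓝 z, (P.π (f z)).re / 2 < (P.π (f x)).re ∧ f x i0 < 0 := by
    have c1 : Continuous fun x => (P.π (f x)).re := Complex.continuous_re.comp (P.π.continuous.comp hf.smooth.continuous)
    have c2 : Continuous fun x => f x i0 := (continuous_apply i0).comp hf.smooth.continuous
    exact (continuousAt_const.eventually_lt c1.continuousAt (by linarith)).and (c2.continuousAt.eventually_lt continuousAt_const h2)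
  obtain ⟨d, hd, hB⟩ := Metric.eventually_nhds_iff_ball.1 hev
  set ρ := min r (min (r1 / 2) d) with hρd
  have hρ : 0 < ρ := lt_min hr (lt_min (by linarith) hd)
  have hρ1 : ρ ≤ r1 / 2 := (min_le_right _ _).trans (min_le_left _ _)
  have hρ2 : ρ ≤ d := (min_le_right _ _).trans (min_le_right _ _)
  have hz0 := (hΦ z (Metric.mem_closedBall_self hr1.le)).1
  obtain ⟨R, hR, δ, hδ, _, hδε, hst⟩ := stay_exists hr1 hε hρ hz0 hc
  have hsub : Metric.closedBall z (2 * ρ) ⊆ Metric.closedBall z r1 := Metric.closedBall_subset_closedBall (by linarith)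
  have hm : min δ 1 ≤ ε := (min_le_left _ _).trans hδε
  have hsubI : Icc (-(min δ 1)) (min δ 1) ⊆ Icc (-ε) ε := Icc_subset_Icc (by linarith) hm
  refine ⟨ρ, (P.π (f z)).re / 2, min δ 1, min R ρ, Φ, min_le_left _ _, ?_⟩
  constructor
  · exact hρ
  · linarith
  · exact lt_min hδ one_pos
  · exact min_le_right _ _
  · exact lt_min hR hρ
  · exact min_le_right _ _
  · intro x hx
    have := hB x (Metric.ball_subset_ball hρ2 hx)
    exact ⟨this.1.le, this.2⟩
  · intro x hx
    exact ⟨(hΦ x (hsub hx)).1, (hΦ x (hsub hx)).2.mono hsubI⟩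
  · exact hc.mono (prod_mono hsub hsubI)
  · intro x hx t ht
    refine hst x (Metric.ball_subset_ball (min_le_left _ _) hx) t ?_
    have := min_le_left δ 1
    exact ⟨by linarith [ht.1], by linarith [ht.2]⟩

section
variable {f : E3 → E3} {H : E3 → ℝ} {P : Proj} {z : E3} {i0 : Fin 3} {ρ κ δ R : ℝ} {Φ : E3 × ℝ → E3}

lemma Loc.eq (L : Loc f P z i0 ρ κ δ R Φ) (hf : CoopSys f) {y : ℝ → E3} {t0 : ℝ} (hy : Sol f y (Icc (t0 - δ) (t0 + δ)))
    (h0 : y t0 ∈ Metric.closedBall z (2 * ρ)) {u : ℝ} (hu : u ∈ Icc (-δ) δ) : y (t0 + u) = Φ (y t0, u) := by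
  obtain ⟨e0, hs⟩ := L.flow _ h0
  have hy' : Sol f (fun t => y (t + t0)) (Icc (-δ) δ) :=
    hy.shift t0 fun t ht => ⟨by linarith [ht.1], by linarith [ht.2]⟩
  have := sol_unique hf hy' hs (t0 := 0) ⟨by linarith [L.hδ], L.hδ⟩ (by simp [e0]) hu
  simpa [add_comm] using this

lemma Loc.unif (L : Loc f P z i0 ρ κ δ R Φ) {u : ℝ} (hu : u ∈ Icc (-δ) δ) {ε : ℝ} (hε : 0 < ε) :
    ∃ d > 0, ∀ x ∈ Metric.closedBall z (2 * ρ), ∀ y ∈ Metric.closedBall z (2 * ρ), ‖x - y‖ < d → ‖Φ (x, u) - Φ (y, u)‖ < ε := by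
  have hc : ContinuousOn (fun x => Φ (x, u)) (Metric.closedBall z (2 * ρ)) :=
    L.cont.comp (by fun_prop) fun x hx => ⟨hx, hu⟩
  have := (isCompact_closedBall z (2 * ρ)).uniformContinuousOn_of_continuous hc
  obtain ⟨d, hd, h⟩ := Metric.uniformContinuousOn_iff.1 this ε hε
  refine ⟨d, hd, fun x hx y hy hxy => ?_⟩
  rw [← dist_eq_norm] at hxy ⊢
  exact h x hx y hy hxy

lemma Loc.inc (L : Loc f P z i0 ρ κ δ R Φ) {y : ℝ → E3} {s t : ℝ} (hst : s ≤ t) (hy : Sol f y (Icc s t))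
    (hB : ∀ u ∈ Icc s t, y u ∈ Metric.ball z ρ) : κ * (t - s) ≤ (P.π (y t)).re - (P.π (y s)).re := by
  have hd : ∀ u ∈ Icc s t, HasDerivAt (fun u => (P.π (y u)).re - κ * u) ((P.π (f (y u))).re - κ) u := by
    intro u hu
    have h1 : HasDerivAt (fun u => P.π (y u)) (P.π (f (y u))) u := P.π.hasFDerivAt.comp_hasDerivAt u (hy u hu)
    have h2 : HasDerivAt (fun u => (P.π (y u)).re) ((P.π (f (y u))).re) u := Complex.reCLM.hasFDerivAt.comp_hasDerivAt u h1
    have h3 := (hasDerivAt_id u).const_mul κ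
    simp only [mul_one] at h3
    exact h2.sub h3
  have := monotone_of_hasDeriv hd (fun u hu => by linarith [(L.vel _ (hB u hu)).1]) (left_mem_Icc.2 hst) (right_mem_Icc.2 hst) hst
  simp only at this
  linarith

lemma Loc.decr (L : Loc f P z i0 ρ κ δ R Φ) {y : ℝ → E3} {s t : ℝ} (hst : s < t) (hy : Sol f y (Icc s t))
    (hB : ∀ u ∈ Icc s t, y u ∈ Metric.ball z ρ) : y t i0 < y s i0 := by
  have hd : ∀ u ∈ Icc s t, HasDerivAt (fun u => y u i0) (f (y u) i0) u := fun u hu => hasDerivAt_pi.1 (hy u hu) i0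
  refine strictAntiOn_of_deriv_neg (convex_Icc s t) (fun u hu => (hd u hu).continuousAt.continuousWithinAt) (fun u hu => ?_)
    (left_mem_Icc.2 hst.le) (right_mem_Icc.2 hst.le) hst
  rw [(hd u (interior_subset hu)).deriv]
  exact (L.vel _ (hB u (interior_subset hu))).2

structure Arc (f : E3 → E3) (H : E3 → ℝ) (P : Proj) (z : E3) (ρ' g : ℝ) (γ : ℝ → E3) (a b : ℝ) : Prop where
  hab : a < b
  sol : Sol f γ (Icc (a - 1) (b + 1))
  Hc : ∀ t ∈ Icc (a - 1) (b + 1), H (γ t) = H z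
  na : ‖γ a - z‖ < g
  nb : ‖γ b - z‖ < g
  ra : (P.π (γ a)).re = (P.π z).re
  rb : (P.π (γ b)).re = (P.π z).re
  nc : ∀ t ∈ Ioo a b, γ t ∈ Metric.closedBall z ρ' → (P.π (γ t)).re ≠ (P.π z).re
  ord : γ a ≤ γ b

variable {ρ' g : ℝ} {γ : ℝ → E3} {a b : ℝ}

lemma Arc.mono (A : Arc f H P z ρ' g γ a b) {g' : ℝ} (h : g ≤ g') : Arc f H P z ρ' g' γ a b :=
  ⟨A.hab, A.sol, A.Hc, A.na.trans_le h, A.nb.trans_le h, A.ra, A.rb, A.nc, A.ord⟩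

/-- staying near `z` for a short time -/
lemma Loc.near (L : Loc f P z i0 ρ κ δ R Φ) (hf : CoopSys f) {y : ℝ → E3} {t0 : ℝ} (hy : Sol f y (Icc (t0 - δ) (t0 + δ)))
    (h0 : ‖y t0 - z‖ < R) {t : ℝ} (ht : t ∈ Icc (t0 - δ) (t0 + δ)) : y t ∈ Metric.ball z ρ := by
  rw [← dist_eq_norm, ← Metric.mem_ball] at h0
  have h1 : y t0 ∈ Metric.closedBall z (2 * ρ) :=
    Metric.ball_subset_closedBall (Metric.ball_subset_ball (by linarith [L.hRρ, L.hρ]) h0)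
  have hu : t - t0 ∈ Icc (-δ) δ := ⟨by linarith [ht.1], by linarith [ht.2]⟩
  have := L.eq hf hy h1 hu
  rw [add_sub_cancel] at this
  rw [this]
  exact L.stay _ h0 _ hu

lemma Arc.solAt (A : Arc f H P z ρ' g γ a b) (L : Loc f P z i0 ρ κ δ R Φ) {t : ℝ} (ht : t ∈ Icc a b) : Sol f γ (Icc (t - δ) (t + δ)) :=
  A.sol.mono (Icc_subset_Icc (by linarith [ht.1, L.hδ1]) (by linarith [ht.2, L.hδ1]))

lemma Loc.far (L : Loc f P z i0 ρ κ δ R Φ) (hf : CoopSys f) {ρ' : ℝ} (hρ' : ρ ≤ ρ') {d : ℝ} (hd : 0 < d) (hdδ : d ≤ δ) :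
    ∃ ρ0 > 0, ∀ (H : E3 → ℝ) (g : ℝ) (γ : ℝ → E3) (a b : ℝ), Arc f H P z ρ' g γ a b →
      ∀ t ∈ Icc (a + d) (b - d), ρ0 ≤ ‖γ t - z‖ := by
  refine ⟨min R (κ * d / (‖P.π‖ + 1)), lt_min L.hR (div_pos (mul_pos L.hκ hd) (by positivity)), ?_⟩
  intro H g γ a b A t ht
  by_contra hn
  push Not at hn
  have htab : t ∈ Icc a b := ⟨by linarith [ht.1], by linarith [ht.2]⟩
  have hS := A.solAt L htab
  have hB : ∀ u ∈ Icc (t - d) (t + d), γ u ∈ Metric.ball z ρ := fun u hu =>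
    L.near hf hS (hn.trans_le (min_le_left _ _)) ⟨by linarith [hu.1], by linarith [hu.2]⟩
  have hre : |(P.π (γ t)).re - (P.π z).re| < κ * d := by
    rw [← Complex.sub_re, ← map_sub]
    refine (Complex.abs_re_le_norm _).trans_lt ((P.π.le_opNorm _).trans_lt ?_)
    have h1 := hn.trans_le (min_le_right _ _)
    rw [lt_div_iff₀ (by positivity)] at h1
    nlinarith [norm_nonneg (γ t - z), norm_nonneg P.π]
  have hsub1 : Icc (t - d) t ⊆ Icc (t - d) (t + d) := Icc_subset_Icc le_rfl (by linarith)
  have hsub2 : Icc t (t + d) ⊆ Icc (t - d) (t + d) := Icc_subset_Icc (by linarith) le_rfl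
  have hsub3 : Icc (t - d) (t + d) ⊆ Icc (t - δ) (t + δ) := Icc_subset_Icc (by linarith) (by linarith)
  have i1 := L.inc (by linarith) (hS.mono (hsub1.trans hsub3)) fun u hu => hB u (hsub1 hu)
  have i2 := L.inc (by linarith) (hS.mono (hsub2.trans hsub3)) fun u hu => hB u (hsub2 hu)
  have hab := abs_lt.1 hre
  have hcont : ContinuousOn (fun u => (P.π (γ u)).re) (Icc (t - d) (t + d)) :=
    (Complex.continuous_re.comp P.π.continuous).comp_continuousOn (hS.continuousOn.mono hsub3)
  obtain ⟨u, hu, hur⟩ := intermediate_value_Ioo (by linarith : t - d ≤ t + d) hcont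
    (show (P.π z).re ∈ Ioo _ _ from ⟨by linarith, by linarith⟩)
  exact A.nc u ⟨by linarith [hu.1, ht.1], by linarith [hu.2, ht.2]⟩
    (Metric.ball_subset_closedBall (Metric.ball_subset_ball hρ' (hB u (Ioo_subset_Icc_self hu)))) hur

lemma Arc.nearA (A : Arc f H P z ρ' g γ a b) (L : Loc f P z i0 ρ κ δ R Φ) (hf : CoopSys f) (hg : g ≤ R) {t : ℝ}
    (ht : t ∈ Icc (a - δ) (a + δ)) : γ t ∈ Metric.ball z ρ :=
  L.near hf (A.solAt L ⟨le_rfl, A.hab.le⟩) (A.na.trans_le hg) ht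

lemma Arc.nearB (A : Arc f H P z ρ' g γ a b) (L : Loc f P z i0 ρ κ δ R Φ) (hf : CoopSys f) (hg : g ≤ R) {t : ℝ}
    (ht : t ∈ Icc (b - δ) (b + δ)) : γ t ∈ Metric.ball z ρ :=
  L.near hf (A.solAt L ⟨A.hab.le, le_rfl⟩) (A.nb.trans_le hg) ht

lemma Arc.incA (A : Arc f H P z ρ' g γ a b) (L : Loc f P z i0 ρ κ δ R Φ) (hf : CoopSys f) (hg : g ≤ R) {s t : ℝ}
    (hs : a - δ ≤ s) (hst : s ≤ t) (ht : t ≤ a + δ) : κ * (t - s) ≤ (P.π (γ t)).re - (P.π (γ s)).re :=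
  L.inc hst ((A.solAt L ⟨le_rfl, A.hab.le⟩).mono (Icc_subset_Icc hs ht)) fun _ hu =>
    A.nearA L hf hg ⟨hs.trans hu.1, hu.2.trans ht⟩

lemma Arc.incB (A : Arc f H P z ρ' g γ a b) (L : Loc f P z i0 ρ κ δ R Φ) (hf : CoopSys f) (hg : g ≤ R) {s t : ℝ}
    (hs : b - δ ≤ s) (hst : s ≤ t) (ht : t ≤ b + δ) : κ * (t - s) ≤ (P.π (γ t)).re - (P.π (γ s)).re :=
  L.inc hst ((A.solAt L ⟨A.hab.le, le_rfl⟩).mono (Icc_subset_Icc hs ht)) fun _ hu =>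
    A.nearB L hf hg ⟨hs.trans hu.1, hu.2.trans ht⟩

lemma Arc.long (A : Arc f H P z ρ' g γ a b) (L : Loc f P z i0 ρ κ δ R Φ) (hf : CoopSys f) (hg : g ≤ R) :
    a + δ < b - δ := by
  by_contra hn
  push Not at hn
  have h := A.hab
  have i1 := A.incA L hf hg (s := a) (t := (a + b) / 2) (by linarith [L.hδ]) (by linarith) (by linarith)
  have i2 := A.incB L hf hg (s := (a + b) / 2) (t := b) (by linarith) (by linarith) (by linarith [L.hδ])
  rw [A.ra] at i1
  rw [A.rb] at i2
  have : 0 < κ * ((a + b) / 2 - a) := mul_pos L.hκ (by linarith)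
  have : 0 < κ * (b - (a + b) / 2) := mul_pos L.hκ (by linarith)
  linarith

lemma Arc.stepC' (A : Arc f H P z ρ' g γ a b) (hf : CoopSys f) {s s' : ℝ} (hs : s ∈ Icc a b) (hs' : s' ∈ Icc a b)
    (hss : s < s') (h : strLt (γ s') (γ s)) : False := by
  have hsub : Icc a b ⊆ Icc (a - 1) (b + 1) := Icc_subset_Icc (by linarith) (by linarith)
  have hbc : strLt (γ b) (γ (s + (b - s'))) := by
    rcases hs'.2.lt_or_eq with h1 | h1
    · have := shift_strict hf (A.sol.mono hsub) hs' hs (u := b - s') (by linarith) (by linarith) (by linarith) h.le h.ne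
      rwa [add_sub_cancel] at this
    · subst h1; simpa using h
  set c := s + (b - s') with hc
  have hac : strLt (γ a) (γ c) := fun i => (A.ord i).trans_lt (hbc i)
  have hca : a < c := by
    have h1 : a ≤ c := by rw [hc]; linarith [hs.1, hs'.2]
    exact lt_of_le_of_ne h1 fun e => hac.ne (by rw [← e])
  exact peak hf (A.sol.mono hsub) hca (by rw [hc]; linarith) hac hbc.lt
end


section
variable {f : E3 → E3} {H : E3 → ℝ} {P : Proj} {z : E3} {i0 : Fin 3} {ρ κ δ R : ℝ} {Φ : E3 × ℝ → E3}
variable {ρ' g : ℝ} {γ : ℝ → E3} {a b : ℝ}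

lemma Loc.margin (L : Loc f P z i0 ρ κ δ R Φ) (hf : CoopSys f) {d : ℝ} (hd : 0 < d) (hdδ : d ≤ δ) {ρ2 : ℝ} (hρ2 : 0 < ρ2) :
    ∃ k > 0, ∀ x ∈ Metric.closedBall z (2 * ρ), ∀ y ∈ Metric.closedBall z (2 * ρ), x ≤ y → ‖x - y‖ = ρ2 →
      ∀ i, Φ (x, d) i + k ≤ Φ (y, d) i := by
  have hdI : d ∈ Icc (-δ) δ := ⟨by linarith, hdδ⟩
  set Q : Set (E3 × E3) := (Metric.closedBall z (2 * ρ) ×ˢ Metric.closedBall z (2 * ρ)) ∩ {p | p.1 ≤ p.2 ∧ ‖p.1 - p.2‖ = ρ2}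
  have hQ : IsCompact Q := by
    refine ((isCompact_closedBall _ _).prod (isCompact_closedBall _ _)).inter_right ?_
    exact (isClosed_le continuous_fst continuous_snd).inter (isClosed_eq (by fun_prop) continuous_const)
  have hc : ContinuousOn (fun x => Φ (x, d)) (Metric.closedBall z (2 * ρ)) :=
    L.cont.comp (by fun_prop) fun x hx => ⟨hx, hdI⟩
  have key : ∀ i, ∃ k > 0, ∀ p ∈ Q, k ≤ Φ (p.2, d) i - Φ (p.1, d) i := by
    intro i
    rcases Q.eq_empty_or_nonempty with h | h
    · exact ⟨1, one_pos, fun p hp => by rw [h] at hp; exact absurd hp (notMem_empty p)⟩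
    · have hci : ContinuousOn (fun x => Φ (x, d) i) (Metric.closedBall z (2 * ρ)) := (continuous_apply i).comp_continuousOn hc
      obtain ⟨p, hp, hmin⟩ := hQ.exists_isMinOn (f := fun p : E3 × E3 => Φ (p.2, d) i - Φ (p.1, d) i) h
        ((hci.comp continuousOn_snd fun p hp => hp.1.2).sub (hci.comp continuousOn_fst fun p hp => hp.1.1))
      refine ⟨_, ?_, fun p' hp' => hmin hp'⟩
      have f1 := L.flow _ hp.1.1
      have f2 := L.flow _ hp.1.2
      have hsub : Icc 0 d ⊆ Icc (-δ) δ := Icc_subset_Icc (by linarith) hdδ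
      have hne : p.1 ≠ p.2 := fun e => by
        have := hp.2.2; rw [e, sub_self, norm_zero] at this; linarith
      have := sm_strict hf (f1.2.mono hsub) (f2.2.mono hsub) (by rw [f1.1, f2.1]; exact hp.2.1)
        (by rw [f1.1, f2.1]; exact hne) d ⟨hd, le_rfl⟩ i
      exact sub_pos.2 this
  choose k hk hkQ using key
  refine ⟨min (k 0) (min (k 1) (k 2)), lt_min (hk 0) (lt_min (hk 1) (hk 2)), fun x hx y hy hxy hn i => ?_⟩
  have h1 := hkQ i (x, y) ⟨⟨hx, hy⟩, hxy, hn⟩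
  have h2 : min (k 0) (min (k 1) (k 2)) ≤ k i := by fin_cases i <;> simp
  simp only at h1
  linarith

lemma Loc.stepC (L : Loc f P z i0 ρ κ δ R Φ) (hf : CoopSys f) {ρ' : ℝ} (hρ' : ρ ≤ ρ') {d : ℝ} (hd : 0 < d) (hdδ : d ≤ δ / 2) :
    ∃ g > 0, ∀ (H : E3 → ℝ) (γ : ℝ → E3) (a b : ℝ), Arc f H P z ρ' g γ a b →
      ∀ s ∈ Icc a (b - d), ∀ s' ∈ Icc a (b - d), s < s' → ¬ γ s ≤ γ s' := by
  have hδ := L.hδ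
  have hρ := L.hρ
  have hdI : d ∈ Icc (-δ) δ := ⟨by linarith, by linarith⟩
  obtain ⟨ρ0, hρ0, hfar⟩ := L.far hf hρ' hd (by linarith)
  obtain ⟨e, he, hunif⟩ := L.unif hdI (ε := ρ0 / 2) (by linarith)
  set ρ2 := min e ρ with hρ2d
  have hρ2 : 0 < ρ2 := lt_min he hρ
  have hρ2ρ : ρ2 ≤ ρ := min_le_right _ _
  obtain ⟨k, hk, hmar⟩ := L.margin hf hd (by linarith) hρ2
  refine ⟨min R (min (ρ0 / 2) (k / 2)), lt_min L.hR (lt_min (by linarith) (by linarith)), ?_⟩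
  intro H γ a b A s hs s' hs' hss hle
  have hgR : min R (min (ρ0 / 2) (k / 2)) ≤ R := min_le_left _ _
  have hg0 : min R (min (ρ0 / 2) (k / 2)) ≤ ρ0 / 2 := (min_le_right _ _).trans (min_le_left _ _)
  have hgk : min R (min (ρ0 / 2) (k / 2)) ≤ k / 2 := (min_le_right _ _).trans (min_le_right _ _)
  have hsub : Icc a b ⊆ Icc (a - 1) (b + 1) := Icc_subset_Icc (by linarith) (by linarith)
  have hSab := A.sol.mono hsub
  obtain ⟨σ, hσ⟩ : ∃ σ, σ = s + (b - d - s') := ⟨_, rfl⟩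
  have hσa : a ≤ σ := by rw [hσ]; linarith [hs.1, hs'.2]
  have hσb : σ < b - d := by rw [hσ]; linarith
  have hxy : γ σ ≤ γ (b - d) := by
    have := shift_mono hf hSab (s := s) (s' := s') (u := b - d - s') ⟨hs.1, by linarith [hs.2]⟩ ⟨hs'.1, by linarith [hs'.2]⟩
      (by linarith [hs'.2]) (by linarith) (by linarith) hle
    rw [add_sub_cancel] at this
    rw [hσ]; exact this
  have hyB : γ (b - d) ∈ Metric.ball z ρ := A.nearB L hf hgR ⟨by linarith, by linarith⟩
  have hyB2 : γ (b - d) ∈ Metric.closedBall z (2 * ρ) :=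
    Metric.ball_subset_closedBall (Metric.ball_subset_ball (by linarith) hyB)
  have hyn : ‖γ (b - d) - z‖ < ρ := by rwa [Metric.mem_ball, dist_eq_norm] at hyB
  by_cases hc : b - δ ≤ σ
  · have := L.decr hσb (hSab.mono (Icc_subset_Icc hσa (by linarith))) fun u hu =>
      A.nearB L hf hgR ⟨by linarith [hu.1], by linarith [hu.2]⟩
    exact absurd (hxy i0) (not_le.2 this)
  push Not at hc
  have hb : γ b = Φ (γ (b - d), d) := by
    have := L.eq hf (A.solAt L (t := b - d) ⟨by linarith, by linarith⟩) hyB2 hdI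
    rwa [sub_add_cancel] at this
  have hf2 := hfar H _ γ a b A (σ + d) ⟨by linarith, by linarith⟩
  have hdist : ρ2 ≤ ‖γ σ - γ (b - d)‖ := by
    by_contra hn
    push Not at hn
    have hxB : γ σ ∈ Metric.closedBall z (2 * ρ) := by
      rw [Metric.mem_closedBall, dist_eq_norm]
      have := norm_sub_le_norm_sub_add_norm_sub (γ σ) (γ (b - d)) z
      linarith
    have h1 := hunif _ hxB _ hyB2 (hn.trans_le (min_le_left _ _))
    rw [← hb, ← L.eq hf (A.solAt L (t := σ) ⟨hσa, by linarith⟩) hxB hdI] at h1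
    have := norm_sub_le_norm_sub_add_norm_sub (γ (σ + d)) (γ b) z
    linarith [A.nb]
  set N := ‖γ σ - γ (b - d)‖ with hN
  have hN0 : 0 < N := by linarith
  set x := γ (b - d) + (ρ2 / N) • (γ σ - γ (b - d)) with hx
  have hl1 : ρ2 / N ≤ 1 := (div_le_one hN0).2 hdist
  have hl0 : 0 < ρ2 / N := div_pos hρ2 hN0
  have hxsub : x - γ (b - d) = (ρ2 / N) • (γ σ - γ (b - d)) := by rw [hx]; abel
  have hxn : ‖x - γ (b - d)‖ = ρ2 := by
    rw [hxsub, norm_smul, Real.norm_eq_abs, abs_of_pos hl0, ← hN]; field_simp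
  have hxB : x ∈ Metric.closedBall z (2 * ρ) := by
    rw [Metric.mem_closedBall, dist_eq_norm]
    have := norm_sub_le_norm_sub_add_norm_sub x (γ (b - d)) z
    linarith
  have hxle : x ≤ γ (b - d) := fun i => by
    have := hxy i
    simp only [hx, Pi.add_apply, Pi.smul_apply, Pi.sub_apply, smul_eq_mul]
    nlinarith
  have hlex : γ σ ≤ x := fun i => by
    have := hxy i
    simp only [hx, Pi.add_apply, Pi.smul_apply, Pi.sub_apply, smul_eq_mul]
    nlinarith
  have h1 : γ (σ + d) ≤ Φ (x, d) := by
    have fx := L.flow x hxB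
    have := sm_weak hf (x := fun t => γ (t + σ)) (y := fun t => Φ (x, t)) (a := 0) (b := d)
      (hSab.shift σ fun t ht => ⟨by linarith [ht.1], by linarith [ht.2]⟩)
      (fx.2.mono (Icc_subset_Icc (by linarith) (by linarith))) (by simpa [fx.1] using hlex) d ⟨hd.le, le_rfl⟩
    simpa [add_comm] using this
  have h2 := hmar x hxB _ hyB2 hxle hxn
  rw [← hb] at h2
  have h3 : ∀ i, γ b i < γ a i + k := by
    intro i
    have e1 := norm_le_pi_norm (γ a - z) i
    have e2 := norm_le_pi_norm (γ b - z) i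
    have e3 := A.na
    have e4 := A.nb
    simp only [Pi.sub_apply, Real.norm_eq_abs] at e1 e2
    have e5 := abs_le.1 e1
    have e6 := abs_le.1 e2
    linarith [e5.1, e6.2]
  refine valley hf hSab (c := σ + d) (by linarith) (by linarith) (fun i => ?_) ?_
  · linarith [h1 i, h2 i, h3 i]
  · exact strLt.lt fun i => by linarith [h1 i, h2 i]

lemma Arc.visible (A : Arc f H P z ρ' g γ a b) (hf : CoopSys f) {d : ℝ} (hd : 0 ≤ d)
    (hC : ∀ s ∈ Icc a (b - d), ∀ s' ∈ Icc a (b - d), s < s' → ¬ γ s ≤ γ s') {s : ℝ} (hs : s ∈ Icc a (b - d)) :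
    γ s ∈ Bd γ a b := by
  have hs' : s ∈ Icc a b := ⟨hs.1, by linarith [hs.2]⟩
  refine ⟨⟨s, hs', le_rfl⟩, ?_⟩
  rintro ⟨s1, hs1, h⟩
  rcases lt_trichotomy s1 s with h1 | h1 | h1
  · exact hC s1 ⟨hs1.1, by linarith [hs.2]⟩ s hs h1 h.le
  · rw [h1] at h; exact h.ne rfl
  · exact A.stepC' hf hs' hs1 h1 h

lemma Loc.sep (L : Loc f P z i0 ρ κ δ R Φ) (hf : CoopSys f) {ρ' : ℝ} (hρ' : ρ ≤ ρ') {C : ℝ} (hC : 0 < C)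
    (hb : ∀ x y : E3, ¬ strLt x y → ¬ strLt y x → ‖x - y‖ ≤ C * ‖P.π x - P.π y‖) :
    ∃ r > 0, C * r ≤ ρ ∧ ∃ g > 0, ∀ (H : E3 → ℝ) (γ : ℝ → E3) (a b : ℝ), Arc f H P z ρ' g γ a b →
      (∀ s ∈ Icc a (b - δ), γ s ∈ Bd γ a b) → ∀ t ∈ Icc (a + δ) (b - δ), r < ‖P.π (γ t) - P.π (γ (a + δ / 2))‖ := by
  have hδ := L.hδ
  have hρ := L.hρ
  have hI : -(δ / 2) ∈ Icc (-δ) δ := ⟨by linarith, by linarith⟩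
  obtain ⟨ρ0, hρ0, hfar⟩ := L.far hf hρ' (d := δ / 2) (by linarith) (by linarith)
  obtain ⟨e, he, hunif⟩ := L.unif hI (ε := ρ0 / 2) (by linarith)
  have hm : 0 < min ρ (e / 2) := lt_min hρ (by linarith)
  refine ⟨min ρ (e / 2) / C, div_pos hm hC, ?_, min R (ρ0 / 2), lt_min L.hR (by linarith), ?_⟩
  · rw [mul_div_cancel₀ _ hC.ne']; exact min_le_left _ _
  intro H γ a b A hv t ht
  by_contra hn
  push Not at hn
  have hgR : min R (ρ0 / 2) ≤ R := min_le_left _ _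
  have hg0 : min R (ρ0 / 2) ≤ ρ0 / 2 := min_le_right _ _
  have hlong := A.long L hf hgR
  have v1 := hv t ⟨by linarith [ht.1], ht.2⟩
  have v2 := hv (a + δ / 2) ⟨by linarith, by linarith⟩
  have h1 := hb _ _ (Bd_not v1.1 v2) (Bd_not v2.1 v1)
  have h2 : ‖γ t - γ (a + δ / 2)‖ ≤ min ρ (e / 2) := by
    refine h1.trans ?_
    have := mul_le_mul_of_nonneg_left hn hC.le
    rwa [mul_div_cancel₀ _ hC.ne'] at this
  have hx0 : γ (a + δ / 2) ∈ Metric.ball z ρ := A.nearA L hf hgR ⟨by linarith, by linarith⟩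
  have hx02 : γ (a + δ / 2) ∈ Metric.closedBall z (2 * ρ) :=
    Metric.ball_subset_closedBall (Metric.ball_subset_ball (by linarith) hx0)
  have hx0n : ‖γ (a + δ / 2) - z‖ < ρ := by rwa [Metric.mem_ball, dist_eq_norm] at hx0
  have ht2 : γ t ∈ Metric.closedBall z (2 * ρ) := by
    rw [Metric.mem_closedBall, dist_eq_norm]
    have := norm_sub_le_norm_sub_add_norm_sub (γ t) (γ (a + δ / 2)) z
    linarith [min_le_left ρ (e / 2)]
  have h3 := hunif _ ht2 _ hx02 (by linarith [min_le_right ρ (e / 2)])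
  rw [← L.eq hf (A.solAt L (t := t) ⟨by linarith [ht.1], by linarith [ht.2]⟩) ht2 hI,
    ← L.eq hf (A.solAt L (t := a + δ / 2) ⟨by linarith, by linarith⟩) hx02 hI] at h3
  rw [show a + δ / 2 + -(δ / 2) = a by ring] at h3
  have h4 := hfar H _ γ a b A (t + -(δ / 2)) ⟨by linarith [ht.1], by linarith [ht.2]⟩
  have := norm_sub_le_norm_sub_add_norm_sub (γ (t + -(δ / 2))) (γ a) z
  linarith [A.na]
end


section
variable {f : E3 → E3} {H : E3 → ℝ} {P : Proj} {z : E3} {i0 : Fin 3} {ρ κ δ R : ℝ} {Φ : E3 × ℝ → E3}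
variable {ρ' g : ℝ} {γ : ℝ → E3} {a b : ℝ}

lemma Arc.up_strict (A : Arc f H P z ρ' g γ a b) (hf : CoopSys f) {X : ℝ → E3} {u : ℝ} (hu : 0 < u) (hu1 : u ≤ 1)
    (hub : u ≤ b - a) (hX : Sol f X (Icc 0 u)) (h0 : X 0 ∈ Up γ a b) (hne : H (X 0) ≠ H z) : X u ∈ UpS γ a b := by
  obtain ⟨s, hs, hle⟩ := h0
  have hsI : s ∈ Icc (a - 1) (b + 1) := ⟨by linarith [hs.1], by linarith [hs.2]⟩
  have h1 := sm_strict hf (x := fun t => γ (t + s)) (y := X) (a := 0) (b := u)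
    (A.sol.shift s fun t ht => ⟨by linarith [ht.1, hs.1], by linarith [ht.2, hs.2]⟩) hX (by simpa using hle)
    (by
      intro e
      simp only [zero_add] at e
      exact hne (by rw [← e]; exact A.Hc s hsI)) u ⟨hu, le_rfl⟩
  by_cases hc : u + s ≤ b
  · exact ⟨u + s, ⟨by linarith [hs.1], hc⟩, h1⟩
  push Not at hc
  have := A.hab
  refine ⟨a + (u + s - b), ⟨by linarith, by linarith [hs.2]⟩, ?_⟩
  have h2 := shift_mono hf A.sol (s := a) (s' := b) (u := u + s - b) ⟨by linarith, by linarith⟩ ⟨by linarith, by linarith⟩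
    (by linarith) (by linarith [hs.2]) (by linarith [hs.2]) A.ord
  rw [show b + (u + s - b) = u + s by ring] at h2
  exact fun i => (h2 i).trans_lt (h1 i)

lemma Arc.contOn (A : Arc f H P z ρ' g γ a b) : ContinuousOn γ (Icc a b) :=
  A.sol.continuousOn.mono (Icc_subset_Icc (by linarith) (by linarith))

lemma Arc.no_max (A : Arc f H P z ρ' g γ a b) (hf : CoopSys f) (hH : FInt f H) {x : E3} (hx : x ∈ Bd γ a b)
    {U : Set E3} (hU : U ∈ 𝓝 x) (hmax : ∀ y ∈ Bd γ a b, y ∈ U → |H y - H z| ≤ |H x - H z|) (hne : H x ≠ H z) : False := by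
  obtain ⟨R, hR, ε, hε, Φ, hΦ, hc⟩ := local_flow hf x
  obtain ⟨ρ, hρ, hB⟩ := Metric.mem_nhds_iff.1 hU
  have hxR := Metric.mem_closedBall_self (x := x) hR.le
  obtain ⟨R2, hR2, δ2, hδ2, hR2R, hδ2ε, hst⟩ := stay_exists hR hε hρ (hΦ x hxR).1 hc
  have hab := A.hab
  set τ := min (δ2 / 2) (min 1 (b - a)) with hτd
  have hτ : 0 < τ := lt_min (by linarith) (lt_min one_pos (by linarith))
  have hτδ : τ ≤ δ2 / 2 := min_le_left _ _
  have hτ1 : τ ≤ 1 := (min_le_right _ _).trans (min_le_left _ _)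
  have hτb : τ ≤ b - a := (min_le_right _ _).trans (min_le_right _ _)
  have hHΦ : ∀ y ∈ Metric.closedBall x R, ∀ t ∈ Icc (-τ) τ, H (Φ (y, t)) = H y := by
    intro y hy t ht
    have := sol_H_const hH isOpen_Ioo ordConnected_Ioo ((hΦ y hy).2.mono Ioo_subset_Icc_self) (t := t) (t' := 0)
      ⟨by linarith [ht.1], by linarith [ht.2]⟩ ⟨by linarith, by linarith⟩
    simp only [(hΦ y hy).1] at this
    exact this
  have hup : Φ (x, τ) ∈ UpS γ a b := by
    have := A.up_strict hf (X := fun t => Φ (x, t)) hτ hτ1 hτb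
      ((hΦ x hxR).2.mono (Icc_subset_Icc (by linarith) (by linarith))) (by simpa [(hΦ x hxR).1] using hx.1)
      (by simpa [(hΦ x hxR).1] using hne)
    exact this
  have hdn : Φ (x, -τ) ∉ Up γ a b := by
    intro h
    have := A.up_strict hf (X := fun t => Φ (x, t + -τ)) hτ hτ1 hτb
      ((hΦ x hxR).2.shift (-τ) fun t ht => ⟨by linarith [ht.1], by linarith [ht.2]⟩) (by simpa using h)
      (by
        simp only [zero_add]
        rw [hHΦ x hxR (-τ) ⟨le_rfl, by linarith⟩]; exact hne)
    simp only [add_neg_cancel, (hΦ x hxR).1] at this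
    exact hx.2 this
  have hcat : ∀ t ∈ Icc (-τ) τ, ContinuousAt (fun y => Φ (y, t)) x := by
    intro t ht
    have hcc : ContinuousOn (fun y => Φ (y, t)) (Metric.closedBall x R) :=
      hc.comp (by fun_prop) fun y hy => ⟨hy, ⟨by linarith [ht.1], by linarith [ht.2]⟩⟩
    exact hcc.continuousAt (Metric.closedBall_mem_nhds x hR)
  have e1 : ∀ᶠ y in 𝓝 x, Φ (y, τ) ∈ UpS γ a b :=
    (hcat τ ⟨by linarith, le_rfl⟩) ((UpS_open γ a b).mem_nhds hup)
  have e2 : ∀ᶠ y in 𝓝 x, Φ (y, -τ) ∈ (Up γ a b)ᶜ :=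
    (hcat (-τ) ⟨le_rfl, by linarith⟩) ((Up_closed A.contOn).isOpen_compl.mem_nhds hdn)
  have key : ∀ᶠ y in 𝓝 x, |H y - H z| ≤ |H x - H z| := by
    filter_upwards [e1, e2, Metric.ball_mem_nhds x hR2] with y h1 h2 h3
    have hyR : y ∈ Metric.closedBall x R := Metric.ball_subset_closedBall (Metric.ball_subset_ball hR2R h3)
    obtain ⟨t, ht, hB'⟩ := crossing A.contOn (c := fun t => Φ (y, t)) (p := -τ) (q := τ) (by linarith)
      ((hΦ y hyR).2.continuousOn.mono (Icc_subset_Icc (by linarith) (by linarith))) h2 (UpS_sub _ _ _ h1)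
    have := hmax _ hB' (hB (hst y h3 t ⟨by linarith [ht.1], by linarith [ht.2]⟩))
    rwa [hHΦ y hyR t ht] at this
  apply hH.grad x
  rcases lt_or_gt_of_ne hne with h | h
  · have : IsLocalMin H x := by
      filter_upwards [key] with y hy
      rw [abs_of_neg (sub_neg.2 h)] at hy
      linarith [(abs_le.1 hy).1]
    exact this.fderiv_eq_zero
  · have : IsLocalMax H x := by
      filter_upwards [key] with y hy
      rw [abs_of_pos (sub_pos.2 h)] at hy
      linarith [(abs_le.1 hy).2]
    exact this.fderiv_eq_zero
end


lemma no_arc {f : E3 → E3} {H : E3 → ℝ} (hf : CoopSys f) (hH : FInt f H) (P : Proj) {z : E3} {i0 : Fin 3}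
    (hw : ∀ x, (P.π x).im = fderiv ℝ H z x) (hv1 : 0 < (P.π (f z)).re) (hv2 : f z i0 < 0) {ρ' : ℝ} (hρ'0 : 0 < ρ') :
    ∃ g > 0, ∀ (γ : ℝ → E3) (a b : ℝ), ¬ Arc f H P z ρ' g γ a b := by
  obtain ⟨C, hC, hb⟩ := P.bound
  obtain ⟨ρs, hρs, hst⟩ := hstrict hH z (ε := 1 / (2 * C)) (by positivity)
  obtain ⟨ρ, κ, δ, R, Φ, hρle, L⟩ := Loc.exists hf P hv1 hv2 (r := min ρ' (ρs / 2)) (lt_min hρ'0 (by linarith))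
  have hρρ' : ρ ≤ ρ' := hρle.trans (min_le_left _ _)
  have hρρs : ρ ≤ ρs / 2 := hρle.trans (min_le_right _ _)
  have hδ := L.hδ
  have hρ := L.hρ
  obtain ⟨r, hr, hCr, g1, hg1, hsep⟩ := L.sep hf hρρ' hC hb
  obtain ⟨μ, hμ, hμB⟩ : ∃ μ > 0, ∀ x ∈ Metric.ball z μ, |H x - H z| < r / 2 := by
    have := Metric.continuousAt_iff.1 (hH.smooth.continuous.continuousAt (x := z)) (r / 2) (by linarith)
    obtain ⟨μ, hμ, h⟩ := this
    exact ⟨μ, hμ, fun x hx => by simpa [Real.dist_eq] using h hx⟩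
  have hden : 0 < 2 * C * ‖P.π‖ + 2 := by positivity
  set ν := μ / (2 * C * ‖P.π‖ + 2) with hνd
  have hν : 0 < ν := div_pos hμ hden
  have hνμ : C * (‖P.π‖ * (2 * ν)) + ν < μ := by
    have : ν * (2 * C * ‖P.π‖ + 2) = μ := div_mul_cancel₀ _ hden.ne'
    nlinarith
  have hzc : z ∈ Metric.closedBall z (2 * ρ) := Metric.mem_closedBall_self (by linarith)
  obtain ⟨Rν, hRν, d0, hd0, hRν2, hd0δ, hstν⟩ := stay_exists (by linarith : 0 < 2 * ρ) hδ hν (L.flow z hzc).1 L.cont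
  set d := min d0 (δ / 2) with hdd
  have hd : 0 < d := lt_min hd0 (by linarith)
  have hdδ : d ≤ δ / 2 := min_le_right _ _
  have hdd0 : d ≤ d0 := min_le_left _ _
  obtain ⟨g2, hg2, hC2⟩ := L.stepC hf hρρ' hd hdδ
  refine ⟨min R (min g1 (min g2 (min Rν ν))), lt_min L.hR (lt_min hg1 (lt_min hg2 (lt_min hRν hν))), ?_⟩
  intro γ a b A
  set g := min R (min g1 (min g2 (min Rν ν))) with hgd
  have hgR : g ≤ R := min_le_left _ _
  have hgg1 : g ≤ g1 := (min_le_right _ _).trans (min_le_left _ _)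
  have hgg2 : g ≤ g2 := (min_le_right _ _).trans ((min_le_right _ _).trans (min_le_left _ _))
  have hgRν : g ≤ Rν := (min_le_right _ _).trans ((min_le_right _ _).trans ((min_le_right _ _).trans (min_le_left _ _)))
  have hgν : g ≤ ν := (min_le_right _ _).trans ((min_le_right _ _).trans ((min_le_right _ _).trans (min_le_right _ _)))
  have hab := A.hab
  have hlong := A.long L hf hgR
  have hvis : ∀ s ∈ Icc a (b - d), γ s ∈ Bd γ a b := fun s hs =>
    A.visible hf hd.le (hC2 H γ a b (A.mono hgg2)) hs
  have hsepA := hsep H γ a b (A.mono hgg1) fun s hs => hvis s ⟨hs.1, by linarith [hs.2]⟩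
  have hγa : γ a ∈ Bd γ a b := hvis a ⟨le_rfl, by linarith⟩
  have hHc : ∀ t ∈ Icc a b, H (γ t) = H z := fun t ht => A.Hc t ⟨by linarith [ht.1], by linarith [ht.2]⟩
  have hinner : ∀ s ∈ Icc (b - d) b, ‖γ s - z‖ < ν := by
    intro s hs
    have hbR : γ b ∈ Metric.ball z Rν := by rw [Metric.mem_ball, dist_eq_norm]; exact A.nb.trans_le hgRν
    have hbc : γ b ∈ Metric.closedBall z (2 * ρ) := Metric.ball_subset_closedBall (Metric.ball_subset_ball hRν2 hbR)
    have := L.eq hf (A.solAt L ⟨hab.le, le_rfl⟩) hbc (u := s - b) ⟨by linarith [hs.1], by linarith [hs.2]⟩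
    rw [add_sub_cancel] at this
    rw [this, ← dist_eq_norm, ← Metric.mem_ball]
    exact hstν _ hbR _ ⟨by linarith [hs.1], by linarith [hs.2]⟩
  have hbdd : ∀ x ∈ Bd γ a b, ‖x - γ a‖ ≤ C * ‖P.π x - P.π (γ a)‖ := fun x hx =>
    hb _ _ (Bd_not hx.1 hγa) (Bd_not hγa.1 hx)
  have hgap : ∀ x ∈ Bd γ a b, ‖P.π x - P.π (γ a)‖ ≤ ‖P.π‖ * (2 * ν) → |H x - H z| < r / 2 := by
    intro x hx h
    apply hμB
    rw [Metric.mem_ball, dist_eq_norm]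
    calc ‖x - z‖ = ‖(x - γ a) + (γ a - z)‖ := by congr 1; abel
      _ ≤ ‖x - γ a‖ + ‖γ a - z‖ := norm_add_le _ _
      _ < C * (‖P.π‖ * (2 * ν)) + ν := by
          have := mul_le_mul_of_nonneg_left h hC.le
          linarith [hbdd x hx, A.na]
      _ < μ := hνμ
  have hgap2 : ∀ y : E3, ‖y - z‖ < ν → ‖P.π y - P.π (γ a)‖ ≤ ‖P.π‖ * (2 * ν) := by
    intro y hy
    rw [← map_sub]
    refine (P.π.le_opNorm _).trans (mul_le_mul_of_nonneg_left ?_ (norm_nonneg _))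
    calc ‖y - γ a‖ = ‖(y - z) - (γ a - z)‖ := by congr 1; abel
      _ ≤ ‖y - z‖ + ‖γ a - z‖ := norm_sub_le _ _
      _ ≤ 2 * ν := by linarith [A.na]
  have hbν : ‖γ b - z‖ < ν := A.nb.trans_le hgν
  have hgapseg : ∀ ξ ∈ segment ℝ (P.π (γ a)) (P.π (γ b)), ‖ξ - P.π (γ a)‖ ≤ ‖P.π‖ * (2 * ν) := by
    intro ξ hξ
    have hconv : Convex ℝ (Metric.closedBall (P.π (γ a)) (‖P.π‖ * (2 * ν))) := convex_closedBall _ _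
    have := hconv.segment_subset (Metric.mem_closedBall_self (by positivity))
      (show P.π (γ b) ∈ _ by rw [Metric.mem_closedBall, dist_eq_norm]; exact hgap2 _ hbν) hξ
    rwa [Metric.mem_closedBall, dist_eq_norm] at this
  have hsegre : ∀ ξ ∈ segment ℝ (P.π (γ a)) (P.π (γ b)), ξ.re = (P.π z).re := by
    rintro ξ ⟨c1, c2, h1, h2, h12, rfl⟩
    simp only [Complex.add_re, Complex.real_smul, Complex.re_ofReal_mul, A.ra, A.rb]
    rw [← add_mul, h12, one_mul]
  set s := a + δ / 2 with hs
  have hsI : s ∈ Icc a (b - d) := ⟨by linarith, by linarith⟩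
  have hsI' : s ∈ Icc a b := ⟨by linarith, by linarith⟩
  have hκ := L.hκ
  have hres : (P.π z).re < (P.π (γ s)).re := by
    have := A.incA L hf hgR (s := a) (t := s) (by linarith) (by linarith) (by linarith)
    rw [A.ra] at this
    have : 0 < κ * (s - a) := mul_pos hκ (by linarith)
    linarith
  have hreB : ∀ t ∈ Icc (b - δ) b, (P.π (γ t)).re ≤ (P.π z).re := by
    intro t ht
    have := A.incB L hf hgR (s := t) (t := b) ht.1 ht.2 (by linarith)
    rw [A.rb] at this
    have : 0 ≤ κ * (b - t) := mul_nonneg hκ.le (by linarith [ht.2])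
    linarith
  have hreA : ∀ t t', a ≤ t → t < t' → t' ≤ a + δ → (P.π (γ t)).re < (P.π (γ t')).re := by
    intro t t' h1 h2 h3
    have := A.incA L hf hgR (s := t) (t := t') (by linarith) h2.le h3
    have : 0 < κ * (t' - t) := mul_pos hκ (by linarith)
    linarith
  have h1' : ∀ t ∈ Icc (a + δ) b, ∀ τ : ℝ, |τ| ≤ r → P.π (γ t) ≠ P.π (γ s) + τ * Complex.I := by
    intro t ht τ hτ e
    rcases le_or_gt t (b - δ) with h | h
    · have := hsepA t ⟨ht.1, h⟩
      rw [e] at this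
      simp at this
      linarith
    · have := hreB t ⟨h.le, ht.2⟩
      rw [e] at this
      simp at this
      linarith
  have h2' : ∀ τ : ℝ, P.π (γ s) + τ * Complex.I ∉ segment ℝ (P.π (γ a)) (P.π (γ b)) := by
    intro τ h
    have := hsegre _ h
    simp at this
    linarith
  obtain ⟨D, hDo, hDb, hDd, hDc, τ, hτ, hτD⟩ := wind (η := fun t => P.π (γ t)) (η' := fun t => P.π (f (γ t))) (a := a) (s := s)
    (m := a + δ) (b := b) (r := r) (by linarith) (by linarith) (by linarith) hr
    (fun t ht => P.π.hasFDerivAt.comp_hasDerivAt t (A.sol t ⟨by linarith [ht.1], by linarith [ht.2]⟩))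
    ((P.π.continuous.comp hf.smooth.continuous).comp_continuousOn A.contOn)
    (fun t ht => hreA t s ht.1 ht.2 (by linarith))
    (fun t ht => hreA s t (by linarith) ht.1 ht.2)
    (fun t ht => by have := h1' t ht 0 (by simpa using hr.le); simpa using this)
    (by have := h2' 0; simpa using this)
    (by
      rintro τ hτ0 hτ (⟨t, ht, e⟩ | h)
      · simp only at e
        rcases le_or_gt t (a + δ) with h | h
        · have ere := congrArg Complex.re e
          simp at ere
          rcases lt_trichotomy t s with h3 | h3 | h3
          · linarith [hreA t s ht.1 h3 (by linarith)]
          · subst h3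
            simp at e
            exact hτ0 e
          · linarith [hreA s t (by linarith) h3 h]
        · exact h1' t ⟨h.le, ht.2⟩ τ hτ e
      · exact h2' τ h)
  obtain ⟨q, hq, hqπ⟩ := Bd_over P hab.le A.contOn (P.π (γ s) + τ * Complex.I)
  have hqH : r / 2 ≤ |H q - H z| := by
    have hγs := hvis s hsI
    have hn : ‖q - γ s‖ ≤ C * r := by
      have := hb q (γ s) (Bd_not hq.1 hγs) (Bd_not hγs.1 hq)
      rw [hqπ] at this
      simpa [hτ] using this
    have hsz : ‖γ s - z‖ < ρ := by
      have := A.nearA L hf hgR (t := s) ⟨by linarith, by linarith⟩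
      rwa [Metric.mem_ball, dist_eq_norm] at this
    have hqz : ‖q - z‖ < ρs := by
      calc ‖q - z‖ = ‖(q - γ s) + (γ s - z)‖ := by congr 1; abel
        _ ≤ ‖q - γ s‖ + ‖γ s - z‖ := norm_add_le _ _
        _ < ρs := by linarith
    have := hst q (by rwa [Metric.mem_ball, dist_eq_norm]) (γ s) (by rw [Metric.mem_ball, dist_eq_norm]; linarith)
    rw [← hw, map_sub, hqπ, hHc s hsI'] at this
    have him : (P.π (γ s) + τ * Complex.I - P.π (γ s)).im = τ := by simp
    rw [him] at this
    have h5 : 1 / (2 * C) * ‖q - γ s‖ ≤ r / 2 := by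
      calc 1 / (2 * C) * ‖q - γ s‖ ≤ 1 / (2 * C) * (C * r) := mul_le_mul_of_nonneg_left hn (by positivity)
        _ = r / 2 := by field_simp
    have h6 : |τ| - |H q - H z| ≤ |H q - H z - τ| := by
      rw [abs_sub_comm (H q - H z) τ]; exact abs_sub_abs_le_abs_sub _ _
    linarith
  set K := Bd γ a b ∩ P.π ⁻¹' closure D with hK
  have hKc : IsCompact K := by
    rw [Metric.isCompact_iff_isClosed_bounded]
    refine ⟨(Bd_closed A.contOn).inter (isClosed_closure.preimage P.π.continuous), ?_⟩
    obtain ⟨M, hM⟩ := hDb.closure.subset_closedBall (P.π (γ a))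
    refine (Metric.isBounded_closedBall (x := γ a) (r := C * M)).subset ?_
    rintro x ⟨hx, hxD⟩
    rw [Metric.mem_closedBall, dist_eq_norm]
    refine (hbdd x hx).trans (mul_le_mul_of_nonneg_left ?_ hC.le)
    rw [← dist_eq_norm]; exact hM hxD
  have hqK : q ∈ K := ⟨hq, subset_closure (by rw [hqπ]; exact hτD)⟩
  have hcontH : Continuous fun x => |H x - H z| := (hH.smooth.continuous.sub continuous_const).abs
  obtain ⟨x, hxK, hxmax⟩ := hKc.exists_isMaxOn ⟨q, hqK⟩ hcontH.continuousOn
  have hxr : r / 2 ≤ |H x - H z| := hqH.trans (hxmax hqK)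
  have hxne : H x ≠ H z := by
    intro e
    rw [e, sub_self, abs_zero] at hxr
    linarith
  have hxD : P.π x ∈ D := by
    rcases hDc hxK.2 with h | ⟨t, ht, e⟩ | h
    · exact h
    · exfalso
      simp only at e
      rcases le_or_gt t (b - d) with h | h
      · have hγt := hvis t ⟨ht.1, h⟩
        have := P.ext_of (Bd_not hxK.1.1 hγt) (Bd_not hγt.1 hxK.1) e.symm
        exact hxne (by rw [this]; exact hHc t ht)
      · have := hgap x hxK.1 (by rw [← e]; exact hgap2 _ (hinner t ⟨h.le, ht.2⟩))
        linarith
    · have := hgap x hxK.1 (hgapseg _ h)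
      linarith
  exact A.no_max hf hH hxK.1 ((hDo.preimage P.π.continuous).mem_nhds hxD)
    (fun y hy hyU => hxmax ⟨hy, subset_closure hyU⟩) hxne


section
variable {f : E3 → E3} {H : E3 → ℝ} {γ : ℝ → E3} {l : Filter ℝ} {A : Set ℝ}

lemma LimS_cluster {K : Set E3} (hK : IsCompact K) (h : ∃ᶠ t in l, γ t ∈ K) : ∃ y ∈ K, y ∈ LimS γ l := by
  obtain ⟨y, hy, hc⟩ := hK.exists_mapClusterPt_of_frequently h
  exact ⟨y, hy, hc⟩

lemma LimS_closed : IsClosed (LimS γ l) := isClosed_setOfPred_clusterPt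

lemma LimS_proj (T : Traj f γ l A) (hf : CoopSys f) (hH : FInt f H) {p p' q : E3} (hp : p ∈ LimS γ l) (hp' : p' ∈ LimS γ l)
    (hne : p ≠ p') (hq : q ∈ LimS γ l) : ∃ P : Proj, ∀ x, (P.π x).im = fderiv ℝ H q x := by
  have h1 : ¬ 0 ≤ gradv H q := fun h => hne (caseI T hf hH hq h hp hp')
  have h2 : ¬ gradv H q ≤ 0 := fun h => hne (caseI T hf hH.neg' hq (by
    intro i
    have := h i
    simp only [gradv, Pi.zero_apply] at this ⊢
    rw [fderiv_fun_neg]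
    simpa using this) hp hp')
  rw [Pi.le_def] at h1 h2
  push Not at h1 h2
  obtain ⟨j, hj⟩ := h1
  obtain ⟨i, hi⟩ := h2
  obtain ⟨v, hv, hwv⟩ := exists_pos_ker hi hj
  obtain ⟨P, _, hP⟩ := exists_proj (gradv_ne hH q) hv hwv
  refine ⟨P, fun x => ?_⟩
  rw [hP, gradv_apply, dotL_apply, Fin.sum_univ_three]

/-- a limit point that is not an equilibrium -/
lemma LimS_nonequil (T : Traj f γ l A) (hf : CoopSys f) (hH : FInt f H) {p p' : E3} (hp : p ∈ LimS γ l) (hp' : p' ∈ LimS γ l)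
    (hne : p ≠ p') : ∃ z ∈ LimS γ l, f z ≠ 0 := by
  obtain ⟨P, hw⟩ := LimS_proj T hf hH hp hp' hne hp
  obtain ⟨ρ, hρ, hgr⟩ := graph hH P hw
  have hd : 0 < ‖p' - p‖ := norm_pos_iff.2 (sub_ne_zero.2 hne.symm)
  set ρ0 := min ρ ‖p' - p‖ / 2 with hρ0d
  have hρ0 : 0 < ρ0 := half_pos (lt_min hρ hd)
  have hρ0ρ : ρ0 < ρ := by have := min_le_left ρ ‖p' - p‖; linarith
  have hρ0d' : ρ0 < ‖p' - p‖ := by have := min_le_right ρ ‖p' - p‖; linarith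
  set β : E3 → ℝ := fun x => (P.π x).re with hβ
  have hβc : Continuous β := Complex.continuous_re.comp P.π.continuous
  have hsub : Metric.closedBall p ρ0 ⊆ Metric.ball p ρ := Metric.closedBall_subset_ball hρ0ρ
  have hHp : ∀ y ∈ LimS γ l, H y = H p := by
    intro y hy
    have : l.NeBot := hp.neBot.mono inf_le_right |>.of_map
    obtain ⟨t, ht⟩ := this.nonempty_of_mem T.mem
    rw [← LimS_H T hH hy ht, LimS_H T hH hp ht]
  have hS : ∀ y ∈ LimS γ l ∩ Metric.sphere p ρ0, β y ≠ β p := by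
    rintro y ⟨hyL, hyS⟩ e
    rcases hgr y (hsub (Metric.sphere_subset_closedBall hyS)) p (Metric.mem_ball_self hρ) (hHp y hyL) e with h | h | h
    · rw [h, Metric.mem_sphere, dist_self] at hyS; linarith
    · exact no_ll T hf hyL hp h
    · exact no_ll T hf hp hyL h
  have hKc : IsCompact (LimS γ l ∩ Metric.sphere p ρ0) := (isCompact_sphere p ρ0).inter_left LimS_closed
  obtain ⟨μ, hμ, hμ2⟩ : ∃ μ > 0, ∀ y ∈ LimS γ l ∩ Metric.sphere p ρ0, μ < |β y - β p| := by
    rcases (LimS γ l ∩ Metric.sphere p ρ0).eq_empty_or_nonempty with h | h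
    · exact ⟨1, one_pos, fun y hy => by rw [h] at hy; exact hy.elim⟩
    · obtain ⟨y, hy, hmin⟩ := hKc.exists_isMinOn h ((hβc.sub continuous_const).abs.continuousOn (s := _) : ContinuousOn (fun y => |β y - β p|) _)
      have h0 : 0 < |β y - β p| := abs_pos.2 (sub_ne_zero.2 (hS y hy))
      refine ⟨|β y - β p| / 2, by linarith, fun x hx => ?_⟩
      have : |β y - β p| ≤ |β x - β p| := hmin hx
      linarith
  have hev : ∀ᶠ t in l, γ t ∈ Metric.sphere p ρ0 → μ < |β (γ t) - β p| := by
    by_contra hn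
    rw [not_eventually] at hn
    obtain ⟨y, hy, hyL⟩ := LimS_cluster (K := Metric.sphere p ρ0 ∩ {y | |β y - β p| ≤ μ})
      ((isCompact_sphere p ρ0).inter_right (isClosed_le (hβc.sub continuous_const).abs continuous_const))
      (hn.mono fun t ht => by push Not at ht; exact ht)
    exact absurd (hμ2 y ⟨hyL, hy.1⟩) (not_lt.2 hy.2)
  have hfr : ∃ᶠ t in l, γ t ∈ Metric.closedBall p ρ0 ∧ |β (γ t) - β p| = μ / 2 := by
    intro hE
    obtain ⟨S, hSsub, hSl, hSo⟩ := T.basis _ (hev.and hE)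
    have f1 : ∃ᶠ t in l, (‖γ t - p‖ < ρ0 ∧ |β (γ t) - β p| < μ / 2) ∧ t ∈ S := by
      refine (LimS.freq (P := fun x => ‖x - p‖ < ρ0 ∧ |β x - β p| < μ / 2) hp ?_).and_eventually hSl
      have c1 : Continuous fun x : E3 => ‖x - p‖ := by fun_prop
      have c2 : Continuous fun x : E3 => |β x - β p| := by fun_prop
      exact (c1.continuousAt.eventually_lt continuousAt_const (by simpa using hρ0)).and
        (c2.continuousAt.eventually_lt continuousAt_const (by simpa using hμ))
    have f2 : ∃ᶠ t in l, ρ0 < ‖γ t - p‖ ∧ t ∈ S := by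
      refine (LimS.freq (P := fun x => ρ0 < ‖x - p‖) hp' ?_).and_eventually hSl
      have c1 : Continuous fun x : E3 => ‖x - p‖ := by fun_prop
      exact continuousAt_const.eventually_lt c1.continuousAt hρ0d'
    obtain ⟨t1, t2, t3, h12, h23, hA, ⟨p1, p1S⟩, ⟨p2, p2S⟩, _⟩ := T.ends _ _ _ f1 f2 f2
    have hcγ : ContinuousOn γ (Icc t1 t2) := (T.sol.mono ((Icc_subset_Icc (by linarith) (by linarith)).trans hA)).continuousOn
    obtain ⟨t, ht, hte, htl⟩ := first_exit (g := fun t => ‖γ t - p‖) (by linarith : t1 ≤ t2) (hcγ.sub continuousOn_const).norm p1.1 p2.le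
    have htS : t ∈ S := hSo.out p1S p2S ⟨ht.1.le, ht.2⟩
    have hb := (hSsub htS).1 (by rw [Metric.mem_sphere, dist_eq_norm]; exact hte)
    have hcb : ContinuousOn (fun s => |β (γ s) - β p|) (Icc t1 t) := by
      have : ContinuousOn (fun s => β (γ s)) (Icc t1 t) := hβc.comp_continuousOn (hcγ.mono (Icc_subset_Icc le_rfl ht.2))
      exact (this.sub continuousOn_const).abs
    obtain ⟨s, hs, hse⟩ := intermediate_value_Icc ht.1.le hcb (show μ / 2 ∈ Icc _ _ from ⟨p1.2.le, by linarith⟩)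
    refine (hSsub (hSo.out p1S p2S ⟨hs.1, hs.2.trans ht.2⟩)).2 ⟨?_, hse⟩
    rw [Metric.mem_closedBall, dist_eq_norm]
    rcases hs.2.lt_or_eq with h | h
    · exact (htl s ⟨hs.1, h⟩).le
    · rw [h]; exact hte.le
  obtain ⟨c, hc⟩ : ∃ c, ∃ᶠ t in l, γ t ∈ Metric.closedBall p ρ0 ∩ {y | β y = c} := by
    have : ∃ᶠ t in l, (γ t ∈ Metric.closedBall p ρ0 ∩ {y | β y = β p + μ / 2}) ∨ (γ t ∈ Metric.closedBall p ρ0 ∩ {y | β y = β p - μ / 2}) := by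
      refine hfr.mono fun t ht => ?_
      rcases (abs_eq (by linarith)).1 ht.2 with h | h
      · exact Or.inl ⟨ht.1, by simp only [mem_ofPred_eq]; linarith⟩
      · exact Or.inr ⟨ht.1, by simp only [mem_ofPred_eq]; linarith⟩
    rcases frequently_or_distrib.1 this with h | h
    exacts [⟨_, h⟩, ⟨_, h⟩]
  obtain ⟨z, hz, hzL⟩ := LimS_cluster ((isCompact_closedBall p ρ0).inter_right (isClosed_eq hβc continuous_const)) hc
  refine ⟨z, hzL, fun hfz => ?_⟩
  have : ∃ᶠ t in l, z ≤ γ t ∨ γ t ≤ z := by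
    refine (hc.and_eventually T.mem).mono fun t ht => ?_
    rcases hgr (γ t) (hsub ht.1.1) z (hsub hz.1) (LimS_H T hH hzL ht.2) (ht.1.2.trans hz.2.symm) with h | h | h
    · exact Or.inl h.ge
    · exact Or.inr h.le
    · exact Or.inl h.le
  rcases frequently_or_distrib.1 this with h | h
  · exact hne ((LimS_ge T hf hfz hzL h hp).trans (LimS_ge T hf hfz hzL h hp').symm)
  · exact hne ((LimS_le T hf hfz hzL h hp).trans (LimS_le T hf hfz hzL h hp').symm)

end


def Proj.minus (P : Proj) : Proj where
  v := P.v
  π := -P.π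
  σ := -P.σ
  h := P.h
  vpos := P.vpos
  pv := by simp [P.pv]
  ps := fun ξ => by simp [P.ps]
  dec := fun x => by
    conv_lhs => rw [P.dec x]
    simp

lemma norm_between {x y w z : E3} {g : ℝ} (hxy : x ≤ y) (hyw : y ≤ w) (hx : ‖x - z‖ < g) (hw : ‖w - z‖ < g) : ‖y - z‖ < g := by
  have hg : 0 < g := (norm_nonneg _).trans_lt hx
  rw [pi_norm_lt_iff hg] at hx hw ⊢
  intro i
  have h1 := abs_lt.1 (hx i)
  have h2 := abs_lt.1 (hw i)
  have h3 := hxy i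
  have h4 := hyw i
  simp only [Pi.sub_apply] at h1 h2 ⊢
  rw [Real.norm_eq_abs, abs_lt]
  exact ⟨by linarith [h1.1], by linarith [h2.2]⟩

section
variable {f : E3 → E3} {H : E3 → ℝ} {γ : ℝ → E3} {l : Filter ℝ} {A : Set ℝ}

lemma mid_close (hf : CoopSys f) {t1 c t3 : ℝ} (h1 : t1 ≤ c) (h3 : c ≤ t3) (hγ : Sol f γ (Icc t1 t3)) {z : E3} {g : ℝ}
    (n1 : ‖γ t1 - z‖ < g) (n3 : ‖γ t3 - z‖ < g) (o1 : γ t1 = γ c ∨ strLt (γ t1) (γ c) ∨ strLt (γ c) (γ t1))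
    (o3 : γ c = γ t3 ∨ strLt (γ c) (γ t3) ∨ strLt (γ t3) (γ c)) : ‖γ c - z‖ < g := by
  rcases o1 with e | o1
  · rw [← e]; exact n1
  rcases o3 with e | o3
  · rw [e]; exact n3
  have h1' : t1 < c := lt_of_le_of_ne h1 fun e => by
    subst e
    rcases o1 with h | h <;> exact h.ne rfl
  have h3' : c < t3 := lt_of_le_of_ne h3 fun e => by
    subst e
    rcases o3 with h | h <;> exact h.ne rfl
  rcases o1 with o1 | o1 <;> rcases o3 with o3 | o3
  · exact norm_between o1.le o3.le n1 n3
  · exact (peak hf hγ h1' h3' o1 o3.lt).elim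
  · exact (valley hf hγ h1' h3' o1 o3.lt).elim
  · exact norm_between o3.le o1.le n3 n1

lemma freq_cross (T : Traj f γ l A) (hf : CoopSys f) {P : Proj} {z : E3} {i0 : Fin 3} (hz : z ∈ LimS γ l)
    (h1 : 0 < (P.π (f z)).re) (h2 : f z i0 < 0) {g : ℝ} (hg : 0 < g) :
    ∃ᶠ t in l, ‖γ t - z‖ < g ∧ (P.π (γ t)).re = (P.π z).re := by
  intro hE
  obtain ⟨ρ, κ, δ, R, Φ, hρg, L⟩ := Loc.exists hf P h1 h2 hg
  have hδ := L.hδ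
  obtain ⟨S, hSsub, hSl, hSo⟩ := T.basis _ (inter_mem hE T.mem)
  have hSev : ∀ᶠ t in l, Icc (t - δ) (t + δ) ⊆ S := by
    filter_upwards [(T.shift (-δ)).eventually hSl, (T.shift δ).eventually hSl] with t ht1 ht2
    exact hSo.out ht1 ht2
  have hfr : ∃ᶠ t in l, ‖γ t - z‖ < R ∧ |(P.π (γ t)).re - (P.π z).re| < κ * δ := by
    refine LimS.freq (P := fun x => ‖x - z‖ < R ∧ |(P.π x).re - (P.π z).re| < κ * δ) hz ?_
    have c1 : Continuous fun x : E3 => ‖x - z‖ := by fun_prop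
    have c0 : Continuous fun x : E3 => (P.π x).re := Complex.continuous_re.comp P.π.continuous
    have c2 : Continuous fun x : E3 => |(P.π x).re - (P.π z).re| := by fun_prop
    exact (c1.continuousAt.eventually_lt continuousAt_const (by simpa using L.hR)).and
      (c2.continuousAt.eventually_lt continuousAt_const (by simpa using mul_pos L.hκ hδ))
  obtain ⟨t, ⟨n1, n2⟩, hsub⟩ := (hfr.and_eventually hSev).exists
  have hsol : Sol f γ (Icc (t - δ) (t + δ)) := T.sol.mono fun s hs => (hSsub (hsub hs)).2
  have hnear : ∀ s ∈ Icc (t - δ) (t + δ), γ s ∈ Metric.ball z ρ := fun s hs => L.near hf hsol n1 hs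
  have s1 : Icc (t - δ) t ⊆ Icc (t - δ) (t + δ) := Icc_subset_Icc le_rfl (by linarith)
  have s2 : Icc t (t + δ) ⊆ Icc (t - δ) (t + δ) := Icc_subset_Icc (by linarith) le_rfl
  have i1 := L.inc (by linarith) (hsol.mono s1) fun u hu => hnear u (s1 hu)
  have i2 := L.inc (by linarith) (hsol.mono s2) fun u hu => hnear u (s2 hu)
  have hab := abs_lt.1 n2
  have hcont : ContinuousOn (fun u => (P.π (γ u)).re) (Icc (t - δ) (t + δ)) :=
    (Complex.continuous_re.comp P.π.continuous).comp_continuousOn hsol.continuousOn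
  obtain ⟨u, hu, hur⟩ := intermediate_value_Icc (by linarith : t - δ ≤ t + δ) hcont
    (show (P.π z).re ∈ Icc _ _ from ⟨by linarith, by linarith⟩)
  refine (hSsub (hsub hu)).1 ⟨?_, hur⟩
  rw [← dist_eq_norm]
  exact (Metric.mem_ball.1 (hnear u hu)).trans_le hρg

lemma LimS_velocity (T : Traj f γ l A) (hf : CoopSys f) (hH : FInt f H) {P : Proj} {z : E3} (hz : z ∈ LimS γ l)
    (hfz : f z ≠ 0) (hw : ∀ x, (P.π x).im = fderiv ℝ H z x) :
    ∃ P : Proj, (∀ x, (P.π x).im = fderiv ℝ H z x) ∧ 0 < (P.π (f z)).re := by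
  have him : (P.π (f z)).im = 0 := by rw [hw, hH.inv]
  rcases lt_trichotomy (P.π (f z)).re 0 with h | h | h
  · refine ⟨P.flip, fun x => ?_, ?_⟩
    · rw [← hw]; simp [Proj.flip]
    · simpa [Proj.flip] using h
  · exfalso
    have h0 : P.π (f z) = 0 := Complex.ext h him
    have hd := P.dec (f z)
    rw [h0, map_zero, zero_add] at hd
    rcases le_total 0 (P.h (f z)) with hh | hh
    · refine hfz (LimS_nonneg T hf hz ?_)
      rw [hd]
      exact fun i => mul_nonneg hh (P.vpos i).le
    · refine hfz (LimS_nonpos T hf hz ?_)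
      rw [hd]
      exact fun i => mul_nonpos_of_nonpos_of_nonneg hh (P.vpos i).le
  · exact ⟨P, hw, h⟩

theorem LimS_subsingleton (T : Traj f γ l A) (hf : CoopSys f) (hH : FInt f H) : (LimS γ l).Subsingleton := by
  intro p hp p' hp'
  by_contra hne
  obtain ⟨z, hz, hfz⟩ := LimS_nonequil T hf hH hp hp' hne
  obtain ⟨P0, hw0⟩ := LimS_proj T hf hH hp hp' hne hz
  obtain ⟨P, hw, hre⟩ := LimS_velocity T hf hH hz hfz hw0
  obtain ⟨i0, hi0⟩ : ∃ i, f z i < 0 := by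
    by_contra hn
    push Not at hn
    exact hfz (LimS_nonneg T hf hz hn)
  obtain ⟨j0, hj0⟩ : ∃ i, 0 < f z i := by
    by_contra hn
    push Not at hn
    exact hfz (LimS_nonpos T hf hz hn)
  obtain ⟨w, hwL, hwz⟩ : ∃ w ∈ LimS γ l, w ≠ z := by
    by_cases h : p = z
    · exact ⟨p', hp', fun e => hne (h.trans e.symm)⟩
    · exact ⟨p, hp, h⟩
  obtain ⟨ρ, hρ, hgr⟩ := graph hH P hw
  have hd : 0 < ‖w - z‖ := norm_pos_iff.2 (sub_ne_zero.2 hwz)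
  set ρ' := min ρ ‖w - z‖ / 2 with hρ'd
  have hρ' : 0 < ρ' := half_pos (lt_min hρ hd)
  have hρ'ρ : ρ' < ρ := by have := min_le_left ρ ‖w - z‖; linarith
  have hρ'w : ρ' < ‖w - z‖ := by have := min_le_right ρ ‖w - z‖; linarith
  obtain ⟨g1, hg1, hno1⟩ := no_arc hf hH P hw hre hi0 hρ'
  obtain ⟨g2, hg2, hno2⟩ := no_arc hf.neg hH.neg P.minus (z := -z) (i0 := j0)
    (fun x => by rw [fderiv_comp_neg_aux hH.diff]; simp [Proj.minus, hw]) (by simpa [Proj.minus] using hre)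
    (by simpa using hj0) hρ'
  set g := min (min g1 g2) ρ' with hgd
  have hg : 0 < g := lt_min (lt_min hg1 hg2) hρ'
  have hgg1 : g ≤ g1 := (min_le_left _ _).trans (min_le_left _ _)
  have hgg2 : g ≤ g2 := (min_le_left _ _).trans (min_le_right _ _)
  have hgρ : g ≤ ρ' := min_le_right _ _
  have f1 := freq_cross T hf hz hre hi0 hg
  have f2 : ∃ᶠ t in l, ρ' < ‖γ t - z‖ := by
    refine LimS.freq (P := fun x => ρ' < ‖x - z‖) hwL ?_
    have c1 : Continuous fun x : E3 => ‖x - z‖ := by fun_prop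
    exact continuousAt_const.eventually_lt c1.continuousAt hρ'w
  obtain ⟨t1, t2, t3, h12, h23, hA, ⟨p1, q1⟩, p2, p3, q3⟩ := T.ends _ _ _ f1 f2 f1
  have hsol : Sol f γ (Icc (t1 - 1) (t3 + 1)) := T.sol.mono hA
  have hcont := hsol.continuousOn
  set Z : Set E3 := Metric.closedBall z ρ' ∩ {x | (P.π x).re = (P.π z).re} with hZ
  have hZc : IsClosed Z := Metric.isClosed_closedBall.inter
    (isClosed_eq (Complex.continuous_re.comp P.π.continuous) continuous_const)
  have hcomp : ∀ u v, t1 - 1 ≤ u → v ≤ t3 + 1 → IsCompact (Icc u v ∩ γ ⁻¹' Z) := fun u v hu hv =>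
    isCompact_Icc.of_isClosed_subset ((hcont.mono (Icc_subset_Icc hu hv)).preimage_isClosed_of_isClosed isClosed_Icc hZc)
      inter_subset_left
  have hZ1 : γ t1 ∈ Z := ⟨by rw [Metric.mem_closedBall, dist_eq_norm]; linarith, q1⟩
  have hZ3 : γ t3 ∈ Z := ⟨by rw [Metric.mem_closedBall, dist_eq_norm]; linarith, q3⟩
  have hZ2 : γ t2 ∉ Z := fun h => by
    have := h.1
    rw [Metric.mem_closedBall, dist_eq_norm] at this; linarith
  obtain ⟨a, ⟨haI, haZ⟩, hamax⟩ := (hcomp t1 t2 (by linarith) (by linarith)).exists_isGreatest ⟨t1, ⟨le_rfl, by linarith⟩, hZ1⟩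
  obtain ⟨b, ⟨hbI, hbZ⟩, hbmin⟩ := (hcomp t2 t3 (by linarith) (by linarith)).exists_isLeast ⟨t3, ⟨by linarith, le_rfl⟩, hZ3⟩
  have hat : a < t2 := lt_of_le_of_ne haI.2 fun e => hZ2 (e ▸ haZ)
  have htb : t2 < b := lt_of_le_of_ne hbI.1 fun e => hZ2 (e ▸ hbZ)
  have hHz : ∀ t ∈ Icc (t1 - 1) (t3 + 1), H (γ t) = H z := fun t ht => LimS_H T hH hz (hA ht)
  have hord : ∀ s ∈ Icc t1 t3, ∀ t ∈ Icc t1 t3, γ s ∈ Z → γ t ∈ Z → γ s = γ t ∨ strLt (γ s) (γ t) ∨ strLt (γ t) (γ s) := by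
    intro s hs t ht hsZ htZ
    refine hgr _ (Metric.closedBall_subset_ball hρ'ρ hsZ.1) _ (Metric.closedBall_subset_ball hρ'ρ htZ.1) ?_ (hsZ.2.trans htZ.2.symm)
    rw [hHz s ⟨by linarith [hs.1], by linarith [hs.2]⟩, hHz t ⟨by linarith [ht.1], by linarith [ht.2]⟩]
  have m1 : t1 ∈ Icc t1 t3 := ⟨le_rfl, by linarith⟩
  have m3 : t3 ∈ Icc t1 t3 := ⟨by linarith, le_rfl⟩
  have ma : a ∈ Icc t1 t3 := ⟨haI.1, by linarith⟩
  have mb : b ∈ Icc t1 t3 := ⟨by linarith, hbI.2⟩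
  have hsol' : Sol f γ (Icc t1 t3) := hsol.mono (Icc_subset_Icc (by linarith) (by linarith))
  have na : ‖γ a - z‖ < g := mid_close hf ma.1 ma.2 hsol' p1 p3 (hord _ m1 _ ma hZ1 haZ) (hord _ ma _ m3 haZ hZ3)
  have nb : ‖γ b - z‖ < g := mid_close hf mb.1 mb.2 hsol' p1 p3 (hord _ m1 _ mb hZ1 hbZ) (hord _ mb _ m3 hbZ hZ3)
  have nc : ∀ t ∈ Ioo a b, γ t ∈ Metric.closedBall z ρ' → (P.π (γ t)).re ≠ (P.π z).re := by
    intro t ht h1 h2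
    rcases le_total t t2 with h | h
    · have := hamax ⟨⟨by linarith [ht.1, haI.1], h⟩, h1, h2⟩
      linarith [ht.1]
    · have := hbmin ⟨⟨h, by linarith [ht.2, hbI.2]⟩, h1, h2⟩
      linarith [ht.2]
  have hsubab : Icc (a - 1) (b + 1) ⊆ Icc (t1 - 1) (t3 + 1) := Icc_subset_Icc (by linarith [haI.1]) (by linarith [hbI.2])
  have case1 : γ a ≤ γ b → False := fun h => hno1 γ a b
    ⟨by linarith, hsol.mono hsubab, fun t ht => hHz t (hsubab ht), na.trans_le hgg1, nb.trans_le hgg1, haZ.2, hbZ.2, nc, h⟩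
  have case2 : γ b ≤ γ a → False := fun h => hno2 (fun t => - γ t) a b
    { hab := by linarith
      sol := (hsol.mono hsubab).neg
      Hc := fun t ht => by simpa using hHz t (hsubab ht)
      na := by
        rw [← neg_sub', norm_neg]; exact na.trans_le hgg2
      nb := by
        rw [← neg_sub', norm_neg]; exact nb.trans_le hgg2
      ra := by simpa [Proj.minus] using haZ.2
      rb := by simpa [Proj.minus] using hbZ.2
      nc := by
        intro t ht h1
        have h2 : γ t ∈ Metric.closedBall z ρ' := by
          rw [Metric.mem_closedBall, dist_eq_norm] at h1 ⊢
          rwa [← neg_sub', norm_neg] at h1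
        simpa [Proj.minus] using nc t ht h2
      ord := neg_le_neg h }
  rcases hord a ma b mb haZ hbZ with h | h | h
  · exact case1 h.le
  · exact case1 h.le
  · exact case2 h.le

end

lemma main_aux {f : E3 → E3} (hf : ContDiff ℝ 1 f)
    (hcoop : coopVF f Set.univ) (hirr : ∀ x, matIrred (jacMat f x))
    {H : E3 → ℝ} (hH : ContDiff ℝ 1 H)
    (hfi : ∀ x, fderiv ℝ H x (f x) = 0)
    (hgrad : ∀ x, ∃ i, fderiv ℝ H x (Pi.single i 1) ≠ 0) :
    (∀ γ : ℝ → Fin 3 → ℝ, IsSolOn f Set.univ (Set.Ici 0) γ →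
      (omegaSet Set.univ γ).Subsingleton) ∧
    (∀ γ : ℝ → Fin 3 → ℝ, IsSolOn f Set.univ (Set.Iic 0) γ →
      (alphaSet Set.univ γ).Subsingleton) := by
  have hf' : CoopSys f := ⟨hf, fun x i j hij => hcoop x (mem_univ x) i j hij, hirr⟩
  have hH' : FInt f H := ⟨hH, hfi, fun x h => by
    obtain ⟨i, hi⟩ := hgrad x
    exact hi (by rw [h]; rfl)⟩
  constructor
  · intro γ hγ
    have hs : Sol f γ (Ioi 0) := fun t ht => (hγ.2 t (Ioi_subset_Ici_self ht)).hasDerivAt (Ici_mem_nhds ht)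
    have := LimS_subsingleton (traj_top hs) hf' hH'
    refine this.anti ?_
    rintro y ⟨_, t, ht, hy⟩
    exact MapClusterPt.of_comp ht hy.mapClusterPt
  · intro γ hγ
    have hs : Sol f γ (Iio 0) := fun t ht => (hγ.2 t (Iio_subset_Iic_self ht)).hasDerivAt (Iic_mem_nhds ht)
    have := LimS_subsingleton (traj_bot hs) hf' hH'
    refine this.anti ?_
    rintro y ⟨_, t, ht, hy⟩
    exact MapClusterPt.of_comp ht hy.mapClusterPt

/-- three-dimensional cooperative irreducible systems with a `C¹`
first integral with nonzero gradient: all limit sets are empty or singletons. -/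
theorem stmt_4 {f : (Fin 3 → ℝ) → (Fin 3 → ℝ)} (hf : ContDiff ℝ 1 f)
    (hcoop : coopVF f Set.univ) (hirr : ∀ x, matIrred (jacMat f x))
    {H : (Fin 3 → ℝ) → ℝ} (hH : ContDiff ℝ 1 H)
    (hfi : ∀ x, fderiv ℝ H x (f x) = 0)
    (hgrad : ∀ x, ∃ i, fderiv ℝ H x (Pi.single i 1) ≠ 0) :
    (∀ γ : ℝ → Fin 3 → ℝ, IsSolOn f Set.univ (Set.Ici 0) γ →
      (omegaSet Set.univ γ).Subsingleton) ∧
    (∀ γ : ℝ → Fin 3 → ℝ, IsSolOn f Set.univ (Set.Iic 0) γ →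
      (alphaSet Set.univ γ).Subsingleton) := by
  exact main_aux hf hcoop hirr hH hfi hgrad
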